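/- arXiv:1409.2135 — 2 statements merged into one kernel-verified Lean document; each statement's English description precedes it below -/
import Mathlib

section
/- Let n ≥ 4. The initial ideal in_≺(I_{n-2}) is a squarefree monomial ideal; in particular, in_≺(I_{n-2}) is a radical ideal of S. -/
open MvPolynomial

/-- The set `D` of diagonal variables `x_{ii}` (0-indexed). -/
def Dset (n : ℕ) : Set (Sym2 (Fin n)) := {v | ∃ i : Fin n, v = s(i, i)}

/-- The set `U` of variables `x_{13}, x_{24}, …, x_{n-2,n}, x_{12}, x_{n-1,n}` (0-indexed). -/
def Uset (n : ℕ) : Set (Sym2 (Fin n)) :=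
  {v | ∃ i j : Fin n, v = s(i, j) ∧
    ((j : ℕ) = (i : ℕ) + 2 ∨ ((i : ℕ) = 0 ∧ (j : ℕ) = 1) ∨
      ((i : ℕ) = n - 2 ∧ (j : ℕ) = n - 1))}

/-- `rank` encodes the linear order on the variables described in the paper:
`x_{11} ≻ … ≻ x_{nn} ≻ x_{13} ≻ … ≻ x_{n-2,n} ≻ x_{12} ≻ x_{n-1,n} ≻ (rest)`,
where a smaller rank means a larger variable. -/
def IsGoodRank (n : ℕ) (rank : Sym2 (Fin n) → ℕ) : Prop :=
  Function.Injective rank ∧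
  (∀ i : Fin n, rank s(i, i) = (i : ℕ)) ∧
  (∀ i j : Fin n, (j : ℕ) = (i : ℕ) + 2 → rank s(i, j) = n + (i : ℕ)) ∧
  (∀ i j : Fin n, (i : ℕ) = 0 → (j : ℕ) = 1 → rank s(i, j) = 2 * n - 2) ∧
  (∀ i j : Fin n, (i : ℕ) = n - 2 → (j : ℕ) = n - 1 → rank s(i, j) = 2 * n - 1) ∧
  (∀ v : Sym2 (Fin n), v ∉ Dset n ∪ Uset n → 2 * n ≤ rank v)

/-- The degree reverse lexicographic order on exponent vectors induced by `rank`: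
`a ≺ b` iff `deg a < deg b`, or the degrees agree and at the `rank`-largest (i.e. smallest)
variable where `a` and `b` differ, `a` has the larger exponent. -/
def DegRevLexLT {n : ℕ} (rank : Sym2 (Fin n) → ℕ) (a b : Sym2 (Fin n) →₀ ℕ) : Prop :=
  (a.sum fun _ e => e) < (b.sum fun _ e => e) ∨
    ((a.sum fun _ e => e) = (b.sum fun _ e => e) ∧
      ∃ v : Sym2 (Fin n), b v < a v ∧ ∀ w : Sym2 (Fin n), rank v < rank w → a w = b w)

/-- `μ` is the leading monomial (exponent vector) of `f` w.r.t. the degrevlex order `≺`. -/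
def IsLeadingMonomial {K : Type*} [Field K] {n : ℕ} (rank : Sym2 (Fin n) → ℕ)
    (f : MvPolynomial (Sym2 (Fin n)) K) (μ : Sym2 (Fin n) →₀ ℕ) : Prop :=
  μ ∈ f.support ∧ ∀ ν ∈ f.support, ν ≠ μ → DegRevLexLT rank ν μ

/-- The minor `[a_1,…,a_s | b_1,…,b_s]` of the generic symmetric matrix `X = (x_{ij})`. -/
noncomputable def symMinor (K : Type*) [Field K] {n s : ℕ} (a b : Fin s → Fin n) :
    MvPolynomial (Sym2 (Fin n)) K :=
  Matrix.det (Matrix.of fun k l => (MvPolynomial.X s(a k, b l) : MvPolynomial (Sym2 (Fin n)) K))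

/-- The ideal `I_t` of `S` generated by all `t × t` minors of the generic symmetric
matrix `X`. -/
noncomputable def minorsIdeal (K : Type*) [Field K] (n t : ℕ) :
    Ideal (MvPolynomial (Sym2 (Fin n)) K) :=
  Ideal.span {p | ∃ a b : Fin t → Fin n, StrictMono a ∧ StrictMono b ∧ p = symMinor K a b}

/-- The initial ideal `in_≺(I)`: the ideal generated by the leading monomials of the
nonzero elements of `I`. -/
noncomputable def initialIdeal {K : Type*} [Field K] {n : ℕ} (rank : Sym2 (Fin n) → ℕ)
    (I : Ideal (MvPolynomial (Sym2 (Fin n)) K)) : Ideal (MvPolynomial (Sym2 (Fin n)) K) :=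
  Ideal.span {p | ∃ f ∈ I, f ≠ 0 ∧ ∃ μ : Sym2 (Fin n) →₀ ℕ,
    IsLeadingMonomial rank f μ ∧ p = MvPolynomial.monomial μ 1}


namespace St14

theorem deg_add {n : ℕ} (a b : Sym2 (Fin n) →₀ ℕ) :
    ((a + b).sum fun _ e => e) = (a.sum fun _ e => e) + (b.sum fun _ e => e) := by
  classical
  exact Finsupp.sum_add_index' (by simp) (by simp)

theorem lt_irrefl' {n : ℕ} (rank : Sym2 (Fin n) → ℕ) (a : Sym2 (Fin n) →₀ ℕ) :
    ¬ DegRevLexLT rank a a := by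
  rintro (h | ⟨-, v, h, -⟩) <;> exact lt_irrefl _ h

theorem lt_trans' {n : ℕ} {rank : Sym2 (Fin n) → ℕ}
    (hr : Function.Injective rank) {a b c : Sym2 (Fin n) →₀ ℕ}
    (h1 : DegRevLexLT rank a b) (h2 : DegRevLexLT rank b c) : DegRevLexLT rank a c := by
  rcases h1 with h1 | ⟨e1, v, hv, h1⟩ <;> rcases h2 with h2 | ⟨e2, w, hw, h2⟩
  · exact Or.inl (h1.trans h2)
  · exact Or.inl (e2 ▸ h1)
  · exact Or.inl (e1 ▸ h2)
  · refine Or.inr ⟨e1.trans e2, ?_⟩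
    rcases lt_trichotomy (rank v) (rank w) with h | h | h
    · exact ⟨w, by rw [h1 w h]; exact hw, fun x hx => (h1 x (h.trans hx)).trans (h2 x hx)⟩
    · have := hr h
      subst this
      exact ⟨v, hw.trans hv, fun x hx => (h1 x hx).trans (h2 x hx)⟩
    · exact ⟨v, by rw [← h2 v h]; exact hv, fun x hx => (h1 x hx).trans (h2 x (h.trans hx))⟩

theorem lt_add {n : ℕ} {rank : Sym2 (Fin n) → ℕ} {a b : Sym2 (Fin n) →₀ ℕ}
    (c : Sym2 (Fin n) →₀ ℕ)
    (h : DegRevLexLT rank a b) : DegRevLexLT rank (c + a) (c + b) := by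
  rcases h with h | ⟨e, v, hv, h⟩
  · left
    rw [deg_add, deg_add]; omega
  · right
    refine ⟨by rw [deg_add, deg_add, e], v, by simpa using hv, fun w hw => by simp [h w hw]⟩

theorem finite_below {n : ℕ} (rank : Sym2 (Fin n) → ℕ) (b : Sym2 (Fin n) →₀ ℕ) :
    {a | DegRevLexLT rank a b}.Finite := by
  classical
  let N := b.sum fun _ e => e
  apply Set.Finite.subset (Set.finite_Iic (Finsupp.equivFunOnFinite.symm (fun _ => N) : Sym2 (Fin n) →₀ ℕ))
  intro a ha v
  have h1 : (a.sum fun _ e => e) ≤ N := by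
    rcases ha with h | ⟨h, -⟩
    · exact h.le
    · exact h.le
  refine le_trans ?_ h1
  rw [Finsupp.sum_fintype _ _ (by simp)]
  exact Finset.single_le_sum (f := fun v => a v) (by simp) (Finset.mem_univ v)

theorem lt_wf {n : ℕ} {rank : Sym2 (Fin n) → ℕ} (hr : Function.Injective rank) :
    WellFounded (DegRevLexLT rank) := by
  refine Subrelation.wf (r := InvImage (· < ·) fun b => {a | DegRevLexLT rank a b}.ncard) ?_
    (InvImage.wf _ wellFounded_lt)
  intro a b hab
  apply Set.ncard_lt_ncard _ (finite_below rank b)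
  refine ⟨fun c hc => lt_trans' hr hc hab, fun h => lt_irrefl' rank a (h hab)⟩

/-- reduction of a single monomial -/
theorem reduce_monomial {K : Type*} [Field K] {n : ℕ} {rank : Sym2 (Fin n) → ℕ}
    (hr : Function.Injective rank) (I : Ideal (MvPolynomial (Sym2 (Fin n)) K))
    (G : Set (Sym2 (Fin n) →₀ ℕ))
    (hG : ∀ m ∈ G, ∃ f ∈ I, IsLeadingMonomial rank f m) (ν : Sym2 (Fin n) →₀ ℕ) :
    ∃ r : MvPolynomial (Sym2 (Fin n)) K, MvPolynomial.monomial ν 1 - r ∈ I ∧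
      ∀ a ∈ r.support, (∀ m ∈ G, ¬ m ≤ a) ∧ (a = ν ∨ DegRevLexLT rank a ν) := by
  classical
  induction ν using (lt_wf hr).induction with
  | _ ν ih =>
  by_cases hν : ∀ m ∈ G, ¬ m ≤ ν
  · refine ⟨MvPolynomial.monomial ν 1, by simp, fun a ha => ?_⟩
    have : a = ν := by
      by_contra hne
      rw [MvPolynomial.mem_support_iff, MvPolynomial.coeff_monomial, if_neg (Ne.symm hne)] at ha
      exact ha rfl
    subst this
    exact ⟨hν, Or.inl rfl⟩
  · push Not at hν
    obtain ⟨m, hm, hle⟩ := hν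
    obtain ⟨f, hfI, hf1, hf2⟩ := hG m hm
    obtain ⟨δ, rfl⟩ : ∃ δ, ν = δ + m := ⟨ν - m, (tsub_add_cancel_of_le hle).symm⟩
    have hc : f.coeff m ≠ 0 := MvPolynomial.mem_support_iff.1 hf1
    choose! r hr1 hr2 using ih
    let c := f.coeff m
    refine ⟨- ∑ a ∈ f.support.erase m, MvPolynomial.C (c⁻¹ * f.coeff a) * r (δ + a), ?_, ?_⟩
    · have key : MvPolynomial.monomial (δ + m) (1 : K) =
          MvPolynomial.monomial δ c⁻¹ * f -
            ∑ a ∈ f.support.erase m, MvPolynomial.C (c⁻¹ * f.coeff a) * MvPolynomial.monomial (δ + a) 1 := by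
        conv_rhs => rw [f.as_sum, Finset.mul_sum, ← Finset.add_sum_erase _ _ hf1]
        rw [MvPolynomial.monomial_mul, inv_mul_cancel₀ hc]
        have : ∀ a, MvPolynomial.monomial δ c⁻¹ * MvPolynomial.monomial a (f.coeff a) =
            MvPolynomial.C (c⁻¹ * f.coeff a) * MvPolynomial.monomial (δ + a) (1:K) := by
          intro a
          rw [MvPolynomial.monomial_mul, MvPolynomial.C_mul_monomial, mul_one]
        simp only [this, ← f.as_sum]
        simp
      rw [key, sub_neg_eq_add, sub_add, ← Finset.sum_sub_distrib]
      apply I.sub_mem (I.mul_mem_left _ hfI)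
      apply I.sum_mem
      intro a ha
      rw [← mul_sub]
      apply I.mul_mem_left
      apply hr1
      exact lt_add δ (hf2 a (Finset.mem_of_mem_erase ha) (Finset.ne_of_mem_erase ha))
    · intro b hb
      rw [MvPolynomial.support_neg] at hb
      have := MvPolynomial.support_sum hb
      rw [Finset.mem_biUnion] at this
      obtain ⟨a, ha, hb⟩ := this
      have hlt := lt_add δ (hf2 a (Finset.mem_of_mem_erase ha) (Finset.ne_of_mem_erase ha))
      have hb' : b ∈ (r (δ + a)).support := by
        rw [MvPolynomial.mem_support_iff] at hb ⊢
        rw [MvPolynomial.coeff_C_mul] at hb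
        exact right_ne_zero_of_mul hb
      obtain ⟨h1, h2⟩ := hr2 _ hlt b hb'
      refine ⟨h1, Or.inr ?_⟩
      rcases h2 with rfl | h2
      · exact hlt
      · exact lt_trans' hr h2 hlt

theorem initial_eq {K : Type*} [Field K] {n : ℕ} {rank : Sym2 (Fin n) → ℕ}
    (hr : Function.Injective rank) (I : Ideal (MvPolynomial (Sym2 (Fin n)) K))
    (G : Set (Sym2 (Fin n) →₀ ℕ))
    (hG : ∀ m ∈ G, ∃ f ∈ I, IsLeadingMonomial rank f m)
    (hLI : ∀ f ∈ I, f ≠ 0 → ∃ a ∈ f.support, ∃ m ∈ G, m ≤ a) :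
    initialIdeal rank I = Ideal.span ((fun m => MvPolynomial.monomial m (1 : K)) '' G) := by
  classical
  apply le_antisymm
  · unfold initialIdeal
    rw [Ideal.span_le]
    rintro p ⟨f, hfI, hf0, μ, ⟨hμ, hlt⟩, rfl⟩
    rw [SetLike.mem_coe, MvPolynomial.mem_ideal_span_monomial_image]
    intro x hx
    have hx' : x = μ := by
      by_contra hne
      rw [MvPolynomial.mem_support_iff, MvPolynomial.coeff_monomial, if_neg (Ne.symm hne)] at hx
      exact hx rfl
    subst hx'
    by_contra hcon
    push Not at hcon
    choose r hr1 hr2 using reduce_monomial hr I G hG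
    let g := MvPolynomial.monomial x (f.coeff x) +
      ∑ a ∈ f.support.erase x, MvPolynomial.C (f.coeff a) * r a
    have hgI : g ∈ I := by
      have : g = f - ∑ a ∈ f.support.erase x,
          MvPolynomial.C (f.coeff a) * (MvPolynomial.monomial a 1 - r a) := by
        have h := f.as_sum
        rw [← Finset.add_sum_erase _ _ hμ] at h
        simp only [mul_sub, MvPolynomial.C_mul_monomial, mul_one, Finset.sum_sub_distrib, g]
        linear_combination -h
      rw [this]
      exact I.sub_mem hfI (I.sum_mem fun a _ => I.mul_mem_left _ (hr1 a))
    have hcoeff : g.coeff x = f.coeff x := by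
      simp only [g, MvPolynomial.coeff_add, MvPolynomial.coeff_monomial, if_true,
        MvPolynomial.coeff_sum, MvPolynomial.coeff_C_mul]
      rw [Finset.sum_eq_zero, add_zero]
      intro a ha
      rw [mul_eq_zero]; right
      by_contra hne
      have h := (hr2 a x (MvPolynomial.mem_support_iff.2 hne)).2
      have h' := hlt a (Finset.mem_of_mem_erase ha) (Finset.ne_of_mem_erase ha)
      rcases h with h | h
      · exact Finset.ne_of_mem_erase ha h.symm
      · exact lt_irrefl' rank _ (lt_trans' hr h h')
    have hg0 : g ≠ 0 := by
      intro h
      rw [h, MvPolynomial.coeff_zero] at hcoeff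
      exact MvPolynomial.mem_support_iff.1 hμ hcoeff.symm
    obtain ⟨b, hb, m, hm, hle⟩ := hLI g hgI hg0
    have := MvPolynomial.support_add hb
    rw [Finset.mem_union] at this
    rcases this with h | h
    · have := MvPolynomial.support_monomial_subset h
      rw [Finset.mem_singleton] at this
      subst this
      exact hcon m hm hle
    · have := MvPolynomial.support_sum h
      rw [Finset.mem_biUnion] at this
      obtain ⟨a, ha, hb⟩ := this
      have hb' : b ∈ (r a).support := by
        rw [MvPolynomial.mem_support_iff] at hb ⊢
        rw [MvPolynomial.coeff_C_mul] at hb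
        exact right_ne_zero_of_mul hb
      exact (hr2 a b hb').1 m hm hle
  · rw [Ideal.span_le]
    rintro _ ⟨m, hm, rfl⟩
    obtain ⟨f, hfI, hf⟩ := hG m hm
    apply Ideal.subset_span
    refine ⟨f, hfI, ?_, m, hf, rfl⟩
    rintro rfl
    simpa using hf.1

theorem squarefree_radical {σ : Type*} {K : Type*} [Field K] (G : Set (σ →₀ ℕ))
    (hG : ∀ m ∈ G, ∀ v, m v ≤ 1) :
    (Ideal.span ((fun m => MvPolynomial.monomial m (1 : K)) '' G)).IsRadical := by
  classical
  intro f hf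
  obtain ⟨k, hk⟩ := hf
  rw [MvPolynomial.mem_ideal_span_monomial_image]
  intro μ hμ
  by_contra hcon
  push Not at hcon
  let ψ : MvPolynomial σ K →ₐ[K] MvPolynomial σ K :=
    MvPolynomial.aeval fun v => if μ v = 0 then 0 else MvPolynomial.X v
  have hmon : ∀ a : σ →₀ ℕ, ∀ c : K, ψ (MvPolynomial.monomial a c) =
      if ∀ v, μ v = 0 → a v = 0 then MvPolynomial.monomial a c else 0 := by
    intro a c
    simp only [ψ, MvPolynomial.aeval_monomial]
    split_ifs with h
    · rw [MvPolynomial.monomial_eq, MvPolynomial.algebraMap_eq]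
      congr 1
      apply Finset.prod_congr rfl
      intro v hv
      beta_reduce
      rw [if_neg]
      exact fun h0 => (Finsupp.mem_support_iff.1 hv) (h v h0)
    · push Not at h
      obtain ⟨v, h1, h2⟩ := h
      have : (a.prod fun i k => (if μ i = 0 then (0 : MvPolynomial σ K) else MvPolynomial.X i) ^ k) = 0 := by
        apply Finset.prod_eq_zero (Finsupp.mem_support_iff.2 h2)
        simp [h1, h2]
      rw [this, mul_zero]
  have hker : Ideal.span ((fun m => MvPolynomial.monomial m (1 : K)) '' G) ≤ RingHom.ker ψ := by
    rw [Ideal.span_le]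
    rintro _ ⟨m, hm, rfl⟩
    simp only [SetLike.mem_coe, RingHom.mem_ker]
    rw [hmon, if_neg]
    intro h
    apply hcon m hm
    intro v
    rcases Nat.eq_zero_or_pos (μ v) with h0 | h0
    · rw [h v h0]; exact Nat.zero_le _
    · exact (hG m hm v).trans h0
  have h0 := hker hk
  rw [RingHom.mem_ker, map_pow] at h0
  have h1 : ψ f = 0 := by exact (IsReduced.eq_zero _ ⟨k, h0⟩)
  have h2 : (ψ f).coeff μ = f.coeff μ := by
    conv_lhs => rw [f.as_sum, map_sum, MvPolynomial.coeff_sum]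
    rw [Finset.sum_eq_single μ]
    · rw [hmon, if_pos (fun v h => h)]; simp
    · intro b _ hb
      rw [hmon]
      split_ifs
      · rw [MvPolynomial.coeff_monomial, if_neg hb]
      · simp
    · intro h; exact absurd hμ h
  rw [h1, MvPolynomial.coeff_zero] at h2
  exact MvPolynomial.mem_support_iff.1 hμ h2.symm

end St14

namespace St14

open Matrix in
theorem det_mul_zero {ι O : Type*} [Fintype ι] [CommRing O] [IsDomain O] (T : ι → Prop)
    [DecidablePred T] (Y Q : Matrix ι ι O) (hY : ∀ x t, ¬ T t → Y x t = 0) (s : ℕ) (a b : Fin s → ι)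
    (hs : Fintype.card {x // T x} < s) : ((Y * Q).submatrix a b).det = 0 := by
  classical
  apply Matrix.det_eq_zero_of_not_linearIndependent_rows
  intro hli
  let y : Fin s → ({x // T x} → O) := fun i t => Y (a i) t
  let Q' : Matrix {x // T x} (Fin s) O := Matrix.of fun t j => Q t (b j)
  have h1 : LinearIndependent O ((Matrix.vecMulLinear Q') ∘ y) := by
    convert hli using 1
    ext i j
    simp only [Function.comp, Matrix.vecMulLinear_apply, Matrix.vecMul, dotProduct, y, Q', Matrix.of_apply,
      Matrix.submatrix_apply, Matrix.mul_apply]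
    rw [← Finset.sum_subtype (Finset.univ.filter T) (by simp) (fun t => Y (a i) t * Q t (b j))]
    rw [Finset.sum_subset (Finset.filter_subset T Finset.univ)]
    intro x _ hx
    rw [hY _ _ (by simpa using hx), zero_mul]
  have h2 := LinearIndependent.of_comp _ h1
  have h3 := h2.fintype_card_le_finrank
  simp only [Fintype.card_fin, Module.finrank_fintype_fun_eq_card] at h3
  omega

open Matrix in
theorem schur {ι O : Type*} [Fintype ι] [DecidableEq ι] [CommRing O] [IsDomain O] (T : ι → Prop)
    [DecidablePred T] (H : Matrix ι ι O) (hH : ∀ x y, H x y = H y x)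
    (hP : IsUnit (Matrix.of fun x y => if T x ∧ T y then H x y else if x = y then (1 : O) else 0).det) :
    ∃ X : Matrix ι ι O, (∀ x y, X x y = X y x) ∧ (∀ x y, T x ∨ T y → X x y = H x y) ∧
      (∀ (s : ℕ) (a b : Fin s → ι), Fintype.card {x // T x} < s → (X.submatrix a b).det = 0) ∧
      (∀ (p : O) (k l : ι → O), (∀ t, T t → p ∣ ∑ x, H x t * k x) → (∀ t, T t → p ∣ ∑ x, H x t * l x) →
        p * p ∣ ∑ x, ∑ y, k x * X x y * l y) := by
  set P : Matrix ι ι O := Matrix.of fun x y => if T x ∧ T y then H x y else if x = y then (1 : O) else 0 with hPdef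
  let Y : Matrix ι ι O := Matrix.of fun x t => if T t then H x t else 0
  have hPs : Pᵀ = P := by
    ext x y
    simp only [hPdef, Matrix.transpose_apply, Matrix.of_apply, hH y x, and_comm, eq_comm (a := y)]
  have hsym : (Y * P⁻¹ * Yᵀ)ᵀ = Y * P⁻¹ * Yᵀ := by
    rw [Matrix.transpose_mul, Matrix.transpose_mul, Matrix.transpose_transpose,
      Matrix.transpose_nonsing_inv, hPs, Matrix.mul_assoc]
  have hs : ∀ x y, (Y * P⁻¹ * Yᵀ) x y = (Y * P⁻¹ * Yᵀ) y x := fun x y => by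
    conv_lhs => rw [← hsym]
    rfl
  have hrow : ∀ x, T x → ∀ y, (Y * P⁻¹) x y = (1 : Matrix ι ι O) x y := by
    intro x hx y
    have : Y x = P x := by
      ext t
      simp only [Y, hPdef, Matrix.of_apply, hx, true_and]
      by_cases ht : T t
      · simp [ht]
      · have : x ≠ t := by rintro rfl; exact ht hx
        simp [ht, this]
    rw [← Matrix.mul_nonsing_inv P hP, Matrix.mul_apply, Matrix.mul_apply, this]
  have hT : ∀ x y, T x → (Y * P⁻¹ * Yᵀ) x y = H x y := by
    intro x y hx
    rw [Matrix.mul_apply]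
    simp only [hrow x hx, Matrix.one_apply, ite_mul, one_mul, zero_mul, Finset.sum_ite_eq,
      Finset.mem_univ, if_true, Matrix.transpose_apply, Y, Matrix.of_apply, hx, hH y x]
  refine ⟨Y * P⁻¹ * Yᵀ, hs, ?_, ?_, ?_⟩
  · rintro x y (h | h)
    · exact hT x y h
    · rw [hs, hT y x h, hH]
  · intro s a b hcard
    rw [Matrix.mul_assoc]
    exact det_mul_zero T Y _ (fun x t ht => by simp [Y, ht]) s a b hcard
  · intro p k l hk hl
    have e : ∑ x, ∑ y, k x * (Y * P⁻¹ * Yᵀ) x y * l y =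
        ∑ t, ∑ t', (∑ x, Y x t * k x) * P⁻¹ t t' * (∑ x, Y x t' * l x) := by
      have h1 : ∑ x, ∑ y, k x * (Y * P⁻¹ * Yᵀ) x y * l y = k ⬝ᵥ ((Y * P⁻¹ * Yᵀ) *ᵥ l) := by
        simp only [dotProduct, Matrix.mulVec, Finset.mul_sum, mul_assoc]
      have h2 : ∑ t, ∑ t', (∑ x, Y x t * k x) * P⁻¹ t t' * (∑ x, Y x t' * l x) =
          (Yᵀ *ᵥ k) ⬝ᵥ (P⁻¹ *ᵥ (Yᵀ *ᵥ l)) := by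
        simp only [dotProduct, Matrix.mulVec, mul_assoc, Matrix.transpose_apply]
        refine Finset.sum_congr rfl fun t _ => ?_
        rw [Finset.mul_sum]
      rw [h1, h2, Matrix.mulVec_mulVec, Matrix.mulVec_transpose, ← Matrix.dotProduct_mulVec,
        Matrix.mulVec_mulVec, Matrix.mul_assoc]
    rw [e]
    refine Finset.dvd_sum fun t _ => Finset.dvd_sum fun t' _ => ?_
    have aux : ∀ (k : ι → O), (∀ t, T t → p ∣ ∑ x, H x t * k x) → ∀ t, p ∣ ∑ x, Y x t * k x := by
      intro k hk t
      by_cases ht : T t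
      · simpa [Y, ht] using hk t ht
      · simp [Y, ht]
    obtain ⟨c, hc⟩ := aux k hk t
    obtain ⟨d, hd⟩ := aux l hl t'
    rw [hc, hd]
    exact ⟨c * P⁻¹ t t' * d, by ring⟩

end St14

namespace St14

theorem exists_c {ι L : Type*} [Field L] (y : ι → ι → L) (hy0 : ∀ x z, y x z ≠ 0)
    (rt par : ι → ι) (δ : ι → ℕ)
    (hδ0 : ∀ x, rt x = x → δ x = 0) (hδs : ∀ x, rt x ≠ x → δ (par x) + 1 = δ x) :
    ∃ c : ι → L, (∀ x, c x ≠ 0) ∧ (∀ x, rt x = x → c x = 1) ∧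
      (∀ x, rt x ≠ x → y x x * c x + y x (par x) * c (par x) = 0) := by
  let c : ι → L := fun x => ∏ m ∈ Finset.range (δ x),
    (-(y (par^[m] x) (par^[m+1] x) / y (par^[m] x) (par^[m] x)))
  refine ⟨c, ?_, ?_, ?_⟩
  · intro x
    apply Finset.prod_ne_zero_iff.2
    intro m _
    exact neg_ne_zero.2 (div_ne_zero (hy0 _ _) (hy0 _ _))
  · intro x hx
    simp [c, hδ0 x hx]
  · intro x hx
    have : c x = c (par x) * (-(y x (par x) / y x x)) := by
      simp only [c]
      rw [← hδs x hx, Finset.prod_range_succ']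
      rfl
    rw [this]
    field_simp [hy0 x x]
    ring

open scoped PowerSeries in
theorem forest_matrix {ι L : Type*} [Fintype ι] [DecidableEq ι] [Field L]
    (y : ι → ι → L) (hys : ∀ x z, y x z = y z x) (hy0 : ∀ x z, y x z ≠ 0)
    (adj : ι → ι → Prop) (hadjs : ∀ x z, adj x z → adj z x) (hadji : ∀ x, ¬ adj x x)
    (rt par : ι → ι) (δ : ι → ℕ) (M W s : ℕ)
    (hrt : ∀ x, rt (rt x) = rt x)
    (hδ0 : ∀ x, rt x = x → δ x = 0) (hδs : ∀ x, rt x ≠ x → δ (par x) + 1 = δ x)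
    (hpar : ∀ x, rt x ≠ x → rt (par x) = rt x) (hpadj : ∀ x, rt x ≠ x → adj x (par x))
    (hadj : ∀ x z, adj x z → rt x = rt z → (rt x ≠ x ∧ par x = z) ∨ (rt z ≠ z ∧ par z = x))
    (hcut : ∀ r u, rt r = r → rt u = u → r ≠ u → ∃ x z, rt x = r ∧ rt z = u ∧ adj x z ∧
      ∀ x' z', rt x' = r → rt z' = u → adj x' z' → x' = x ∧ z' = z)
    (hδM : ∀ x, δ x ≤ M) (hW : 4 * M + 2 ≤ W)
    (hs : Fintype.card {x // rt x ≠ x} < s) :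
    ∃ X : Matrix ι ι L⟦X⟧, (∀ x z, X x z = X z x) ∧
      (∀ (a b : Fin s → ι), (X.submatrix a b).det = 0) ∧
      (∀ x, rt x ≠ x → (PowerSeries.X : L⟦X⟧) ∣ X x x - PowerSeries.C (y x x)) ∧
      (∀ x, rt x = x → (PowerSeries.X : L⟦X⟧) ∣ X x x) ∧
      (∀ x z, adj x z → rt x = rt z → (PowerSeries.X : L⟦X⟧) ^ 2 ∣ X x z - PowerSeries.X * PowerSeries.C (y x z)) ∧
      (∀ x z, adj x z → rt x ≠ rt z → (PowerSeries.X : L⟦X⟧) ^ 2 ∣ X x z) ∧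
      (∀ x z, x ≠ z → ¬ adj x z →
        (PowerSeries.X : L⟦X⟧) ^ (W + 1) ∣ X x z - PowerSeries.X ^ W * PowerSeries.C (y x z)) := by
  classical
  obtain ⟨c, hc0, hc1, hc2⟩ := exists_c y hy0 rt par δ hδ0 hδs
  set t : L⟦X⟧ := PowerSeries.X with ht
  have hparne : ∀ x, rt x ≠ x → par x ≠ x := fun x hx h => by
    have := hδs x hx; rw [h] at this; omega
  let k : ι → ι → L⟦X⟧ := fun r x => if rt x = r then t ^ (δ x) * PowerSeries.C (c x) else 0
  let b : ι → ι → L⟦X⟧ := fun q x =>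
    (if x = q then PowerSeries.C (y q q) else 0) + (if x = par q then t * PowerSeries.C (y q (par q)) else 0)
  let N : ι → ι → L⟦X⟧ := fun x z =>
    ∑ q, if rt q ≠ q then PowerSeries.C (y q q)⁻¹ * b q x * b q z else 0
  let R : ι → ι → L⟦X⟧ := fun x z =>
    if rt x ≠ rt z ∧ adj x z then - (t ^ (W - δ x - δ z) * PowerSeries.C (y (rt x) (rt z) / (c x * c z)))
    else if x = z ∨ adj x z then 0 else t ^ W * PowerSeries.C (y x z)
  have hadjc : ∀ x z, adj x z ↔ adj z x := fun x z => ⟨hadjs x z, hadjs z x⟩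
  have hNs : ∀ x z, N x z = N z x := fun x z => by
    simp only [N, mul_assoc, mul_comm (b _ x)]
  have hRs : ∀ x z, R x z = R z x := fun x z => by
    simp only [R]
    rw [hadjc x z, hys x z, hys (rt x) (rt z), mul_comm (c x), Nat.sub_right_comm]
    simp only [ne_comm (a := rt x) (b := rt z), eq_comm (a := x) (b := z)]
  have hkroot : ∀ r x, rt x = x → rt r = r → k r x = if x = r then 1 else 0 := by
    intro r x hx hr
    simp only [k, hx]
    split_ifs with h
    · rw [hδ0 x hx, hc1 x hx]; simp
    · rfl
  have hbk : ∀ r q, rt q ≠ q → ∑ x, b q x * k r x = 0 := by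
    intro r q hq
    simp only [b, add_mul, Finset.sum_add_distrib, ite_mul, zero_mul, Finset.sum_ite_eq',
      Finset.mem_univ, if_true, k, hpar q hq]
    split_ifs with h
    · have h1 := hc2 q hq
      have h2 : (PowerSeries.C (y q q) * PowerSeries.C (c q) + PowerSeries.C (y q (par q)) * PowerSeries.C (c (par q)) : L⟦X⟧) = 0 := by
        rw [← map_mul, ← map_mul, ← map_add, h1, map_zero]
      rw [← hδs q hq]
      linear_combination t ^ (δ (par q) + 1) * h2
    · simp
  have hNk : ∀ r z, ∑ x, N x z * k r x = 0 := by
    intro r z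
    simp only [N, Finset.sum_mul]
    rw [Finset.sum_comm]
    apply Finset.sum_eq_zero
    intro q _
    by_cases hq : rt q ≠ q
    · simp only [if_pos hq]
      have : ∀ x, PowerSeries.C (y q q)⁻¹ * b q x * b q z * k r x = PowerSeries.C (y q q)⁻¹ * b q z * (b q x * k r x) :=
        fun x => by ring
      simp only [this, ← Finset.mul_sum, hbk r q hq, mul_zero]
    · simp [hq]
  have hN0 : ∀ x z, x ≠ z → ¬ (rt x ≠ x ∧ par x = z) → ¬ (rt z ≠ z ∧ par z = x) → N x z = 0 := by
    intro x z hxz h1 h2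
    apply Finset.sum_eq_zero
    intro q _
    split_ifs with hq
    · have : b q x * b q z = 0 := by
        simp only [b]
        by_cases hx1 : x = q
        · subst hx1
          have e1 : z ≠ x := Ne.symm hxz
          have e2 : z ≠ par x := fun h => h1 ⟨hq, h.symm⟩
          simp [e1, e2]
        · by_cases hx2 : x = par q
          · have e1 : z ≠ q := by rintro rfl; exact h2 ⟨hq, hx2.symm⟩
            have e2 : z ≠ par q := by rintro rfl; exact hxz hx2
            simp [e1, e2]
          · simp [hx1, hx2]
      rw [mul_assoc, this, mul_zero]
    · rfl
  have hNe : ∀ x, rt x ≠ x → N x (par x) = t * PowerSeries.C (y x (par x)) := by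
    intro x hx
    simp only [N]
    rw [Finset.sum_eq_single x]
    · rw [if_pos hx]
      have h1 : b x x = PowerSeries.C (y x x) := by
        simp [b, (hparne x hx).symm]
      have h2 : b x (par x) = t * PowerSeries.C (y x (par x)) := by
        simp [b, hparne x hx]
      rw [h1, h2, ← map_mul, inv_mul_cancel₀ (hy0 x x), map_one, one_mul]
    · intro q _ hqx
      split_ifs with hq
      · have : b q x * b q (par x) = 0 := by
          simp only [b, if_neg hqx.symm]
          by_cases h : x = par q
          · have e1 : par x ≠ q := by
              intro h'
              have := hδs x hx
              have := hδs q hq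
              rw [← h] at this
              rw [h'] at *
              omega
            have e2 : par x ≠ par q := by rw [← h]; exact hparne x hx
            simp [e1, e2]
          · simp [h]
        rw [mul_assoc, this, mul_zero]
      · rfl
    · simp
  have hbt : ∀ q x, x ≠ q → t ∣ b q x := by
    intro q x h
    simp only [b, if_neg h, zero_add]
    split_ifs
    · exact Dvd.intro _ rfl
    · exact dvd_zero _
  have hNdr : ∀ x, rt x = x → t ∣ N x x := by
    intro x hx
    refine Finset.dvd_sum fun q _ => ?_
    split_ifs with hq
    · exact Dvd.dvd.mul_left (hbt q x (by rintro rfl; exact hq hx)) _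
    · exact dvd_zero _
  have hNd : ∀ x, rt x ≠ x → t ∣ N x x - PowerSeries.C (y x x) := by
    intro x hx
    simp only [N]
    rw [← Finset.add_sum_erase _ _ (Finset.mem_univ x), if_pos hx]
    have h1 : b x x = PowerSeries.C (y x x) := by
      simp [b, (hparne x hx).symm]
    rw [h1, ← map_mul, inv_mul_cancel₀ (hy0 x x), map_one, one_mul, add_sub_cancel_left]
    refine Finset.dvd_sum fun q hq' => ?_
    split_ifs with hq
    · exact Dvd.dvd.mul_left (hbt q x (Finset.ne_of_mem_erase hq').symm) _
    · exact dvd_zero _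
  have hRd : ∀ x z, t ^ (W - 2 * M) ∣ R x z := by
    intro x z
    have := hδM x
    have := hδM z
    simp only [R]
    split_ifs
    · rw [dvd_neg]
      exact Dvd.dvd.mul_right (pow_dvd_pow _ (by omega)) _
    · exact dvd_zero _
    · exact Dvd.dvd.mul_right (pow_dvd_pow _ (by omega)) _
  have hRd2 : ∀ x z, t ^ 2 ∣ R x z := fun x z => (pow_dvd_pow t (by omega)).trans (hRd x z)
  have hRd1 : ∀ x z, t ∣ R x z := fun x z => (dvd_pow_self t (by omega)).trans (hRd2 x z)
  have hNod : ∀ x z, x ≠ z → t ∣ N x z := by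
    intro x z hxz
    by_cases h1 : rt x ≠ x ∧ par x = z
    · rw [← h1.2, hNe x h1.1]; exact Dvd.intro _ rfl
    · by_cases h2 : rt z ≠ z ∧ par z = x
      · rw [hNs, ← h2.2, hNe z h2.1]; exact Dvd.intro _ rfl
      · rw [hN0 x z hxz h1 h2]; exact dvd_zero _
  have hunit : IsUnit (Matrix.of fun x z => if rt x ≠ x ∧ rt z ≠ z then N x z + R x z
      else if x = z then (1 : L⟦X⟧) else 0).det := by
    rw [PowerSeries.isUnit_iff_constantCoeff, isUnit_iff_ne_zero, RingHom.map_det]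
    have : (PowerSeries.constantCoeff (R := L)).mapMatrix (Matrix.of fun x z => if rt x ≠ x ∧ rt z ≠ z
        then N x z + R x z else if x = z then (1 : L⟦X⟧) else 0) =
        Matrix.diagonal fun x => if rt x ≠ x then y x x else 1 := by
      ext x z
      simp only [RingHom.mapMatrix_apply, Matrix.map_apply, Matrix.of_apply, Matrix.diagonal_apply]
      have hR0 : PowerSeries.constantCoeff (R x z) = 0 := PowerSeries.X_dvd_iff.1 (hRd1 x z)
      by_cases hxz : x = z
      · subst hxz
        by_cases hx : rt x ≠ x
        · have := PowerSeries.X_dvd_iff.1 (hNd x hx)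
          rw [map_sub, PowerSeries.constantCoeff_C, sub_eq_zero] at this
          simp [hx, this, hR0]
        · simp [hx]
      · have := PowerSeries.X_dvd_iff.1 (hNod x z hxz)
        simp only [hxz, if_false]
        split_ifs <;> simp [this, hR0]
    rw [this, Matrix.det_diagonal, Finset.prod_ne_zero_iff]
    intro x _
    split_ifs
    · exact hy0 x x
    · exact one_ne_zero
  obtain ⟨X, hXs, hXT, hXdet, hXk⟩ := schur (fun x => rt x ≠ x) (Matrix.of fun x z => N x z + R x z)
    (by intro x z; simp only [Matrix.of_apply]; rw [hNs, hRs]) hunit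
  simp only [Matrix.of_apply] at hXT hXk
  -- the entries at pairs of roots
  have hroot : ∀ r u, rt r = r → rt u = u →
      t ^ (W - 2 * M) * t ^ (W - 2 * M) ∣
        (∑ x, ∑ z, k r x * R x z * k u z) + (X r u - N r u - R r u) := by
    intro r u hr hu
    have hdv : ∀ r, ∀ z, rt z ≠ z → t ^ (W - 2 * M) ∣ ∑ x, (N x z + R x z) * k r x := by
      intro r z _
      simp only [add_mul, Finset.sum_add_distrib, hNk r z, zero_add]
      exact Finset.dvd_sum fun x _ => Dvd.dvd.mul_right (hRd x z) _
    have h := hXk (t ^ (W - 2 * M)) (k r) (k u) (hdv r) (hdv u)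
    convert h using 1
    have e1 : ∀ x z, k r x * X x z * k u z =
        k r x * N x z * k u z + k r x * R x z * k u z + k r x * (X x z - N x z - R x z) * k u z := by
      intro x z; ring
    simp only [e1, Finset.sum_add_distrib]
    have e2 : ∑ x, ∑ z, k r x * N x z * k u z = 0 := by
      apply Finset.sum_eq_zero
      intro x _
      simp only [mul_assoc, ← Finset.mul_sum, hNs x]
      rw [hNk u x, mul_zero]
    have e3 : ∑ x, ∑ z, k r x * (X x z - N x z - R x z) * k u z = X r u - N r u - R r u := by
      rw [Finset.sum_eq_single r]
      · rw [Finset.sum_eq_single u]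
        · rw [hkroot r r hr hr, hkroot u u hu hu]; simp
        · intro z _ hz
          by_cases hz' : rt z = z
          · rw [hkroot u z hz' hu, if_neg hz, mul_zero]
          · rw [hXT r z (Or.inr hz')]; ring
        · simp
      · intro x _ hx
        apply Finset.sum_eq_zero
        intro z _
        by_cases hx' : rt x = x
        · rw [hkroot r x hx' hr, if_neg hx, zero_mul, zero_mul]
        · rw [hXT x z (Or.inl hx')]; ring
      · simp
    rw [e2, e3, zero_add]
  have hkR : ∀ r u, t ^ (W - 2 * M) ∣ ∑ x, ∑ z, k r x * R x z * k u z := fun r u =>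
    Finset.dvd_sum fun x _ => Finset.dvd_sum fun z _ => Dvd.dvd.mul_right (Dvd.dvd.mul_left (hRd x z) _) _
  have hroot2 : ∀ r u, rt r = r → rt u = u → t ^ 2 ∣ X r u - N r u := by
    intro r u hr hu
    have h1 : t ^ 2 ∣ t ^ (W - 2 * M) * t ^ (W - 2 * M) :=
      Dvd.dvd.mul_right (pow_dvd_pow _ (by omega)) _
    have h2 := h1.trans (hroot r u hr hu)
    have h3 : t ^ 2 ∣ ∑ x, ∑ z, k r x * R x z * k u z := (pow_dvd_pow _ (by omega)).trans (hkR r u)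
    have h4 := (dvd_add_right h3).1 h2
    have := dvd_add h4 (hRd2 r u)
    rwa [sub_add_cancel] at this
  have hX2 : ∀ x z, t ^ 2 ∣ X x z - N x z := by
    intro x z
    by_cases hx : rt x ≠ x
    · rw [hXT x z (Or.inl hx), add_sub_cancel_left]; exact hRd2 x z
    · by_cases hz : rt z ≠ z
      · rw [hXT x z (Or.inr hz), add_sub_cancel_left]; exact hRd2 x z
      · exact hroot2 x z (not_not.1 hx) (not_not.1 hz)
  have hX1 : ∀ x z, t ∣ X x z - N x z := fun x z => (dvd_pow_self t (by omega)).trans (hX2 x z)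
  refine ⟨X, hXs, fun a b => hXdet s a b hs, ?_, ?_, ?_, ?_, ?_⟩
  · intro x hx
    have := dvd_add (hX1 x x) (hNd x hx)
    rwa [sub_add_sub_cancel] at this
  · intro x hx
    have := dvd_add (hX1 x x) (hNdr x hx)
    rwa [sub_add_cancel] at this
  · intro x z h1 h2
    have h3 : N x z = t * PowerSeries.C (y x z) := by
      rcases hadj x z h1 h2 with ⟨h, h'⟩ | ⟨h, h'⟩
      · rw [← h', hNe x h]
      · rw [hNs, ← h', hNe z h, hys]
    rw [← h3]
    exact hX2 x z
  · intro x z h1 h2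
    have h3 : N x z = 0 := by
      apply hN0 x z
      · rintro rfl; exact hadji x h1
      · rintro ⟨h, h'⟩; exact h2 (by rw [← h', hpar x h])
      · rintro ⟨h, h'⟩; exact h2 (by rw [← h', hpar z h])
    have := hX2 x z
    rwa [h3, sub_zero] at this
  · intro x z hxz hna
    have h3 : N x z = 0 := by
      apply hN0 x z hxz
      · rintro ⟨h, h'⟩; exact hna (h' ▸ hpadj x h)
      · rintro ⟨h, h'⟩; exact hna (hadjs _ _ (h' ▸ hpadj z h))
    have hR : R x z = t ^ W * PowerSeries.C (y x z) := by
      simp [R, hna, hxz]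
    by_cases hx : rt x ≠ x
    · rw [hXT x z (Or.inl hx), h3, hR]; simp
    by_cases hz : rt z ≠ z
    · rw [hXT x z (Or.inr hz), h3, hR]; simp
    rw [not_not] at hx hz
    rw [← hR]
    have h1 : t ^ (W + 1) ∣ t ^ (W - 2 * M) * t ^ (W - 2 * M) := by
      rw [← pow_add]; exact pow_dvd_pow _ (by omega)
    have h2 := h1.trans (hroot x z hx hz)
    rw [h3, sub_zero] at h2
    refine (dvd_add_right ?_).1 h2
    obtain ⟨x0, z0, hx0, hz0, hadj0, huniq⟩ := hcut x z hx hz hxz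
    have hne : ¬ (x = x0 ∧ z = z0) := by
      rintro ⟨rfl, rfl⟩; exact hna hadj0
    set A := t ^ W * PowerSeries.C (y x z) with hA
    have key : ∀ p q, t ^ (W + 1) ∣ k x p * R p q * k z q -
        ((if p = x then (if q = z then A else 0) else 0) -
          (if p = x0 then (if q = z0 then A else 0) else 0)) := by
      intro p q
      by_cases hp : rt p = x
      swap
      · have e1 : p ≠ x := by rintro rfl; exact hp hx
        have e2 : p ≠ x0 := by rintro rfl; exact hp hx0
        simp [k, hp, e1, e2]
      by_cases hq : rt q = z
      swap
      · have e1 : q ≠ z := by rintro rfl; exact hq hz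
        have e2 : q ≠ z0 := by rintro rfl; exact hq hz0
        simp [k, hq, e1, e2]
      have hrne : rt p ≠ rt q := by rw [hp, hq]; exact hxz
      by_cases ha : adj p q
      · obtain ⟨rfl, rfl⟩ := huniq p q hp hq ha
        have : k x p * R p q * k z q = - A := by
          simp only [k, hp, hq, if_true, R, if_pos (And.intro hxz ha)]
          have e1 : (PowerSeries.C (y x z / (c p * c q)) * PowerSeries.C (c p) * PowerSeries.C (c q) : L⟦X⟧) = PowerSeries.C (y x z) := by
            rw [← map_mul, ← map_mul]
            congr 1
            field_simp [hc0 p, hc0 q]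
          have e2 : t ^ (δ p) * t ^ (W - δ p - δ q) * t ^ (δ q) = t ^ W := by
            rw [← pow_add, ← pow_add]
            congr 1
            have := hδM p
            have := hδM q
            omega
          rw [hA, ← e1, ← e2]
          ring
        rw [this]
        have : ¬ (p = x ∧ q = z) := fun h => hne ⟨h.1.symm, h.2.symm⟩
        by_cases hpx : p = x
        · have : q ≠ z := fun h => this ⟨hpx, h⟩
          simp [this]
        · simp [hpx]
      · have hn0 : ¬ (p = x0 ∧ q = z0) := by rintro ⟨rfl, rfl⟩; exact ha hadj0
        have e0 : (if p = x0 then (if q = z0 then A else 0) else 0) = 0 := by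
          by_cases h : p = x0
          · have : q ≠ z0 := fun h' => hn0 ⟨h, h'⟩
            simp [this]
          · simp [h]
        have hpq : p ≠ q := by rintro rfl; exact hrne rfl
        have hRpq : R p q = t ^ W * PowerSeries.C (y p q) := by simp [R, ha, hpq]
        rw [e0, sub_zero]
        by_cases hpx : p = x
        · by_cases hqz : q = z
          · subst hpx hqz
            rw [hkroot _ _ hx hx, hkroot _ _ hz hz, hRpq]; simp [hA]
          · have : rt q ≠ q := by rw [hq]; exact Ne.symm hqz
            have h5 := hδs q this
            simp only [hqz, if_false, ite_self, sub_zero]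
            rw [hRpq]
            simp only [k, hq, if_true]
            rw [pow_succ]
            have : t ∣ t ^ (δ q) := dvd_pow_self _ (by omega)
            obtain ⟨w, hw⟩ := this
            rw [hw]
            exact ⟨(if rt p = x then t ^ δ p * PowerSeries.C (c p) else 0) * PowerSeries.C (y p q) * w * PowerSeries.C (c q), by ring⟩
        · have : rt p ≠ p := by rw [hp]; exact Ne.symm hpx
          have h5 := hδs p this
          simp only [hpx, if_false, sub_zero]
          rw [hRpq]
          simp only [k, hp, if_true]
          rw [pow_succ]
          have : t ∣ t ^ (δ p) := dvd_pow_self _ (by omega)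
          obtain ⟨w, hw⟩ := this
          rw [hw]
          exact ⟨(if rt q = z then t ^ δ q * PowerSeries.C (c q) else 0) * PowerSeries.C (y p q) * w * PowerSeries.C (c p), by ring⟩
    have hsum := Finset.dvd_sum (s := Finset.univ) fun p _ =>
      Finset.dvd_sum (s := Finset.univ) fun q _ => key p q
    simp only [Finset.sum_sub_distrib] at hsum
    simpa using hsum

end St14

namespace St14

open scoped PowerSeries in
theorem valuation_arg {σ K : Type*} [Fintype σ] [Field K] (ω : σ → ℕ) (Z : Set σ)
    (χ : σ → FractionRing (MvPolynomial σ K))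
    (hχZ : ∀ v ∈ Z, χ v = 0)
    (hχ : ∀ v, v ∉ Z → χ v = algebraMap (MvPolynomial σ K) _ (MvPolynomial.X v))
    (F : σ → (FractionRing (MvPolynomial σ K))⟦X⟧)
    (hF : ∀ v, (PowerSeries.X : (FractionRing (MvPolynomial σ K))⟦X⟧) ^ (ω v + 1) ∣
      F v - PowerSeries.X ^ (ω v) * PowerSeries.C (χ v))
    (f : MvPolynomial σ K)
    (h0 : MvPolynomial.eval₂ (PowerSeries.C.comp ((algebraMap (MvPolynomial σ K)
      (FractionRing (MvPolynomial σ K))).comp MvPolynomial.C)) F f = 0)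
    (μ : σ →₀ ℕ) (hμ : μ ∈ f.support)
    (hmin : ∀ ν ∈ f.support, ∑ v, ω v * μ v ≤ ∑ v, ω v * ν v) : ∃ z ∈ Z, μ z ≠ 0 := by
  classical
  by_contra hcon
  push Not at hcon
  set m := ∑ v, ω v * μ v with hm
  have hG : ∀ v, ∃ g : (FractionRing (MvPolynomial σ K))⟦X⟧,
      F v = PowerSeries.X ^ (ω v) * g ∧ PowerSeries.constantCoeff g = χ v := by
    intro v
    obtain ⟨h, hh⟩ := hF v
    refine ⟨PowerSeries.C (χ v) + PowerSeries.X * h, ?_, by simp⟩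
    rw [mul_add, ← mul_assoc, ← pow_succ, ← hh]; ring
  choose g hg1 hg2 using hG
  have hmon : ∀ ν ∈ f.support, PowerSeries.coeff m (∏ v, F v ^ ν v) =
      if ∑ v, ω v * ν v = m then ∏ v, χ v ^ ν v else 0 := by
    intro ν hν
    have e : ∏ v, F v ^ ν v = PowerSeries.X ^ (∑ v, ω v * ν v) * ∏ v, g v ^ ν v := by
      rw [← Finset.prod_pow_eq_pow_sum, ← Finset.prod_mul_distrib]
      refine Finset.prod_congr rfl fun v _ => ?_
      rw [hg1 v, mul_pow, pow_mul]
    rw [e, PowerSeries.coeff_X_pow_mul']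
    have := hmin ν hν
    by_cases h : ∑ v, ω v * ν v = m
    · rw [if_pos h.le, if_pos h, h, Nat.sub_self, PowerSeries.coeff_zero_eq_constantCoeff_apply,
        map_prod]
      simp [hg2]
    · rw [if_neg h, if_neg (by omega)]
  have hprod : ∀ ν : σ →₀ ℕ, ∏ v, χ v ^ ν v = if ∀ z ∈ Z, ν z = 0 then
      algebraMap (MvPolynomial σ K) _ (MvPolynomial.monomial ν 1) else 0 := by
    intro ν
    split_ifs with h
    · rw [MvPolynomial.monomial_eq, map_mul, Finsupp.prod_fintype _ _ (by simp), map_prod]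
      simp only [map_one, one_mul, map_pow]
      refine Finset.prod_congr rfl fun v _ => ?_
      by_cases hv : v ∈ Z
      · rw [h v hv]; simp
      · rw [hχ v hv]
    · push Not at h
      obtain ⟨z, hz, hz'⟩ := h
      exact Finset.prod_eq_zero (Finset.mem_univ z) (by rw [hχZ z hz, zero_pow hz'])
  have hsum : algebraMap (MvPolynomial σ K) (FractionRing (MvPolynomial σ K))
      (∑ ν ∈ f.support, if ∑ v, ω v * ν v = m ∧ ∀ z ∈ Z, ν z = 0 then
        MvPolynomial.monomial ν (f.coeff ν) else 0) = 0 := by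
    rw [MvPolynomial.eval₂_eq] at h0
    have h1 := congrArg (PowerSeries.coeff m) h0
    rw [map_sum, map_zero] at h1
    rw [map_sum, ← h1]
    refine Finset.sum_congr rfl fun ν hν => ?_
    have e : ∏ i ∈ ν.support, F i ^ ν i = ∏ v, F v ^ ν v := by
      refine Finset.prod_subset (Finset.subset_univ _) fun v _ hv => ?_
      rw [Finsupp.notMem_support_iff.1 hv, pow_zero]
    rw [e]
    simp only [RingHom.comp_apply]
    rw [PowerSeries.coeff_C_mul, hmon ν hν, hprod ν]
    by_cases h1 : ∑ v, ω v * ν v = m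
    · by_cases h2 : ∀ z ∈ Z, ν z = 0
      · rw [if_pos ⟨h1, h2⟩, if_pos h1, if_pos h2, ← map_mul, MvPolynomial.C_mul_monomial, mul_one]
      · rw [if_neg (fun h => h2 h.2), if_pos h1, if_neg h2, mul_zero, map_zero]
    · rw [if_neg (fun h => h1 h.1), if_neg h1, mul_zero, map_zero]
  rw [map_eq_zero_iff _ (IsFractionRing.injective _ _)] at hsum
  have h2 := congrArg (MvPolynomial.coeff μ) hsum
  rw [MvPolynomial.coeff_sum, MvPolynomial.coeff_zero, Finset.sum_eq_single μ] at h2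
  · rw [if_pos ⟨hm.symm, hcon⟩, MvPolynomial.coeff_monomial, if_pos rfl] at h2
    exact MvPolynomial.mem_support_iff.1 hμ h2
  · intro ν _ hne
    split_ifs
    · rw [MvPolynomial.coeff_monomial, if_neg hne]
    · simp
  · exact fun h => absurd hμ h

end St14

namespace St14

/-- successor relation on the cycle of positions -/
def Nxt (n p q : ℕ) : Prop := q = p + 1 ∨ (p = n - 1 ∧ q = 0)

def IsLabel (n : ℕ) (e : Fin n ≃ Fin n) : Prop :=
  ∀ p q : Fin n, s(e p, e q) ∈ Uset n ↔ Nxt n p q ∨ Nxt n q p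

/-- relation describing the complement of a facet -/
def ZR (n i a j b k p q : ℕ) : Prop :=
  (p = q ∧ (p = i ∨ p = j ∨ p = k)) ∨ (p = a ∧ q = a + 1) ∨ (p = b ∧ q = b + 1) ∨
    (p = n - 1 ∧ q = 0)

open Classical in
noncomputable def wt (n : ℕ) (v : Sym2 (Fin n)) : ℕ :=
  if v ∈ Dset n then 0 else if v ∈ Uset n then 1 else 4 * n + 2

theorem mem_D {n : ℕ} (e : Fin n ≃ Fin n) (p q : Fin n) : s(e p, e q) ∈ Dset n ↔ p = q := by
  constructor
  · rintro ⟨i, h⟩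
    rw [Sym2.eq_iff] at h
    apply e.injective
    rcases h with ⟨h1, h2⟩ | ⟨h1, h2⟩ <;> rw [h1, h2]
  · rintro rfl
    exact ⟨e p, rfl⟩

theorem sym2_eq_e {n : ℕ} (e : Fin n ≃ Fin n) (p q p' q' : Fin n) :
    s(e p, e q) = s(e p', e q') ↔ (p = p' ∧ q = q') ∨ (p = q' ∧ q = p') := by
  rw [Sym2.eq_iff]
  simp only [e.injective.eq_iff]

theorem exists_pos {n : ℕ} (e : Fin n ≃ Fin n) (v : Sym2 (Fin n)) : ∃ p q, v = s(e p, e q) := by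
  induction v using Sym2.ind with
  | _ x z => exact ⟨e.symm x, e.symm z, by simp⟩

def rtN (i a j b k p : ℕ) : ℕ := if p ≤ a then i else if p ≤ b then j else k

theorem rtN_cases (i a j b k p : ℕ) : (p ≤ a ∧ rtN i a j b k p = i) ∨
    (a < p ∧ p ≤ b ∧ rtN i a j b k p = j) ∨ (a < p ∧ b < p ∧ rtN i a j b k p = k) := by
  unfold rtN; split_ifs <;> omega

theorem cut_lemma (n : ℕ) (hn : 4 ≤ n) (i a j b k : ℕ)
    (h1 : i ≤ a) (h2 : a < j) (h3 : j ≤ b) (h4 : b < k) (h5 : k < n) (r u : ℕ)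
    (hr : rtN i a j b k r = r) (hu : rtN i a j b k u = u) (hru : ¬ r = u) :
    ∃ x z : ℕ, x < n ∧ z < n ∧ rtN i a j b k x = r ∧ rtN i a j b k z = u ∧
        (Nxt n x z ∨ Nxt n z x) ∧ ∀ x' z' : ℕ, x' < n → z' < n → rtN i a j b k x' = r →
        rtN i a j b k z' = u → (Nxt n x' z' ∨ Nxt n z' x') → x' = x ∧ z' = z := by
  have ei : ∀ x, rtN i a j b k x = i ↔ x ≤ a := by
    intro x; have := rtN_cases i a j b k x; omega
  have ej : ∀ x, rtN i a j b k x = j ↔ a < x ∧ x ≤ b := by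
    intro x; have := rtN_cases i a j b k x; omega
  have ek : ∀ x, rtN i a j b k x = k ↔ b < x := by
    intro x; have := rtN_cases i a j b k x; omega
  have hcase : (r = i ∧ u = j) ∨ (r = j ∧ u = i) ∨ (r = j ∧ u = k) ∨ (r = k ∧ u = j) ∨
      (r = i ∧ u = k) ∨ (r = k ∧ u = i) := by
    have := rtN_cases i a j b k r
    have := rtN_cases i a j b k u
    omega
  clear hr hu hru
  unfold Nxt
  rcases hcase with ⟨rfl, rfl⟩ | ⟨rfl, rfl⟩ | ⟨rfl, rfl⟩ | ⟨rfl, rfl⟩ | ⟨rfl, rfl⟩ | ⟨rfl, rfl⟩ <;>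
    simp only [ei, ej, ek]
  · exact ⟨a, a + 1, by omega, by omega, by omega, by omega, by omega, by omega⟩
  · exact ⟨a + 1, a, by omega, by omega, by omega, by omega, by omega, by omega⟩
  · exact ⟨b, b + 1, by omega, by omega, by omega, by omega, by omega, by omega⟩
  · exact ⟨b + 1, b, by omega, by omega, by omega, by omega, by omega, by omega⟩
  · exact ⟨0, n - 1, by omega, by omega, by omega, by omega, by omega, by omega⟩
  · exact ⟨n - 1, 0, by omega, by omega, by omega, by omega, by omega, by omega⟩

open scoped PowerSeries in
theorem facet_forest {L : Type*} [Field L] (n : ℕ) (hn : 4 ≤ n) (i a j b k : ℕ)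
    (h1 : i ≤ a) (h2 : a < j) (h3 : j ≤ b) (h4 : b < k) (h5 : k < n)
    (y : Fin n → Fin n → L) (hys : ∀ x z, y x z = y z x) (hy0 : ∀ x z, y x z ≠ 0) :
    ∃ X : Matrix (Fin n) (Fin n) L⟦X⟧, (∀ x z, X x z = X z x) ∧
      (∀ (a b : Fin (n - 2) → Fin n), (X.submatrix a b).det = 0) ∧
      (∀ x : Fin n, rtN i a j b k x ≠ x → (PowerSeries.X : L⟦X⟧) ∣ X x x - PowerSeries.C (y x x)) ∧
      (∀ x : Fin n, rtN i a j b k x = x → (PowerSeries.X : L⟦X⟧) ∣ X x x) ∧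
      (∀ x z : Fin n, (Nxt n x z ∨ Nxt n z x) → rtN i a j b k x = rtN i a j b k z →
        (PowerSeries.X : L⟦X⟧) ^ 2 ∣ X x z - PowerSeries.X * PowerSeries.C (y x z)) ∧
      (∀ x z : Fin n, (Nxt n x z ∨ Nxt n z x) → rtN i a j b k x ≠ rtN i a j b k z →
        (PowerSeries.X : L⟦X⟧) ^ 2 ∣ X x z) ∧
      (∀ x z : Fin n, x ≠ z → ¬ (Nxt n x z ∨ Nxt n z x) →
        (PowerSeries.X : L⟦X⟧) ^ (4 * n + 2 + 1) ∣
          X x z - PowerSeries.X ^ (4 * n + 2) * PowerSeries.C (y x z)) := by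
  have hlt : ∀ p : ℕ, rtN i a j b k p < n := by
    intro p; rcases rtN_cases i a j b k p with h | h | h <;> omega
  let rt : Fin n → Fin n := fun p => ⟨rtN i a j b k p, hlt p⟩
  let par : Fin n → Fin n := fun p =>
    ⟨if (p : ℕ) < rtN i a j b k p then p + 1 else p - 1, by
      have := hlt p; have := p.2; split_ifs <;> omega⟩
  have hrtv : ∀ p, ((rt p : Fin n) : ℕ) = rtN i a j b k p := fun p => rfl
  have hparv : ∀ p, ((par p : Fin n) : ℕ) =
    if (p : ℕ) < rtN i a j b k p then (p:ℕ) + 1 else p - 1 := fun p => rfl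
  have key := forest_matrix y hys hy0 (fun x z : Fin n => Nxt n x z ∨ Nxt n z x)
    (fun x z => Or.symm) (by intro x; have := x.2; unfold Nxt; omega) rt par
    (fun p => (rtN i a j b k p - p) + (p - rtN i a j b k p)) n (4 * n + 2) (n - 2)
    ?_ ?_ ?_ ?_ ?_ ?_ ?_ ?_ le_rfl ?_
  · obtain ⟨X, k1, k2, k3, k4, k5, k6, k7⟩ := key
    exact ⟨X, k1, k2, fun x hx => k3 x (fun h => hx (congrArg Fin.val h)),
      fun x hx => k4 x (Fin.ext hx), fun x z ha hr => k5 x z ha (Fin.ext hr),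
      fun x z ha hr => k6 x z ha (fun h => hr (congrArg Fin.val h)), k7⟩
  · intro x
    have := rtN_cases i a j b k x
    have := rtN_cases i a j b k (rtN i a j b k x)
    simp only [Fin.ext_iff, hrtv]
    omega
  · intro x
    simp only [Fin.ext_iff, hrtv]
    omega
  · intro x
    have := rtN_cases i a j b k x
    have := rtN_cases i a j b k (x+1)
    have := rtN_cases i a j b k (x-1)
    simp only [ne_eq, Fin.ext_iff, hrtv, hparv]
    split_ifs <;> omega
  · intro x
    have := rtN_cases i a j b k x
    have := rtN_cases i a j b k (x+1)
    have := rtN_cases i a j b k (x-1)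
    simp only [ne_eq, Fin.ext_iff, hrtv, hparv]
    split_ifs <;> omega
  · intro x
    have := rtN_cases i a j b k x
    simp only [ne_eq, Fin.ext_iff, hrtv, hparv, Nxt]
    split_ifs <;> omega
  · intro x z
    have := rtN_cases i a j b k x
    have := rtN_cases i a j b k z
    have := x.2
    have := z.2
    simp only [ne_eq, Fin.ext_iff, hrtv, hparv, Nxt]
    split_ifs <;> omega
  · intro r u
    simp only [ne_eq, Fin.ext_iff, hrtv]
    intro hr hu hru
    have main := cut_lemma n hn i a j b k h1 h2 h3 h4 h5 r u hr hu hru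
    obtain ⟨x, z, hx, hz, q1, q2, q3, q4⟩ := main
    exact ⟨⟨x, hx⟩, ⟨z, hz⟩, q1, q2, q3, fun x' z' => q4 x' z' x'.2 z'.2⟩
  · intro x
    have := rtN_cases i a j b k x
    have := x.2
    show (rtN i a j b k x - x) + (x - rtN i a j b k x) ≤ n
    omega
  · rw [Fintype.card_subtype]
    have hsub : (Finset.univ.filter fun x => rt x ≠ x) ⊆
        Finset.univ \ {(⟨i, by omega⟩ : Fin n), ⟨j, by omega⟩, ⟨k, by omega⟩} := by
      intro x
      have := rtN_cases i a j b k x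
      simp only [ne_eq, Finset.mem_filter, Finset.mem_univ, true_and, Finset.mem_sdiff,
        Finset.mem_insert, Finset.mem_singleton, Fin.ext_iff, hrtv]
      omega
    have hc : ({(⟨i, by omega⟩ : Fin n), ⟨j, by omega⟩, ⟨k, by omega⟩} : Finset (Fin n)).card = 3 := by
      rw [Finset.card_eq_three]
      exact ⟨_, _, _, by simp; omega, by simp; omega, by simp; omega, rfl⟩
    have := Finset.card_le_card hsub
    rw [Finset.card_sdiff_of_subset (Finset.subset_univ _), hc, Finset.card_univ, Fintype.card_fin] at this
    omega

theorem ZR_adj (n : ℕ) (hn : 4 ≤ n) (i a j b k : ℕ)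
    (h1 : i ≤ a) (h2 : a < j) (h3 : j ≤ b) (h4 : b < k) (h5 : k < n) (p q : ℕ)
    (hp : p < n) (hq : q < n) (h : Nxt n p q ∨ Nxt n q p) :
    (ZR n i a j b k p q ∨ ZR n i a j b k q p) ↔ rtN i a j b k p ≠ rtN i a j b k q := by
  have e : rtN i a j b k p = rtN i a j b k q ↔ ((p ≤ a ↔ q ≤ a) ∧ (p ≤ b ↔ q ≤ b)) := by
    have := rtN_cases i a j b k p
    have := rtN_cases i a j b k q
    omega
  have hpq : p ≠ q := by unfold Nxt at h; omega
  rw [ne_eq, e]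
  simp only [ZR, hpq, hpq.symm, false_and, false_or]
  unfold Nxt at h
  rcases h with (h | h) | (h | h) <;> omega

theorem ZR_nadj (n : ℕ) (i a j b k : ℕ) (p q : ℕ) (hpq : p ≠ q) (h : ¬ (Nxt n p q ∨ Nxt n q p)) :
    ¬ (ZR n i a j b k p q ∨ ZR n i a j b k q p) := by
  simp only [ZR, hpq, hpq.symm, false_and, false_or]
  unfold Nxt at h
  omega

theorem facet {K : Type*} [Field K] (n : ℕ) (hn : 4 ≤ n) (e : Fin n ≃ Fin n) (he : IsLabel n e)
    (i a j b k : ℕ)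
    (h1 : i ≤ a) (h2 : a < j) (h3 : j ≤ b) (h4 : b < k) (h5 : k < n)
    (f : MvPolynomial (Sym2 (Fin n)) K) (hf : f ∈ minorsIdeal K n (n - 2))
    (μ : Sym2 (Fin n) →₀ ℕ) (hμ : μ ∈ f.support)
    (hmin : ∀ ν ∈ f.support, ∑ v, wt n v * μ v ≤ ∑ v, wt n v * ν v) :
    ∃ p q : Fin n, ZR n i a j b k p q ∧ μ s(e p, e q) ≠ 0 := by
  classical
  let L := FractionRing (MvPolynomial (Sym2 (Fin n)) K)
  let y : Fin n → Fin n → L := fun p q =>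
    algebraMap (MvPolynomial (Sym2 (Fin n)) K) L (MvPolynomial.X s(e p, e q))
  obtain ⟨X, hXs, hX0, x1, x2, x3, x4, x5⟩ := facet_forest n hn i a j b k h1 h2 h3 h4 h5 y
    (fun x z => by simp only [y]; rw [Sym2.eq_swap])
    (fun x z => by
      simp only [y]
      rw [ne_eq, map_eq_zero_iff _ (IsFractionRing.injective _ _)]
      exact MvPolynomial.X_ne_zero _)
  let Z : Set (Sym2 (Fin n)) := {v | ∃ p q : Fin n, v = s(e p, e q) ∧ ZR n i a j b k p q}
  have hZ : ∀ p q, s(e p, e q) ∈ Z ↔ ZR n i a j b k p q ∨ ZR n i a j b k q p := by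
    intro p q
    constructor
    · rintro ⟨p', q', h, hz⟩
      rw [sym2_eq_e] at h
      rcases h with ⟨rfl, rfl⟩ | ⟨rfl, rfl⟩
      · exact Or.inl hz
      · exact Or.inr hz
    · rintro (h | h)
      · exact ⟨p, q, rfl, h⟩
      · exact ⟨q, p, Sym2.eq_swap, h⟩
  let χ : Sym2 (Fin n) → L := fun v => if v ∈ Z then 0 else
    algebraMap (MvPolynomial (Sym2 (Fin n)) K) L (MvPolynomial.X v)
  let F : Sym2 (Fin n) → PowerSeries L :=
    Sym2.lift ⟨fun x z => X (e.symm x) (e.symm z), fun x z => hXs _ _⟩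
  have hFe : ∀ p q, F s(e p, e q) = X p q := fun p q => by simp [F]
  suffices hs : (∀ v, (PowerSeries.X : PowerSeries L) ^ (wt n v + 1) ∣
      F v - PowerSeries.X ^ (wt n v) * PowerSeries.C (χ v)) ∧
      MvPolynomial.eval₂ (PowerSeries.C.comp
        ((algebraMap (MvPolynomial (Sym2 (Fin n)) K) L).comp MvPolynomial.C)) F f = 0 by
    obtain ⟨z, ⟨p, q, rfl, hz⟩, hz'⟩ := valuation_arg (wt n) Z χ (fun v hv => if_pos hv)
      (fun v hv => if_neg hv) F hs.1 f hs.2 μ hμ hmin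
    exact ⟨p, q, hz, hz'⟩
  constructor
  · intro v
    obtain ⟨p, q, rfl⟩ := exists_pos e v
    rw [hFe]
    have cp := rtN_cases i a j b k p
    have cq := rtN_cases i a j b k q
    have lp := p.2
    have lq := q.2
    by_cases hpq : p = q
    · subst hpq
      have hw : wt n s(e p, e p) = 0 := if_pos ((mem_D e p p).2 rfl)
      rw [hw]
      simp only [zero_add, pow_one, pow_zero, one_mul]
      by_cases hr : rtN i a j b k p = p
      · have : χ s(e p, e p) = 0 := if_pos ((hZ p p).2 (by unfold ZR; omega))
        rw [this, map_zero, sub_zero]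
        exact x2 p hr
      · have : χ s(e p, e p) = y p p := if_neg (by rw [hZ p p]; unfold ZR; omega)
        rw [this]
        exact x1 p hr
    · have hpq' : (p : ℕ) ≠ q := fun h => hpq (Fin.ext h)
      by_cases ha : Nxt n p q ∨ Nxt n q p
      · have hw : wt n s(e p, e q) = 1 := by
          unfold wt
          rw [if_neg (by rwa [mem_D]), if_pos ((he p q).2 ha)]
        rw [hw, pow_one]
        by_cases hr : rtN i a j b k p = rtN i a j b k q
        · have : χ s(e p, e q) = y p q := if_neg (by
            rw [hZ p q, ZR_adj n hn i a j b k h1 h2 h3 h4 h5 p q lp lq ha]; exact not_not.2 hr)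
          rw [this]
          exact x3 p q ha hr
        · have : χ s(e p, e q) = 0 := if_pos (by
            rw [hZ p q, ZR_adj n hn i a j b k h1 h2 h3 h4 h5 p q lp lq ha]; exact hr)
          rw [this, map_zero, mul_zero, sub_zero]
          exact x4 p q ha hr
      · have hw : wt n s(e p, e q) = 4 * n + 2 := by
          unfold wt
          rw [if_neg (by rwa [mem_D]), if_neg (by rw [he p q]; exact ha)]
        rw [hw]
        have : χ s(e p, e q) = y p q := if_neg (by
          rw [hZ p q]; exact ZR_nadj n i a j b k p q hpq' ha)
        rw [this]
        exact x5 p q hpq ha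
  · have hle : minorsIdeal K n (n - 2) ≤ RingHom.ker (MvPolynomial.eval₂Hom
        (PowerSeries.C.comp ((algebraMap (MvPolynomial (Sym2 (Fin n)) K) L).comp MvPolynomial.C)) F) := by
      unfold minorsIdeal
      rw [Ideal.span_le]
      rintro _ ⟨α, β, -, -, rfl⟩
      rw [SetLike.mem_coe, RingHom.mem_ker, symMinor, RingHom.map_det, ← hX0 (e.symm ∘ α) (e.symm ∘ β)]
      congr 1
      ext1 x z
      simp [F]
    exact hle hf

end St14

namespace St14

theorem exists_label (n : ℕ) (hn : 4 ≤ n) : ∃ e : Fin n ≃ Fin n, IsLabel n e := by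
  refine ⟨⟨fun p => ⟨if 2 * (p : ℕ) ≤ n - 1 then 2 * p else 2 * n - 1 - 2 * p, by
      have := p.2; split_ifs <;> omega⟩,
    fun v => ⟨if (v : ℕ) % 2 = 0 then v / 2 else (2 * n - 1 - v) / 2, by
      have := v.2; split_ifs <;> omega⟩, ?_, ?_⟩, ?_⟩
  · intro p
    have := p.2
    apply Fin.ext
    simp only
    split_ifs <;> omega
  · intro p
    have := p.2
    apply Fin.ext
    simp only
    split_ifs <;> omega
  · intro p q
    have hp := p.2
    have hq := q.2
    have hU : ∀ x z : Fin n, s(x, z) ∈ Uset n ↔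
        (((z : ℕ) = (x : ℕ) + 2 ∨ ((x : ℕ) = 0 ∧ (z : ℕ) = 1) ∨
          ((x : ℕ) = n - 2 ∧ (z : ℕ) = n - 1)) ∨
        ((x : ℕ) = (z : ℕ) + 2 ∨ ((z : ℕ) = 0 ∧ (x : ℕ) = 1) ∨
          ((z : ℕ) = n - 2 ∧ (x : ℕ) = n - 1))) := by
      intro x z
      constructor
      · rintro ⟨i, j, h, h'⟩
        rw [Sym2.eq_iff] at h
        rcases h with ⟨rfl, rfl⟩ | ⟨rfl, rfl⟩
        · exact Or.inl h'
        · exact Or.inr h'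
      · rintro (h | h)
        · exact ⟨x, z, rfl, h⟩
        · exact ⟨z, x, Sym2.eq_swap, h⟩
    rw [hU]
    simp only [Equiv.coe_fn_mk, Nxt]
    split_ifs <;> omega

theorem Nxt_rot (n c p q : ℕ) (hc : c < n) (hp : p < n) (hq : q < n) :
    Nxt n ((p + c) % n) ((q + c) % n) ↔ Nxt n p q := by
  have h : ∀ p, p < n → (p + c < n ∧ (p + c) % n = p + c) ∨ (n ≤ p + c ∧ (p + c) % n = p + c - n) := by
    intro p hp
    by_cases h : p + c < n
    · left; exact ⟨h, Nat.mod_eq_of_lt h⟩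
    · right; refine ⟨by omega, ?_⟩
      rw [Nat.mod_eq_sub_mod (by omega), Nat.mod_eq_of_lt (by omega)]
  unfold Nxt
  rcases h p hp with ⟨h1, h2⟩ | ⟨h1, h2⟩ <;> rcases h q hq with ⟨h3, h4⟩ | ⟨h3, h4⟩ <;>
    rw [h2, h4] <;> omega

theorem rot_label (n : ℕ) (e : Fin n ≃ Fin n) (he : IsLabel n e) (p0 q0 : Fin n)
    (h0 : Nxt n p0 q0) : ∃ e' : Fin n ≃ Fin n, IsLabel n e' ∧
      (∀ p : Fin n, (p : ℕ) = n - 1 → e' p = e p0) ∧ (∀ p : Fin n, (p : ℕ) = 0 → e' p = e q0) := by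
  have hn : 0 < n := p0.pos
  have hp0 := p0.2
  have hq0 := q0.2
  have hmod : ∀ x c : ℕ, x < n → c < n → ((x + c) % n + (n - c)) % n = x := by
    intro x c hx hc
    rw [Nat.mod_add_mod, show x + c + (n - c) = x + n by omega, Nat.add_mod_right, Nat.mod_eq_of_lt hx]
  have hmod2 : ∀ x c : ℕ, x < n → c < n → ((x + (n - c)) % n + c) % n = x := by
    intro x c hx hc
    rw [Nat.mod_add_mod, show x + (n - c) + c = x + n by omega, Nat.add_mod_right, Nat.mod_eq_of_lt hx]
  let r : Fin n ≃ Fin n := ⟨fun p => ⟨(p + q0) % n, Nat.mod_lt _ hn⟩,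
    fun p => ⟨(p + (n - q0)) % n, Nat.mod_lt _ hn⟩,
    fun p => Fin.ext (hmod p q0 p.2 hq0), fun p => Fin.ext (hmod2 p q0 p.2 hq0)⟩
  refine ⟨r.trans e, ?_, ?_, ?_⟩
  · intro p q
    rw [Equiv.trans_apply, Equiv.trans_apply, he]
    exact or_congr (Nxt_rot n q0 p q hq0 p.2 q.2) (Nxt_rot n q0 q p hq0 q.2 p.2)
  · intro p hp
    rw [Equiv.trans_apply]
    congr 1
    apply Fin.ext
    show ((p : ℕ) + q0) % n = p0
    unfold Nxt at h0
    rcases h0 with h | h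
    · rw [hp, h, show n - 1 + ((p0 : ℕ) + 1) = p0 + n by omega, Nat.add_mod_right, Nat.mod_eq_of_lt hp0]
    · rw [hp, h.2, h.1, Nat.mod_eq_of_lt (by omega)]; rfl
  · intro p hp
    rw [Equiv.trans_apply]
    congr 1
    apply Fin.ext
    show ((p : ℕ) + q0) % n = q0
    rw [hp, zero_add, Nat.mod_eq_of_lt hq0]

theorem first {n m : ℕ} {P : ℕ → Prop} (h : ∃ i, m ≤ i ∧ i < n ∧ P i) :
    ∃ i, m ≤ i ∧ i < n ∧ P i ∧ ∀ x, m ≤ x → x < i → ¬ P x := by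
  classical
  refine ⟨Nat.find h, (Nat.find_spec h).1, (Nat.find_spec h).2.1, (Nat.find_spec h).2.2, ?_⟩
  intro x hx hxi hP
  exact Nat.find_min h hxi ⟨hx, hxi.trans (Nat.find_spec h).2.1, hP⟩

theorem dich_core (n : ℕ) (hn : 4 ≤ n) (bad edge : ℕ → Prop) :
    (∃ i a j b k, i ≤ a ∧ a < j ∧ j ≤ b ∧ b < k ∧ k < n ∧ bad i ∧ bad j ∧ bad k ∧
      ¬ edge a ∧ ¬ edge b) ∨
    ∃ p1 p2 q1 q2, p1 ≤ p2 ∧ p2 < q1 ∧ q1 ≤ q2 ∧ q2 < n ∧ ∀ x, x < n → x ≠ p1 → x ≠ q2 →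
      ((p1 < x ∧ x ≤ p2) ∧ edge (x - 1)) ∨ ((q1 ≤ x ∧ x < q2) ∧ edge x) ∨
      ((¬ (p1 < x ∧ x ≤ p2) ∧ ¬ (q1 ≤ x ∧ x < q2)) ∧ ¬ bad x) := by
  by_cases hi : ∃ i, 0 ≤ i ∧ i < n ∧ bad i
  swap
  · right
    refine ⟨0, 0, 1, 1, by omega, by omega, by omega, by omega, fun x hx _ _ => ?_⟩
    exact Or.inr (Or.inr ⟨by omega, fun h => hi ⟨x, by omega, hx, h⟩⟩)
  obtain ⟨i, -, hin, hi, hi'⟩ := first hi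
  by_cases ha : ∃ a, i ≤ a ∧ a < n - 1 ∧ ¬ edge a
  swap
  · right
    have ha' : ∀ x, i ≤ x → x < n - 1 → edge x := fun x h1 h2 => by
      by_contra h; exact ha ⟨x, h1, h2, h⟩
    by_cases h0 : i = 0
    · refine ⟨0, 0, 1, n - 1, by omega, by omega, by omega, by omega, fun x hx _ _ => ?_⟩
      exact Or.inr (Or.inl ⟨by omega, ha' x (by omega) (by omega)⟩)
    · refine ⟨0, 0, i, n - 1, by omega, by omega, by omega, by omega, fun x hx _ _ => ?_⟩
      by_cases hxi : x < i
      · exact Or.inr (Or.inr ⟨by omega, hi' x (by omega) hxi⟩)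
      · exact Or.inr (Or.inl ⟨by omega, ha' x (by omega) (by omega)⟩)
  obtain ⟨a, hia, han, ha, ha'⟩ := first ha
  have ha' : ∀ x, i ≤ x → x < a → edge x := fun x h1 h2 => not_not.1 (ha' x h1 h2)
  by_cases hj : ∃ j, a + 1 ≤ j ∧ j < n ∧ bad j
  swap
  · right
    refine ⟨i, a, a + 1, a + 1, by omega, by omega, by omega, by omega, fun x hx _ _ => ?_⟩
    by_cases hxi : x < i
    · exact Or.inr (Or.inr ⟨by omega, hi' x (by omega) hxi⟩)
    by_cases hxa : x ≤ a
    · exact Or.inl ⟨by omega, ha' _ (by omega) (by omega)⟩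
    · exact Or.inr (Or.inr ⟨by omega, fun h => hj ⟨x, by omega, hx, h⟩⟩)
  obtain ⟨j, haj, hjn, hj, hj'⟩ := first hj
  by_cases hb : ∃ b, j ≤ b ∧ b < n - 1 ∧ ¬ edge b
  swap
  · right
    have hb' : ∀ x, j ≤ x → x < n - 1 → edge x := fun x h1 h2 => by
      by_contra h; exact hb ⟨x, h1, h2, h⟩
    refine ⟨i, a, j, n - 1, by omega, by omega, by omega, by omega, fun x hx _ _ => ?_⟩
    by_cases hxi : x < i
    · exact Or.inr (Or.inr ⟨by omega, hi' x (by omega) hxi⟩)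
    by_cases hxa : x ≤ a
    · exact Or.inl ⟨by omega, ha' _ (by omega) (by omega)⟩
    by_cases hxj : x < j
    · exact Or.inr (Or.inr ⟨by omega, hj' x (by omega) hxj⟩)
    · exact Or.inr (Or.inl ⟨by omega, hb' x (by omega) (by omega)⟩)
  obtain ⟨b, hjb, hbn, hb, hb'⟩ := first hb
  have hb' : ∀ x, j ≤ x → x < b → edge x := fun x h1 h2 => not_not.1 (hb' x h1 h2)
  by_cases hk : ∃ k, b + 1 ≤ k ∧ k < n ∧ bad k
  · left
    obtain ⟨k, hbk, hkn, hk⟩ := hk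
    exact ⟨i, a, j, b, k, by omega, by omega, by omega, by omega, by omega, hi, hj, hk, ha, hb⟩
  · right
    refine ⟨i, a, j, b, by omega, by omega, by omega, by omega, fun x hx _ _ => ?_⟩
    by_cases hxi : x < i
    · exact Or.inr (Or.inr ⟨by omega, hi' x (by omega) hxi⟩)
    by_cases hxa : x ≤ a
    · exact Or.inl ⟨by omega, ha' _ (by omega) (by omega)⟩
    by_cases hxj : x < j
    · exact Or.inr (Or.inr ⟨by omega, hj' x (by omega) hxj⟩)
    by_cases hxb : x < b
    · exact Or.inr (Or.inl ⟨by omega, hb' x (by omega) (by omega)⟩)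
    · exact Or.inr (Or.inr ⟨by omega, fun h => hk ⟨x, by omega, hx, h⟩⟩)

/-- the leading permutation -/
def rho (p1 p2 q1 q2 x : ℕ) : ℕ :=
  if p1 < x ∧ x ≤ p2 then x - 1 else if q1 ≤ x ∧ x < q2 then x + 1 else x

theorem rho_cases (p1 p2 q1 q2 x : ℕ) :
    ((p1 < x ∧ x ≤ p2) ∧ rho p1 p2 q1 q2 x = x - 1) ∨
    (¬ (p1 < x ∧ x ≤ p2) ∧ (q1 ≤ x ∧ x < q2) ∧ rho p1 p2 q1 q2 x = x + 1) ∨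
    (¬ (p1 < x ∧ x ≤ p2) ∧ ¬ (q1 ≤ x ∧ x < q2) ∧ rho p1 p2 q1 q2 x = x) := by
  unfold rho; split_ifs <;> omega

def rhoF {n : ℕ} (p1 p2 q1 q2 : ℕ) (h : q2 < n) (x : Fin n) : Fin n :=
  ⟨rho p1 p2 q1 q2 x, by have := rho_cases p1 p2 q1 q2 x; have := x.2; omega⟩

/-- row indices of the minor -/
def rows (n p1 q2 : ℕ) : Finset (Fin n) := Finset.univ.filter fun x => (x : ℕ) ≠ p1 ∧ (x : ℕ) ≠ q2

theorem mem_rows {n p1 q2 : ℕ} {x : Fin n} : x ∈ rows n p1 q2 ↔ (x : ℕ) ≠ p1 ∧ (x : ℕ) ≠ q2 := by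
  simp [rows]

/-- exponent of the term of a minor given by the map `ρ` -/
noncomputable def mon {n : ℕ} (e : Fin n ≃ Fin n) (R : Finset (Fin n)) (ρ : Fin n → Fin n) :
    Sym2 (Fin n) →₀ ℕ :=
  ∑ x ∈ R, Finsupp.single s(e x, e (ρ x)) 1

theorem mon_apply {n : ℕ} (e : Fin n ≃ Fin n) (R : Finset (Fin n)) (ρ : Fin n → Fin n)
    (v : Sym2 (Fin n)) : mon e R ρ v = (R.filter fun x => s(e x, e (ρ x)) = v).card := by
  classical
  simp only [mon, Finsupp.finset_sum_apply, Finsupp.single_apply, Finset.card_filter]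

theorem mon_le_one {n : ℕ} (e : Fin n ≃ Fin n) (p1 p2 q1 q2 : ℕ) (h1 : p1 ≤ p2) (h2 : p2 < q1)
    (h3 : q1 ≤ q2) (h : q2 < n) (v : Sym2 (Fin n)) :
    mon e (rows n p1 q2) (rhoF p1 p2 q1 q2 h) v ≤ 1 := by
  rw [mon_apply, Finset.card_le_one]
  intro x hx z hz
  rw [Finset.mem_filter] at hx hz
  have := hx.2.trans hz.2.symm
  rw [sym2_eq_e] at this
  have c1 := rho_cases p1 p2 q1 q2 x
  have c2 := rho_cases p1 p2 q1 q2 z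
  rcases this with h | ⟨h, h'⟩
  · exact h.1
  · rw [Fin.ext_iff] at *
    simp only [rhoF] at h h'
    omega

theorem mon_ne_zero {n : ℕ} (e : Fin n ≃ Fin n) (R : Finset (Fin n)) (ρ : Fin n → Fin n)
    (v : Sym2 (Fin n)) : mon e R ρ v ≠ 0 ↔ ∃ x ∈ R, s(e x, e (ρ x)) = v := by
  rw [mon_apply, Finset.card_ne_zero]
  simp [Finset.Nonempty]

def Gset (n : ℕ) : Set (Sym2 (Fin n) →₀ ℕ) :=
  {m | ∃ (e : Fin n ≃ Fin n) (p1 p2 q1 q2 : ℕ) (h : q2 < n), IsLabel n e ∧ p1 ≤ p2 ∧ p2 < q1 ∧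
    q1 ≤ q2 ∧ m = mon e (rows n p1 q2) (rhoF p1 p2 q1 q2 h)}

theorem dichotomy (n : ℕ) (hn : 4 ≤ n) (μ : Sym2 (Fin n) →₀ ℕ) :
    (∃ m ∈ Gset n, m ≤ μ) ∨ ∃ e : Fin n ≃ Fin n, IsLabel n e ∧ ∃ i a j b k, i ≤ a ∧ a < j ∧ j ≤ b ∧
      b < k ∧ k < n ∧ ∀ p q : Fin n, ZR n i a j b k p q → μ s(e p, e q) = 0 := by
  have main : ∀ e : Fin n ≃ Fin n, IsLabel n e →
      ((∀ p q : Fin n, (p : ℕ) = n - 1 → (q : ℕ) = 0 → μ s(e p, e q) = 0) ∨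
        ∀ p q : Fin n, Nxt n p q → μ s(e p, e q) ≠ 0) →
      (∃ m ∈ Gset n, m ≤ μ) ∨ ∃ e : Fin n ≃ Fin n, IsLabel n e ∧ ∃ i a j b k, i ≤ a ∧ a < j ∧ j ≤ b ∧
      b < k ∧ k < n ∧ ∀ p q : Fin n, ZR n i a j b k p q → μ s(e p, e q) = 0 := by
    intro e he hwrap
    rcases dich_core n hn (fun x => ∃ h : x < n, μ s(e ⟨x, h⟩, e ⟨x, h⟩) = 0)
      (fun x => ∃ h : x + 1 < n, μ s(e ⟨x, by omega⟩, e ⟨x + 1, h⟩) ≠ 0) with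
      ⟨i, a, j, b, k, h1, h2, h3, h4, h5, hi, hj, hk, ha, hb⟩ | ⟨p1, p2, q1, q2, h1, h2, h3, h4, h5⟩
    · rcases hwrap with hwrap | hall
      · right
        refine ⟨e, he, i, a, j, b, k, h1, h2, h3, h4, h5, ?_⟩
        intro p q hz
        rcases hz with ⟨hpq, hz⟩ | ⟨hp, hq⟩ | ⟨hp, hq⟩ | ⟨hp, hq⟩
        · obtain rfl : p = q := Fin.ext hpq
          rcases hz with rfl | rfl | rfl
          · exact hi.2
          · exact hj.2
          · exact hk.2
        · subst hp
          by_contra hne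
          refine ha ⟨by omega, ?_⟩
          rwa [show (⟨(p : ℕ) + 1, by omega⟩ : Fin n) = q from Fin.ext hq.symm]
        · subst hp
          by_contra hne
          refine hb ⟨by omega, ?_⟩
          rwa [show (⟨(p : ℕ) + 1, by omega⟩ : Fin n) = q from Fin.ext hq.symm]
        · exact hwrap p q hp hq
      · exact absurd ⟨by omega, hall ⟨a, by omega⟩ ⟨a + 1, by omega⟩ (Or.inl rfl)⟩ ha
    · left
      refine ⟨_, ⟨e, p1, p2, q1, q2, h4, he, h1, h2, h3, rfl⟩, ?_⟩
      intro v
      by_cases hv : mon e (rows n p1 q2) (rhoF p1 p2 q1 q2 h4) v = 0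
      · rw [hv]; exact Nat.zero_le _
      · refine (mon_le_one e p1 p2 q1 q2 h1 h2 h3 h4 v).trans ?_
        obtain ⟨x, hx, rfl⟩ := (mon_ne_zero e _ _ v).1 hv
        rw [mem_rows] at hx
        rw [Nat.one_le_iff_ne_zero]
        have hc := rho_cases p1 p2 q1 q2 x
        rcases h5 x x.2 hx.1 hx.2 with ⟨c, hE, hE'⟩ | ⟨c, hE, hE'⟩ | ⟨c, hB⟩
        · have e1 : (⟨(x : ℕ) - 1 + 1, hE⟩ : Fin n) = x := Fin.ext (by simp; omega)
          have e2 : rhoF p1 p2 q1 q2 h4 x = ⟨(x : ℕ) - 1, by omega⟩ :=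
            Fin.ext (by simp only [rhoF]; omega)
          rw [e2, Sym2.eq_swap]
          rwa [e1] at hE'
        · have e2 : rhoF p1 p2 q1 q2 h4 x = ⟨(x : ℕ) + 1, by omega⟩ :=
            Fin.ext (by simp only [rhoF]; omega)
          rw [e2]
          exact hE'
        · have e2 : rhoF p1 p2 q1 q2 h4 x = x :=
            Fin.ext (by simp only [rhoF]; omega)
          rw [e2]
          exact fun h => hB ⟨x.2, h⟩
  obtain ⟨e, he⟩ := exists_label n hn
  by_cases h : ∀ p q : Fin n, Nxt n p q → μ s(e p, e q) ≠ 0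
  · exact main e he (Or.inr h)
  · push Not at h
    obtain ⟨p, q, hpq, hμ⟩ := h
    obtain ⟨e', he', h1, h2⟩ := rot_label n e he p q hpq
    exact main e' he' (Or.inl fun p' q' hp' hq' => by rw [h1 p' hp', h2 q' hq', hμ])

end St14

namespace St14

theorem structure_lemma (n p1 p2 q1 q2 : ℕ) (h1 : p1 ≤ p2) (h2 : p2 < q1)
    (h3 : q1 ≤ q2) (h : q2 < n) (ρ : Fin n → Fin n)
    (hinj : ∀ x ∈ rows n p1 q2, ∀ z ∈ rows n p1 q2, ρ x = ρ z → x = z)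
    (hmap : ∀ x ∈ rows n p1 q2, ρ x ∈ rows n p2 q1)
    (hadj : ∀ x ∈ rows n p1 q2, ρ x = x ∨ Nxt n x (ρ x) ∨ Nxt n (ρ x) x) :
    (∀ x : Fin n, p1 < x → (x : ℕ) ≤ p2 → (ρ x : ℕ) + 1 = x) ∧
    (∀ x : Fin n, q1 ≤ x → (x : ℕ) < q2 → (ρ x : ℕ) = x + 1) := by
  classical
  simp only [mem_rows] at hinj hmap hadj
  have hadj' : ∀ x : Fin n, ((x : ℕ) ≠ p1 ∧ (x : ℕ) ≠ q2) → 0 < (x : ℕ) → (x : ℕ) < n - 1 →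
      (ρ x : ℕ) = x ∨ (ρ x : ℕ) = x + 1 ∨ (ρ x : ℕ) + 1 = x := by
    intro x hx h0 hn
    have hlt := (ρ x).2
    have h' := hadj x hx
    unfold Nxt at h'
    rw [Fin.ext_iff] at h'
    omega
  let G : Finset (Fin n) := Finset.univ.filter fun x => p2 < (x : ℕ) ∧ (x : ℕ) < q1
  have hG : ∀ x, x ∈ G ↔ p2 < (x : ℕ) ∧ (x : ℕ) < q1 := by simp [G]
  have himg : G.image ρ = G := by
    apply Finset.eq_of_subset_of_card_le
    · intro z hz
      obtain ⟨x, hx, rfl⟩ := Finset.mem_image.1 hz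
      rw [hG] at hx ⊢
      have := hadj' x (by omega) (by omega) (by omega)
      have := hmap x (by omega)
      omega
    · rw [Finset.card_image_of_injOn]
      intro x hx z hz hxz
      rw [Finset.mem_coe, hG] at hx hz
      exact hinj x (by omega) z (by omega) hxz
  have hgap : ∀ x : Fin n, ((x : ℕ) ≠ p1 ∧ (x : ℕ) ≠ q2) → p2 < (ρ x : ℕ) → (ρ x : ℕ) < q1 →
      p2 < (x : ℕ) ∧ (x : ℕ) < q1 := by
    intro x hx ha hb
    have : ρ x ∈ G.image ρ := by rw [himg, hG]; exact ⟨ha, hb⟩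
    obtain ⟨z, hz, hzx⟩ := Finset.mem_image.1 this
    rw [hG] at hz
    have := hinj z (by omega) x hx hzx
    rwa [this] at hz
  constructor
  · have key : ∀ d : ℕ, ∀ x : Fin n, p1 < x → (x : ℕ) ≤ p2 → p2 - x = d → (ρ x : ℕ) + 1 = x := by
      intro d
      induction d using Nat.strong_induction_on with
      | _ d ih =>
        intro x hx1 hx2 hd
        have c1 := hadj' x (by omega) (by omega) (by omega)
        have c2 := hmap x (by omega)
        have c3 := hgap x (by omega)
        rcases c1 with c | c | c
        · exfalso
          have hlt : (x : ℕ) + 1 < n := by omega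
          have := ih (d - 1) (by omega) ⟨x + 1, hlt⟩ (by simp; omega) (by simp; omega) (by simp; omega)
          have := hinj ⟨x + 1, hlt⟩ (by simp; omega) x (by omega) (Fin.ext (by simp at this; omega))
          simp [Fin.ext_iff] at this
        · exfalso
          by_cases hh : (x : ℕ) + 1 < p2
          · have hlt : (x : ℕ) + 2 < n := by omega
            have := ih (d - 2) (by omega) ⟨x + 2, hlt⟩ (by simp; omega) (by simp; omega) (by simp; omega)
            have := hinj ⟨x + 2, hlt⟩ (by simp; omega) x (by omega) (Fin.ext (by simp at this; omega))
            simp [Fin.ext_iff] at this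
          · omega
        · exact c
    exact fun x hx1 hx2 => key _ x hx1 hx2 rfl
  · have key : ∀ d : ℕ, ∀ x : Fin n, q1 ≤ x → (x : ℕ) < q2 → x - q1 = d → (ρ x : ℕ) = x + 1 := by
      intro d
      induction d using Nat.strong_induction_on with
      | _ d ih =>
        intro x hx1 hx2 hd
        have c1 := hadj' x (by omega) (by omega) (by omega)
        have c2 := hmap x (by omega)
        have c3 := hgap x (by omega)
        rcases c1 with c | c | c
        · exfalso
          have hlt : (x : ℕ) - 1 < n := by omega
          have := ih (d - 1) (by omega) ⟨x - 1, hlt⟩ (by simp; omega) (by simp; omega) (by simp; omega)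
          have := hinj ⟨x - 1, hlt⟩ (by simp; omega) x (by omega) (Fin.ext (by simp at this; omega))
          simp [Fin.ext_iff] at this
          omega
        · exact c
        · exfalso
          by_cases hh : q1 + 1 < (x : ℕ)
          · have hlt : (x : ℕ) - 2 < n := by omega
            have := ih (d - 2) (by omega) ⟨x - 2, hlt⟩ (by simp; omega) (by simp; omega) (by simp; omega)
            have := hinj ⟨x - 2, hlt⟩ (by simp; omega) x (by omega) (Fin.ext (by simp at this; omega))
            simp [Fin.ext_iff] at this
            omega
          · omega
    exact fun x hx1 hx2 => key _ x hx1 hx2 rfl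

theorem mon_deg {n : ℕ} (e : Fin n ≃ Fin n) (R : Finset (Fin n)) (ρ : Fin n → Fin n) :
    ((mon e R ρ).sum fun _ k => k) = R.card := by
  have h : ∀ a : Sym2 (Fin n) →₀ ℕ, (a.sum fun _ k => k) = ∑ v, a v := fun a =>
    Finsupp.sum_fintype _ _ (by simp)
  rw [h]
  simp only [mon, Finsupp.finsetSum_apply]
  rw [Finset.sum_comm]
  simp [Finsupp.single_apply]

theorem lt_of_witness {n : ℕ} (rank : Sym2 (Fin n) → ℕ) (hr : Function.Injective rank)
    (a b : Sym2 (Fin n) →₀ ℕ)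
    (hd : (a.sum fun _ k => k) = (b.sum fun _ k => k)) (v : Sym2 (Fin n)) (hv : b v < a v)
    (hge : ∀ w, rank v ≤ rank w → b w ≤ a w) : DegRevLexLT rank a b := by
  classical
  obtain ⟨w, hw, hmax⟩ := Finset.exists_max_image (Finset.univ.filter fun w => a w ≠ b w) rank
    ⟨v, by simp; omega⟩
  simp only [Finset.mem_filter, Finset.mem_univ, true_and] at hw hmax
  refine Or.inr ⟨hd, w, ?_, ?_⟩
  · have := hge w (hmax v (by omega))
    omega
  · intro u hu
    by_contra hne
    have := hmax u hne
    omega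

theorem rank_D {n : ℕ} {rank : Sym2 (Fin n) → ℕ} (hrank : IsGoodRank n rank) (v : Sym2 (Fin n))
    (hv : v ∈ Dset n) : rank v < n := by
  obtain ⟨i, rfl⟩ := hv
  rw [hrank.2.1]; exact i.2

theorem rank_U {n : ℕ} (hn : 4 ≤ n) {rank : Sym2 (Fin n) → ℕ} (hrank : IsGoodRank n rank)
    (v : Sym2 (Fin n)) (hv : v ∈ Uset n) : n ≤ rank v ∧ rank v < 2 * n := by
  obtain ⟨i, j, rfl, h | h | h⟩ := hv
  · rw [hrank.2.2.1 i j h]; omega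
  · rw [hrank.2.2.2.1 i j h.1 h.2]; omega
  · rw [hrank.2.2.2.2.1 i j h.1 h.2]; omega

theorem lead_lemma {n : ℕ} (hn : 4 ≤ n) {rank : Sym2 (Fin n) → ℕ} (hrank : IsGoodRank n rank)
    (e : Fin n ≃ Fin n) (he : IsLabel n e) (p1 p2 q1 q2 : ℕ) (h1 : p1 ≤ p2) (h2 : p2 < q1)
    (h3 : q1 ≤ q2) (h : q2 < n) (ρ : Fin n → Fin n)
    (hinj : ∀ x ∈ rows n p1 q2, ∀ z ∈ rows n p1 q2, ρ x = ρ z → x = z)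
    (hmap : ∀ x ∈ rows n p1 q2, ρ x ∈ rows n p2 q1) :
    (∀ x ∈ rows n p1 q2, ρ x = rhoF p1 p2 q1 q2 h x) ∨
    DegRevLexLT rank (mon e (rows n p1 q2) ρ) (mon e (rows n p1 q2) (rhoF p1 p2 q1 q2 h)) := by
  have hrv : ∀ x, (rhoF p1 p2 q1 q2 h x : ℕ) = rho p1 p2 q1 q2 x := fun x => rfl
  have hmDU : ∀ x ∈ rows n p1 q2, s(e x, e (rhoF p1 p2 q1 q2 h x)) ∈ Dset n ∪ Uset n := by
    intro x _
    have hc := rho_cases p1 p2 q1 q2 x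
    by_cases hx : rhoF p1 p2 q1 q2 h x = x
    · left; rw [mem_D]; exact hx.symm
    · right
      rw [he, hrv]
      rw [Fin.ext_iff, hrv] at hx
      unfold Nxt
      omega
  by_cases hV : ∃ x ∈ rows n p1 q2, s(e x, e (ρ x)) ∉ Dset n ∪ Uset n
  · right
    obtain ⟨x, hx, hxV⟩ := hV
    have hm0 : ∀ w, w ∉ Dset n ∪ Uset n → mon e (rows n p1 q2) (rhoF p1 p2 q1 q2 h) w = 0 := by
      intro w hw
      by_contra hne
      obtain ⟨z, hz, rfl⟩ := (mon_ne_zero _ _ _ _).1 hne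
      exact hw (hmDU z hz)
    refine lt_of_witness rank hrank.1 _ _ (by rw [mon_deg, mon_deg]) s(e x, e (ρ x)) ?_ ?_
    · rw [hm0 _ hxV]
      exact Nat.pos_of_ne_zero ((mon_ne_zero _ _ _ _).2 ⟨x, hx, rfl⟩)
    · intro w hw
      rw [hm0 w]
      · exact Nat.zero_le _
      · have := hrank.2.2.2.2.2 _ hxV
        rintro (h' | h')
        · have := rank_D hrank w h'; omega
        · have := rank_U hn hrank w h'; omega
  · push Not at hV
    have hadj : ∀ x ∈ rows n p1 q2, ρ x = x ∨ Nxt n x (ρ x) ∨ Nxt n (ρ x) x := by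
      intro x hx
      rcases hV x hx with h' | h'
      · left; rw [mem_D] at h'; exact h'.symm
      · right; rwa [he] at h'
    obtain ⟨s1, s2⟩ := structure_lemma n p1 p2 q1 q2 h1 h2 h3 h ρ hinj hmap hadj
    have hagree : ∀ x ∈ rows n p1 q2, rhoF p1 p2 q1 q2 h x ≠ x → ρ x = rhoF p1 p2 q1 q2 h x := by
      intro x hx hne
      have hc := rho_cases p1 p2 q1 q2 x
      have := s1 x
      have := s2 x
      rw [ne_eq, Fin.ext_iff, hrv] at hne
      rw [Fin.ext_iff, hrv]
      omega
    by_cases hall : ∀ x ∈ rows n p1 q2, ρ x = rhoF p1 p2 q1 q2 h x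
    · exact Or.inl hall
    right
    push Not at hall
    obtain ⟨x, hx, hxne⟩ := hall
    have hx0 : rhoF p1 p2 q1 q2 h x = x := by
      by_contra hne; exact hxne (hagree x hx hne)
    have hρx : ρ x ≠ x := by rwa [hx0] at hxne
    have hxU : s(e x, e (ρ x)) ∈ Uset n := by
      rcases hV x hx with h' | h'
      · rw [mem_D] at h'; exact absurd h'.symm hρx
      · exact h'
    refine lt_of_witness rank hrank.1 _ _ (by rw [mon_deg, mon_deg]) s(e x, e (ρ x)) ?_ ?_
    · have : mon e (rows n p1 q2) (rhoF p1 p2 q1 q2 h) s(e x, e (ρ x)) = 0 := by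
        by_contra hne
        obtain ⟨z, hz, hzx⟩ := (mon_ne_zero _ _ _ _).1 hne
        rw [sym2_eq_e] at hzx
        rcases hzx with ⟨rfl, h'⟩ | ⟨h', h''⟩
        · exact hxne h'.symm
        · have cz := rho_cases p1 p2 q1 q2 z
          have cx := rho_cases p1 p2 q1 q2 x
          rw [mem_rows] at hx hz
          have hzx : z ≠ x := by rw [h']; exact hρx
          rw [Fin.ext_iff, hrv] at h'' hx0
          rw [ne_eq, Fin.ext_iff] at hzx
          omega
      rw [this]
      exact Nat.pos_of_ne_zero ((mon_ne_zero _ _ _ _).2 ⟨x, hx, rfl⟩)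
    · intro w hw
      by_cases hm : mon e (rows n p1 q2) (rhoF p1 p2 q1 q2 h) w = 0
      · rw [hm]; exact Nat.zero_le _
      · refine (mon_le_one e p1 p2 q1 q2 h1 h2 h3 h w).trans ?_
        obtain ⟨z, hz, rfl⟩ := (mon_ne_zero _ _ _ _).1 hm
        have hne : rhoF p1 p2 q1 q2 h z ≠ z := by
          intro hz0
          have := rank_D hrank s(e z, e (rhoF p1 p2 q1 q2 h z)) ((mem_D _ _ _).2 hz0.symm)
          have := rank_U hn hrank _ hxU
          omega
        rw [Nat.one_le_iff_ne_zero, mon_ne_zero]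
        exact ⟨z, hz, by rw [hagree z hz hne]⟩

end St14

namespace St14

theorem card_rows (n p q : ℕ) (hpq : p ≠ q) (hp : p < n) (hq : q < n) :
    (rows n p q).card = n - 2 := by
  have : rows n p q = Finset.univ \ {(⟨p, hp⟩ : Fin n), ⟨q, hq⟩} := by
    ext x
    simp only [mem_rows, Finset.mem_sdiff, Finset.mem_univ, true_and, Finset.mem_insert,
      Finset.mem_singleton, Fin.ext_iff]
    omega
  rw [this, Finset.card_sdiff_of_subset (Finset.subset_univ _), Finset.card_univ, Fintype.card_fin,
    Finset.card_pair (by simpa using hpq)]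

theorem lead_exists {K : Type*} [Field K] {n : ℕ} (hn : 4 ≤ n) {rank : Sym2 (Fin n) → ℕ}
    (hrank : IsGoodRank n rank) (m : Sym2 (Fin n) →₀ ℕ) (hm : m ∈ Gset n) :
    ∃ f ∈ minorsIdeal K n (n - 2), IsLeadingMonomial rank f m := by
  classical
  obtain ⟨e, p1, p2, q1, q2, h, he, h1, h2, h3, rfl⟩ := hm
  set R := rows n p1 q2 with hR
  set C' := rows n p2 q1 with hC
  have hRc : (R.map e.toEmbedding).card = n - 2 := by
    rw [Finset.card_map]; exact card_rows n p1 q2 (by omega) (by omega) (by omega)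
  have hCc : (C'.map e.toEmbedding).card = n - 2 := by
    rw [Finset.card_map]; exact card_rows n p2 q1 (by omega) (by omega) (by omega)
  let α : Fin (n - 2) → Fin n := (R.map e.toEmbedding).orderEmbOfFin hRc
  let β : Fin (n - 2) → Fin n := (C'.map e.toEmbedding).orderEmbOfFin hCc
  have hα : StrictMono α := OrderEmbedding.strictMono _
  have hβ : StrictMono β := OrderEmbedding.strictMono _
  let A : Fin (n - 2) → Fin n := fun k => e.symm (α k)
  let B : Fin (n - 2) → Fin n := fun k => e.symm (β k)
  have hA : Function.Injective A := e.symm.injective.comp hα.injective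
  have hB : Function.Injective B := e.symm.injective.comp hβ.injective
  have hAR : ∀ x, x ∈ R ↔ ∃ k, A k = x := by
    intro x
    have h1 : Set.range α = ↑(R.map e.toEmbedding) := Finset.range_orderEmbOfFin _ hRc
    have h2 : x ∈ R ↔ e x ∈ Set.range α := by rw [h1]; simp
    rw [h2]
    simp only [Set.mem_range, A, Equiv.symm_apply_eq]
  have hBC : ∀ x, x ∈ C' ↔ ∃ k, B k = x := by
    intro x
    have h1 : Set.range β = ↑(C'.map e.toEmbedding) := Finset.range_orderEmbOfFin _ hCc
    have h2 : x ∈ C' ↔ e x ∈ Set.range β := by rw [h1]; simp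
    rw [h2]
    simp only [Set.mem_range, B, Equiv.symm_apply_eq]
  have hne : Nonempty (Fin (n - 2)) := ⟨⟨0, by omega⟩⟩
  let ρ : Equiv.Perm (Fin (n - 2)) → Fin n → Fin n := fun τ x => B (τ (Function.invFun A x))
  have hρA : ∀ τ k, ρ τ (A k) = B (τ k) := fun τ k => by
    simp only [ρ, Function.leftInverse_invFun hA k]
  have hRimg : R = Finset.univ.image A := by
    ext x; rw [hAR]; simp
  have hν : ∀ τ, mon e R (ρ τ) = ∑ k, Finsupp.single s(α k, β (τ k)) 1 := by
    intro τ
    rw [mon, hRimg, Finset.sum_image (fun x _ z _ hxz => hA hxz)]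
    refine Finset.sum_congr rfl fun k _ => ?_
    rw [hρA]
    simp [A, B]
  have hdet : symMinor K α β = ∑ τ : Equiv.Perm (Fin (n - 2)),
      MvPolynomial.monomial (mon e R (ρ τ)) (((Equiv.Perm.sign τ : ℤ) : K)) := by
    rw [symMinor, ← Matrix.det_transpose, Matrix.det_apply']
    refine Finset.sum_congr rfl fun τ _ => ?_
    rw [hν, ← mul_one (((Equiv.Perm.sign τ : ℤ) : K)), ← MvPolynomial.C_mul_monomial,
      MvPolynomial.monomial_sum_one]
    simp only [Matrix.transpose_apply, Matrix.of_apply, map_intCast]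
    rfl
  set m := mon e R (rhoF p1 p2 q1 q2 h) with hm
  have hlead : ∀ τ, (∀ x ∈ R, ρ τ x = rhoF p1 p2 q1 q2 h x) ∨
      DegRevLexLT rank (mon e R (ρ τ)) m := by
    intro τ
    refine lead_lemma hn hrank e he p1 p2 q1 q2 h1 h2 h3 h (ρ τ) ?_ ?_
    · intro x hx z hz hxz
      obtain ⟨k, rfl⟩ := (hAR x).1 hx
      obtain ⟨l, rfl⟩ := (hAR z).1 hz
      rw [hρA, hρA] at hxz
      rw [τ.injective (hB hxz)]
    · intro x hx
      obtain ⟨k, rfl⟩ := (hAR x).1 hx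
      rw [hρA]
      exact (hBC _).2 ⟨_, rfl⟩
  -- the leading permutation
  have hex : ∀ k, ∃ l, B l = rhoF p1 p2 q1 q2 h (A k) := by
    intro k
    rw [← hBC]
    have hk : A k ∈ R := (hAR _).2 ⟨k, rfl⟩
    rw [hR, mem_rows] at hk
    rw [hC, mem_rows]
    have := rho_cases p1 p2 q1 q2 (A k)
    simp only [rhoF]
    omega
  choose t ht using hex
  have htinj : Function.Injective t := by
    intro k l hkl
    have h4 : rhoF p1 p2 q1 q2 h (A k) = rhoF p1 p2 q1 q2 h (A l) := by rw [← ht, ← ht, hkl]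
    have hk : A k ∈ R := (hAR _).2 ⟨k, rfl⟩
    have hl : A l ∈ R := (hAR _).2 ⟨l, rfl⟩
    rw [hR, mem_rows] at hk hl
    apply hA
    have c1 := rho_cases p1 p2 q1 q2 (A k)
    have c2 := rho_cases p1 p2 q1 q2 (A l)
    rw [Fin.ext_iff] at h4 ⊢
    simp only [rhoF] at h4
    omega
  let τ0 : Equiv.Perm (Fin (n - 2)) := Equiv.ofBijective t (Finite.injective_iff_bijective.1 htinj)
  have hτ0 : mon e R (ρ τ0) = m := by
    rw [hm]
    refine Finset.sum_congr rfl fun x hx => ?_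
    obtain ⟨k, rfl⟩ := (hAR x).1 hx
    rw [hρA, ← ht k]
    rfl
  have huniq : ∀ τ, mon e R (ρ τ) = m → τ = τ0 := by
    intro τ hτ
    rcases hlead τ with h' | h'
    · ext k
      have := h' (A k) ((hAR _).2 ⟨k, rfl⟩)
      rw [hρA, ← ht k] at this
      exact congrArg Fin.val (hB this)
    · rw [hτ] at h'
      exact absurd h' (lt_irrefl' rank m)
  refine ⟨symMinor K α β, Ideal.subset_span ⟨α, β, hα, hβ, rfl⟩, ?_, ?_⟩
  · rw [MvPolynomial.mem_support_iff, hdet, MvPolynomial.coeff_sum, Finset.sum_eq_single τ0]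
    · rw [MvPolynomial.coeff_monomial, if_pos hτ0]
      rcases Int.units_eq_one_or (Equiv.Perm.sign τ0) with h' | h' <;> rw [h'] <;> simp
    · intro τ _ hne'
      rw [MvPolynomial.coeff_monomial, if_neg fun h' => hne' (huniq τ h')]
    · simp
  · intro ν hν' hνm
    rw [MvPolynomial.mem_support_iff, hdet, MvPolynomial.coeff_sum] at hν'
    obtain ⟨τ, -, hτ⟩ := Finset.exists_ne_zero_of_sum_ne_zero hν'
    rw [MvPolynomial.coeff_monomial] at hτ
    have hτν : mon e R (ρ τ) = ν := by
      by_contra h'; exact hτ (if_neg h')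
    rcases hlead τ with h' | h'
    · exfalso
      apply hνm
      rw [← hτν, hm]
      exact Finset.sum_congr rfl fun x hx => by rw [h' x hx]
    · rwa [hτν] at h'

end St14

namespace St14

theorem hLI {K : Type*} [Field K] (n : ℕ) (hn : 4 ≤ n) (f : MvPolynomial (Sym2 (Fin n)) K)
    (hf : f ∈ minorsIdeal K n (n - 2)) (hf0 : f ≠ 0) :
    ∃ a ∈ f.support, ∃ m ∈ Gset n, m ≤ a := by
  obtain ⟨μ, hμ, hmin⟩ := Finset.exists_min_image f.support
    (fun ν => ∑ v, wt n v * ν v) (MvPolynomial.support_nonempty.2 hf0)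
  refine ⟨μ, hμ, ?_⟩
  rcases dichotomy n hn μ with h | ⟨e, he, i, a, j, b, k, h1, h2, h3, h4, h5, hz⟩
  · exact h
  · obtain ⟨p, q, hpq, hne⟩ := facet n hn e he i a j b k h1 h2 h3 h4 h5 f hf μ hμ hmin
    exact absurd (hz p q hpq) hne

end St14

/-- **Theorem 1.1(2), first part.** For `n ≥ 4`, the initial ideal `in_≺(I_{n-2})` is a
squarefree monomial ideal (it is generated by squarefree monomials); in particular it is
a radical ideal. -/
theorem stmt14 {K : Type*} [Field K] (n : ℕ) (hn : 4 ≤ n)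
    (rank : Sym2 (Fin n) → ℕ) (hrank : IsGoodRank n rank) :
    (∃ G : Set (MvPolynomial (Sym2 (Fin n)) K),
      initialIdeal rank (minorsIdeal K n (n - 2)) = Ideal.span G ∧
      ∀ g ∈ G, ∃ μ : Sym2 (Fin n) →₀ ℕ, (∀ v : Sym2 (Fin n), μ v ≤ 1) ∧
        g = MvPolynomial.monomial μ 1) ∧
    (initialIdeal rank (minorsIdeal K n (n - 2))).IsRadical := by

  have heq := St14.initial_eq hrank.1 (minorsIdeal K n (n - 2)) (St14.Gset n)
    (fun m hm => St14.lead_exists hn hrank m hm) (fun f hf h0 => St14.hLI n hn f hf h0)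
  have hsq : ∀ m ∈ St14.Gset n, ∀ v, m v ≤ 1 := by
    rintro m ⟨e, p1, p2, q1, q2, h, -, h1, h2, h3, rfl⟩ v
    exact St14.mon_le_one e p1 p2 q1 q2 h1 h2 h3 h v
  refine ⟨⟨_, heq, ?_⟩, ?_⟩
  · rintro _ ⟨m, hm, rfl⟩
    exact ⟨m, hsq m hm, rfl⟩
  · rw [heq]
    exact St14.squarefree_radical _ hsq
end

section
/- For every t with 2 ≤ t ≤ n, the quotient ring S/I_t is a normal domain: S/I_t is an integral domain that is integrally closed in its field of fractions. -/
namespace SymDet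

/-- minors of an `ℕ × ℕ` array. -/
def minr {T : Type*} [CommRing T] (M : ℕ → ℕ → T) {t : ℕ} (a b : Fin t → ℕ) : T :=
  Matrix.det (Matrix.of fun k l => M (a k) (b l))

/-- all `(r+1)`-minors with rows `< k` and columns `< w` vanish. -/
def Van {T : Type*} [CommRing T] (M : ℕ → ℕ → T) (k w r : ℕ) : Prop :=
  ∀ a b : Fin (r + 1) → ℕ, (∀ i, a i < k) → (∀ i, b i < w) → minr M a b = 0

section tools

variable {T : Type*} [CommRing T]

lemma minr_map {T' : Type*} [CommRing T'] (h : T →+* T') (M : ℕ → ℕ → T) {t : ℕ}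
    (a b : Fin t → ℕ) : h (minr M a b) = minr (fun i j => h (M i j)) a b := by
  unfold minr
  rw [RingHom.map_det]
  rfl

lemma minr_congr {M M' : ℕ → ℕ → T} {t : ℕ} {a b : Fin t → ℕ}
    (h : ∀ i l, M (a i) (b l) = M' (a i) (b l)) : minr M a b = minr M' a b := by
  unfold minr
  congr 1
  ext i l
  exact h i l

lemma minr_swap (M : ℕ → ℕ → T) {t : ℕ} (a b : Fin t → ℕ) :
    minr (fun i j => M j i) a b = minr M b a := by
  unfold minr
  rw [← Matrix.det_transpose]
  rfl

lemma Van.swap {M : ℕ → ℕ → T} {k w r : ℕ} (h : Van M k w r) :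
    Van (fun i j => M j i) w k r := by
  intro a b ha hb
  rw [minr_swap]
  exact h b a hb ha

lemma Van.congr {M M' : ℕ → ℕ → T} {k w r : ℕ} (h : Van M k w r)
    (hM : ∀ a b, a < k → b < w → M' a b = M a b) : Van M' k w r := by
  intro a b ha hb
  rw [minr_congr (M' := M) fun i l => hM _ _ (ha i) (hb l)]
  exact h a b ha hb

lemma Van.symm {M : ℕ → ℕ → T} (hM : ∀ a b, M a b = M b a) {k w r : ℕ} (h : Van M k w r) :
    Van M w k r :=
  h.swap.congr fun a b _ _ => hM a b

lemma Van.mono {M : ℕ → ℕ → T} {k w r k' w' : ℕ} (h : Van M k w r) (hk : k' ≤ k)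
    (hw : w' ≤ w) : Van M k' w' r := fun a b ha hb =>
  h a b (fun i => (ha i).trans_le hk) (fun i => (hb i).trans_le hw)

lemma Van.add_row {M : ℕ → ℕ → T} {k w r : ℕ} (h : Van M k w r) : Van M (k + 1) w (r + 1) := by
  intro a b ha hb
  by_cases hinj : Function.Injective a
  · obtain ⟨i0, hi0⟩ : ∃ i0, ∀ i, i ≠ i0 → a i < k := by
      by_cases hk : ∃ i, a i = k
      · obtain ⟨i0, h0⟩ := hk
        refine ⟨i0, fun i hi => ?_⟩
        have h1 := ha i
        have h2 : a i ≠ k := fun h => hi (hinj (h.trans h0.symm))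
        omega
      · push Not at hk
        exact ⟨0, fun i _ => by have := ha i; have := hk i; omega⟩
    unfold minr
    rw [Matrix.det_succ_row _ i0]
    refine Finset.sum_eq_zero fun l _ => ?_
    have := h (fun i => a (i0.succAbove i)) (fun i => b (l.succAbove i))
      (fun i => hi0 _ (Fin.succAbove_ne _ _)) (fun i => hb _)
    unfold minr at this
    have e : (Matrix.of fun k l => M (a k) (b l)).submatrix i0.succAbove l.succAbove =
        Matrix.of fun i j => M (a (i0.succAbove i)) (b (l.succAbove j)) := rfl
    rw [e, this, mul_zero]
  · rw [Function.Injective] at hinj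
    push Not at hinj
    obtain ⟨i, j, hij, hne⟩ := hinj
    refine Matrix.det_zero_of_row_eq hne ?_
    ext l
    simp [hij]

lemma Van.add_col {M : ℕ → ℕ → T} {k w r : ℕ} (h : Van M k w r) : Van M k (w + 1) (r + 1) :=
  h.swap.add_row.swap

lemma Van.succ {M : ℕ → ℕ → T} {k w r : ℕ} (h : Van M k w r) : Van M k w (r + 1) :=
  h.add_row.mono (Nat.le_succ _) le_rfl

lemma Van.le {M : ℕ → ℕ → T} {k w r r' : ℕ} (h : Van M k w r) (hr : r ≤ r') : Van M k w r' := by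
  induction hr with
  | refl => exact h
  | step _ ih => exact ih.succ

lemma Van.comb_row {M M' : ℕ → ℕ → T} {k w k' r : ℕ} (H : ℕ → ℕ → T) (h : Van M k' w r)
    (hM : ∀ a b, a < k → b < w → M' a b = ∑ a' ∈ Finset.range k', H a a' * M a' b) :
    Van M' k w r := by
  intro a b ha hb
  have e : minr M' a b = (Matrix.detRowAlternating : (Fin (r + 1) → T) [⋀^Fin (r + 1)]→ₗ[T] T)
      (fun i => ∑ a' ∈ Finset.range k', (H (a i) a' • fun l => M a' (b l))) := by
    unfold minr
    show Matrix.det _ = Matrix.det _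
    congr 1
    ext i l
    simp [hM _ _ (ha i) (hb l), Finset.sum_apply]
  rw [e]
  have := (Matrix.detRowAlternating : (Fin (r + 1) → T) [⋀^Fin (r + 1)]→ₗ[T] T).toMultilinearMap.map_sum_finset
    (fun i a' => (H (a i) a' • fun l => M a' (b l))) (fun _ => Finset.range k')
  refine this.trans ?_
  refine Finset.sum_eq_zero fun f hf => ?_
  rw [MultilinearMap.map_smul_univ]
  have h2 := h f b (fun i => by simpa using Fintype.mem_piFinset.1 hf i) hb
  have h3 : (Matrix.detRowAlternating : (Fin (r + 1) → T) [⋀^Fin (r + 1)]→ₗ[T] T).toMultilinearMap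
      (fun i l => M (f i) (b l)) = 0 := h2
  rw [h3, smul_zero]

lemma Van.comb_col {M M' : ℕ → ℕ → T} {k w w' r : ℕ} (H : ℕ → ℕ → T) (h : Van M k w' r)
    (hM : ∀ a b, a < k → b < w → M' a b = ∑ b' ∈ Finset.range w', H b b' * M a b') :
    Van M' k w r :=
  (h.swap.comb_row (M' := fun i j => M' j i) H fun a b ha hb => hM b a hb ha).swap

/-- the part of a bordered minor not involving the corner. -/
def bd (M : ℕ → ℕ → T) {t : ℕ} (i0 j : ℕ) (a b : Fin t → ℕ) : T :=
  Matrix.det (Matrix.of fun (i l : Fin (t + 1)) => if i = 0 ∧ l = 0 then 0 else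
    M ((Fin.cons i0 a : Fin (t + 1) → ℕ) i) ((Fin.cons j b : Fin (t + 1) → ℕ) l))

lemma minr_cons (M : ℕ → ℕ → T) {t : ℕ} (i0 j : ℕ) (a b : Fin t → ℕ) :
    minr M (Fin.cons i0 a : Fin (t + 1) → ℕ) (Fin.cons j b : Fin (t + 1) → ℕ) =
      M i0 j * minr M a b + bd M i0 j a b := by
  unfold minr bd
  rw [Matrix.det_succ_row_zero, Matrix.det_succ_row_zero, Fin.sum_univ_succ, Fin.sum_univ_succ]
  simp only [Matrix.of_apply, Fin.cons_zero, Fin.cons_succ, Fin.val_zero, pow_zero, one_mul,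
    and_self, if_true, mul_zero, zero_mul, zero_add]
  congr 1

lemma bd_map {T' : Type*} [CommRing T'] (h : T →+* T') (M : ℕ → ℕ → T) {t : ℕ} (i0 j : ℕ)
    (a b : Fin t → ℕ) : h (bd M i0 j a b) = bd (fun i j => h (M i j)) i0 j a b := by
  unfold bd
  rw [RingHom.map_det]
  congr 1
  ext i l
  simp [apply_ite h]

lemma bd_congr {M M' : ℕ → ℕ → T} {t : ℕ} {i0 j : ℕ} {a b : Fin t → ℕ}
    (h1 : ∀ i l, M (a i) (b l) = M' (a i) (b l)) (h2 : ∀ i, M (a i) j = M' (a i) j)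
    (h3 : ∀ l, M i0 (b l) = M' i0 (b l)) : bd M i0 j a b = bd M' i0 j a b := by
  unfold bd
  congr 1
  ext i l
  refine Fin.cases ?_ (fun i => ?_) i <;> refine Fin.cases ?_ (fun l => ?_) l <;>
    simp [h1, h2, h3, Fin.succ_ne_zero]

lemma bd_zero {M : ℕ → ℕ → T} {t : ℕ} {i0 j : ℕ} {a b : Fin t → ℕ}
    (h : ∀ i, M (a i) j = 0) : bd M i0 j a b = 0 := by
  unfold bd
  refine Matrix.det_eq_zero_of_column_eq_zero 0 fun i => ?_
  refine Fin.cases ?_ (fun i => ?_) i <;> simp [h]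

end tools

end SymDet

namespace SymDet

/-- the rank conditions of the state `(j,p,g)`. -/
def Sat {T : Type*} [CommRing T] (j p : ℕ) (g : ℕ → ℕ) (M : ℕ → ℕ → T) : Prop :=
  ∀ k, (k ≤ j → Van M k j (g k)) ∧ (k ≤ p → Van M k (j + 1) (g k))

/-- the correction coefficients. -/
def gam {T : Type*} [CommRing T] (i0 j : ℕ) (M : ℕ → ℕ → T) (a : ℕ) : T :=
  if a < i0 then M a j else 0

/-- the substitution. -/
def phi {T : Type*} [CommRing T] (i0 j : ℕ) (s : T) (M : ℕ → ℕ → T) (a b : ℕ) : T :=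
  if a < j ∧ b < j then
    (if i0 < j then M a b + s * (gam i0 j M a * M i0 b + gam i0 j M b * M a i0)
      + s ^ 2 * (gam i0 j M a * gam i0 j M b) * M i0 i0
     else M a b + s * (gam i0 j M a * gam i0 j M b))
  else M a b

/-- change the entries `(i0,j)` and `(j,i0)`. -/
def upd {T : Type*} (i0 j : ℕ) (x : T) (M : ℕ → ℕ → T) (a b : ℕ) : T :=
  if (a = i0 ∧ b = j) ∨ (a = j ∧ b = i0) then x else M a b

section

variable {T : Type*} [CommRing T]

lemma Van.triv (M : ℕ → ℕ → T) (k w : ℕ) : Van M k w k := by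
  induction k with
  | zero => intro a b ha _; exact absurd (ha 0) (by omega)
  | succ k ih => exact ih.add_row

lemma Van.add_two_cols {M M' : ℕ → ℕ → T} {k w r c d : ℕ} (x y : ℕ → T) (h : Van M k w r)
    (hc : c < w) (hd : d < w)
    (hM : ∀ a b, a < k → b < w → M' a b = M a b + x b * M a c + y b * M a d) :
    Van M' k w r := by
  refine h.comb_col (fun b b' => (if b' = b then 1 else 0) + (if b' = c then x b else 0) +
    (if b' = d then y b else 0)) fun a b ha hb => ?_
  rw [hM a b ha hb]
  simp [add_mul, Finset.sum_add_distrib, ite_mul, hb, hc, hd]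

lemma Van.cng {M M' : ℕ → ℕ → T} {k w r i : ℕ} (x : ℕ → T) (h : Van M k w r)
    (hc : i < w) (hd : i < k)
    (hM : ∀ a b, a < k → b < w → M' a b = M a b + x a * M i b + x b * M a i
      + x a * x b * M i i) :
    Van M' k w r := by
  have h1 : Van (fun a b => M a b + x b * M a i) k w r :=
    h.add_two_cols (M' := fun a b => M a b + x b * M a i) x 0 hc hc fun a b _ _ => by simp
  refine (h1.swap.add_two_cols (M' := fun a b => M' b a) x 0 hd hd fun a b ha hb => ?_).swap
  rw [hM b a hb ha]
  simp only [Pi.zero_apply]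
  ring

lemma upd_symm {i0 j : ℕ} {x : T} {M : ℕ → ℕ → T} (hM : ∀ a b, M a b = M b a) (a b : ℕ) :
    upd i0 j x M a b = upd i0 j x M b a := by
  unfold upd
  rw [hM a b]
  congr 1
  apply propext; tauto

lemma phi_symm {i0 j : ℕ} {s : T} {M : ℕ → ℕ → T} (hM : ∀ a b, M a b = M b a) (a b : ℕ) :
    phi i0 j s M a b = phi i0 j s M b a := by
  unfold phi
  rw [hM a b, hM i0 b, hM a i0]
  split_ifs <;> first | (exfalso; omega) | ring

lemma phi_zero {i0 j : ℕ} {M : ℕ → ℕ → T} : phi i0 j 0 M = M := by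
  ext a b
  simp [phi]

lemma phi_map {T' : Type*} [CommRing T'] (h : T →+* T') (i0 j : ℕ) (s : T) (M : ℕ → ℕ → T)
    (a b : ℕ) : h (phi i0 j s M a b) = phi i0 j (h s) (fun a b => h (M a b)) a b := by
  unfold phi gam
  split_ifs <;> simp

lemma gam_phi {i0 j : ℕ} (s : T) (M : ℕ → ℕ → T) (a : ℕ) :
    gam i0 j (phi i0 j s M) a = gam i0 j M a := by
  unfold gam
  simp [phi]

lemma phi_phi {i0 j : ℕ} (s : T) (M : ℕ → ℕ → T) :
    phi i0 j (-s) (phi i0 j s M) = M := by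
  ext a b
  have h0 : gam i0 j M i0 = 0 := by simp [gam]
  rw [phi]
  by_cases h1 : a < j ∧ b < j
  · rw [if_pos h1]
    obtain ⟨ha, hb⟩ := h1
    by_cases h2 : i0 < j
    · simp only [gam_phi]
      simp only [phi, h2, ha, hb, and_self, if_true, h0]
      ring
    · simp only [gam_phi]
      simp only [phi, h2, ha, hb, and_self, if_true, if_false]
      ring
  · rw [if_neg h1, phi, if_neg h1]

/-- active boxes -/
def act (j p a b : ℕ) : Prop := (a < j ∧ b < j) ∨ (b = j ∧ a < p) ∨ (a = j ∧ b < p)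

lemma act_symm {j p a b : ℕ} : act j p a b ↔ act j p b a := by
  unfold act; tauto

lemma phi_congr {i0 j : ℕ} (s : T) {M M' : ℕ → ℕ → T}
    (h : ∀ a b, act j i0 a b → M a b = M' a b) {a b : ℕ} (hab : act j i0 a b) :
    phi i0 j s M a b = phi i0 j s M' a b := by
  have hg : ∀ a, gam i0 j M a = gam i0 j M' a := fun a => by
    unfold gam
    split_ifs with h1
    · exact h _ _ (Or.inr (Or.inl ⟨rfl, h1⟩))
    · rfl
  unfold phi
  rw [hg, hg]
  split_ifs with h1 h2
  · rw [h a b hab, h i0 b (Or.inl ⟨h2, h1.2⟩), h a i0 (Or.inl ⟨h1.1, h2⟩),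
      h i0 i0 (Or.inl ⟨h2, h2⟩)]
  · rw [h a b hab]
  · rw [h a b hab]

/-- the numerical data of the main case. -/
structure Data (j i0 k q : ℕ) (g : ℕ → ℕ) : Prop where
  hi : i0 ≤ j
  hk : k < i0
  g0 : g 0 = 0
  mono : ∀ l, g l ≤ g (l + 1)
  step : ∀ l, g (l + 1) ≤ g l + 1
  gk : g k = q
  gr : ∀ l, k < l → l ≤ i0 + 1 → g l = q + 1

/-- the rank function of the colon state. -/
def gp (i0 k q : ℕ) (g : ℕ → ℕ) (l : ℕ) : ℕ := if l ≤ k then g l else if l ≤ i0 then q else g l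

lemma phi_col {j i0 : ℕ} (hij : i0 ≤ j) (s : T) {M : ℕ → ℕ → T}
     {k' r : ℕ} (hk' : k' ≤ i0) (h : Van M k' (j + 1) r) :
    Van (phi i0 j s M) k' (j + 1) r := by
  by_cases h2 : i0 < j
  · refine h.add_two_cols (c := i0) (d := j)
      (fun b => if b < j then s * gam i0 j M b else 0)
      (fun b => if b < j then s * M i0 b + s ^ 2 * gam i0 j M b * M i0 i0 else 0)
      (by omega) (by omega) fun a b ha hb => ?_
    have ga : gam i0 j M a = M a j := if_pos (by omega)
    by_cases hbj : b < j
    · rw [phi, if_pos ⟨by omega, hbj⟩, if_pos h2, if_pos hbj, if_pos hbj, ga]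
      ring
    · rw [phi, if_neg (by omega), if_neg hbj, if_neg hbj]
      ring
  · refine h.add_two_cols (c := j) (d := j)
      (fun b => if b < j then s * gam i0 j M b else 0) (fun _ => 0)
      (by omega) (by omega) fun a b ha hb => ?_
    have ga : gam i0 j M a = M a j := if_pos (by omega)
    by_cases hbj : b < j
    · rw [phi, if_pos ⟨by omega, hbj⟩, if_neg h2, if_pos hbj, ga]
      ring
    · rw [phi, if_neg (by omega), if_neg hbj]
      ring

lemma phi_cng {j i0 : ℕ} (s : T) {M : ℕ → ℕ → T}
     {k' r : ℕ} (hk' : i0 < k') (hkj : k' ≤ j) (h : Van M k' j r) :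
    Van (phi i0 j s M) k' j r := by
  refine h.cng (i := i0) (fun a => s * gam i0 j M a) (by omega) hk' fun a b ha hb => ?_
  rw [phi, if_pos ⟨by omega, hb⟩, if_pos (by omega)]
  ring

lemma upd_of_lt {i0 j a b : ℕ} (hij : i0 ≤ j) (x : T) (M : ℕ → ℕ → T)
    (h : (a < j ∧ b < j) ∨ a < i0 ∨ b < i0) : upd i0 j x M a b = M a b := by
  unfold upd
  rw [if_neg (by omega)]

lemma F1 {j i0 k q : ℕ} {g : ℕ → ℕ} (D : Data j i0 k q g) {M : ℕ → ℕ → T}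
    (hM : ∀ a b, M a b = M b a) {s x : T} (hs : s * x = 1) (h : Sat j k (gp i0 k q g) M) :
    Sat j (i0 + 1) g (upd i0 j x (phi i0 j s M)) := by
  have hij := D.hi
  have hk0 := D.hk
  have A : ∀ k', k' ≤ i0 → Van (upd i0 j x (phi i0 j s M)) k' (j + 1) (g k') := by
    intro k' hk'
    have : Van M k' (j + 1) (g k') := by
      by_cases hk : k' ≤ k
      · have := (h k').2 hk
        rwa [gp, if_pos hk] at this
      · have := (h k').1 (by omega)
        rw [gp, if_neg hk, if_pos hk'] at this
        rw [D.gr k' (by omega) (by omega)]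
        exact this.add_col
    refine (phi_col hij s hk' this).congr fun a b ha hb => ?_
    exact upd_of_lt hij _ _ (by omega)
  have B : Van (upd i0 j x (phi i0 j s M)) (i0 + 1) (j + 1) (g (i0 + 1)) := by
    rw [D.gr (i0 + 1) (by omega) le_rfl]
    set N : ℕ → ℕ → T := fun a b => if (a < i0 ∧ b = j) ∨ (a = j ∧ b < i0) then 0 else
      upd i0 j x M a b with hN
    have h1 : Van N i0 (j + 1) q := by
      have h0 := (h i0).1 hij
      rw [gp, if_neg (by omega), if_pos le_rfl] at h0
      refine h0.comb_col (fun b b' => if b = j then 0 else if b' = b then 1 else 0)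
        fun a b ha hb => ?_
      by_cases hb : b = j
      · simp [hN, hb, ha]
      · have hb' : b < j := by omega
        have : N a b = M a b := by
          simp only [hN]
          rw [if_neg (by omega), upd_of_lt hij _ _ (by omega)]
        simp [this, hb, hb']
    refine h1.add_row.cng (i := i0) (fun a => s * gam i0 j M a) (by omega) (by omega)
      fun a b ha hb => ?_
    have gi : gam i0 j M i0 = 0 := by simp [gam]
    have gj : gam i0 j M j = 0 := by simp [gam]; omega
    by_cases hbj : b = j
    · subst hbj
      rw [gj]
      by_cases hai : a = i0
      · subst hai
        rw [gi]
        simp only [hN]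
        rw [if_neg (by omega)]
        simp [upd]
      · have hai : a < i0 := by omega
        have e1 : N a b = 0 := by simp [hN, hai]
        have e2 : N i0 b = x := by
          simp only [hN]
          rw [if_neg (by omega)]
          simp [upd]
        rw [upd_of_lt hij _ _ (by omega), phi, if_neg (by omega), e1, e2]
        have : gam i0 b M a = M a b := if_pos hai
        rw [this]
        linear_combination (- M a b) * hs
    · have hbj : b < j := by omega
      by_cases h2 : i0 < j
      · have e : ∀ a b, a < j → b < j → N a b = M a b := fun a b ha hb => by
          simp only [hN]
          rw [if_neg (by omega), upd_of_lt hij _ _ (by omega)]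
        rw [upd_of_lt hij _ _ (by omega), phi, if_pos (by omega), if_pos h2, e a b (by omega) hbj,
          e i0 b h2 hbj, e a i0 (by omega) h2, e i0 i0 h2 h2]
        ring
      · obtain rfl : i0 = j := by omega
        by_cases ha' : a < i0
        · have e0 : N a b = M a b := by
            simp only [hN]
            rw [if_neg (by omega), upd_of_lt hij _ _ (by omega)]
          have e1 : N i0 b = 0 := by
            simp [hN, hbj]
          have e2 : N a i0 = 0 := by
            simp [hN, ha']
          have e3 : N i0 i0 = x := by
            simp only [hN]
            rw [if_neg (by omega)]
            simp [upd]
          rw [upd_of_lt hij _ _ (by omega), phi, if_pos (by omega), if_neg h2, e0, e1, e2, e3]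
          linear_combination (- s * gam i0 i0 M a * gam i0 i0 M b) * hs
        · obtain rfl : a = i0 := by omega
          have e1 : N a b = 0 := by
            simp [hN, hbj]
          have e3 : N a a = x := by
            simp only [hN]
            rw [if_neg (by omega)]
            simp [upd]
          rw [upd_of_lt hij _ _ (by omega), phi, if_neg (by omega), gi, e1, e3]
          have : gam a a M b = M b a := if_pos hbj
          rw [this, hM b a]
          linear_combination (- M a b) * hs
  intro k'
  constructor
  · intro hk
    by_cases hk' : k' ≤ i0
    · exact (A k' hk').mono le_rfl (by omega)
    · have h1 := (h k').1 hk
      rw [gp, if_neg (by omega), if_neg hk'] at h1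
      refine (phi_cng (i0 := i0) s (by omega) hk h1).congr fun a b ha hb => ?_
      exact upd_of_lt hij _ _ (by omega)
  · intro hk
    by_cases hk' : k' ≤ i0
    · exact A k' hk'
    · obtain rfl : k' = i0 + 1 := by omega
      exact B

lemma F2 {j i0 k q : ℕ} {g : ℕ → ℕ} (D : Data j i0 k q g) {M : ℕ → ℕ → T}
    (hM : ∀ a b, M a b = M b a) {s : T} (hs : s * M i0 j = 1) (h : Sat j (i0 + 1) g M) :
    Sat j k (gp i0 k q g) (phi i0 j (-s) M) := by
  have hij := D.hi
  have hk0 := D.hk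
  have A : ∀ k', k' ≤ k → Van (phi i0 j (-s) M) k' (j + 1) (gp i0 k q g k') := by
    intro k' hk
    rw [gp, if_pos hk]
    exact phi_col hij _ (by omega) ((h k').2 (by omega))
  have B : Van (phi i0 j (-s) M) i0 j q := by
    have h0 := (h (i0 + 1)).2 le_rfl
    rw [D.gr _ (by omega) le_rfl] at h0
    set N : ℕ → ℕ → T := fun a b => M a b + (-s * gam i0 j M a) * M i0 b +
      (-s * gam i0 j M b) * M a i0 + (-s * gam i0 j M a) * (-s * gam i0 j M b) * M i0 i0 with hN
    have h1 : Van N (i0 + 1) (j + 1) (q + 1) :=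
      h0.cng (i := i0) (fun a => -s * gam i0 j M a) (by omega) (by omega) fun a b _ _ => rfl
    have gi : gam i0 j M i0 = 0 := by simp [gam]
    have gj : gam i0 j M j = 0 := by simp [gam]; omega
    intro a b ha hb
    have h2 := h1 (Fin.cons i0 a) (Fin.cons j b)
      (fun i => by refine Fin.cases ?_ (fun i => ?_) i <;> simp; have := ha i; omega)
      (fun i => by refine Fin.cases ?_ (fun i => ?_) i <;> simp; have := hb i; omega)
    rw [minr_cons, bd_zero, add_zero] at h2
    · have h3 : N i0 j = M i0 j := by simp [hN, gi, gj]
      rw [h3] at h2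
      have h4 : minr N a b = 0 := by
        linear_combination s * h2 - minr N a b * hs
      rw [← h4]
      refine minr_congr fun i l => ?_
      have hai := ha i
      have hbl := hb l
      rw [phi, if_pos ⟨by omega, hbl⟩]
      split_ifs with h5
      · simp only [hN]; ring
      · obtain rfl : i0 = j := by omega
        have g1 : gam i0 i0 M (a i) = M (a i) i0 := if_pos hai
        have g2 : gam i0 i0 M (b l) = M (b l) i0 := if_pos hbl
        simp only [hN, g1, g2, hM i0 (b l)]
        linear_combination (-s * M (a i) i0 * M (b l) i0) * hs
    · intro i
      have g1 : gam i0 j M (a i) = M (a i) j := if_pos (ha i)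
      simp only [hN, gj, g1]
      linear_combination (- M (a i) j) * hs
  intro k'
  constructor
  · intro hk
    by_cases hk1 : k' ≤ k
    · exact (A k' hk1).mono le_rfl (by omega)
    · rw [gp, if_neg hk1]
      split_ifs with hk2
      · exact B.mono hk2 le_rfl
      · exact phi_cng _ (by omega) hk ((h k').1 hk)
  · intro hk
    exact A k' hk

lemma F3 {L : Type*} [Field L] {j i0 q : ℕ} {g : ℕ → ℕ} (hij : i0 ≤ j) (h1 : g i0 = q + 1)
    (h2 : g (i0 + 1) = q + 1) {M : ℕ → ℕ → L} (hM : ∀ a b, M a b = M b a) (h : Sat j i0 g M)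
    (e : Fin (q + 1) → ℕ) (he : ∀ i, e i < i0) (hne : minr M e e ≠ 0) :
    ∃ x, Sat j (i0 + 1) g (upd i0 j x M) ∧ x * minr M e e + bd M i0 j e e = 0 := by
  set A : Matrix (Fin (q + 1)) (Fin (q + 1)) L := Matrix.of fun k l => M (e k) (e l) with hA
  have hdet : IsUnit A.det := by
    rw [isUnit_iff_ne_zero]; exact hne
  set lam : Fin (q + 1) → L := A⁻¹.mulVec (fun m => M (e m) j) with hlam
  have hl : ∀ m, ∑ l, lam l * M (e m) (e l) = M (e m) j := by
    intro m
    have : A.mulVec lam = fun m => M (e m) j := by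
      rw [hlam, Matrix.mulVec_mulVec, Matrix.mul_nonsing_inv _ hdet, Matrix.one_mulVec]
    rw [← congrFun this m]
    simp [Matrix.mulVec, dotProduct, hA, mul_comm]
  have hc : ∀ a, a < i0 → M a j = ∑ l, lam l * M a (e l) := by
    intro a ha
    set N : ℕ → ℕ → L := fun a b => if b = j then M a j - ∑ l, lam l * M a (e l) else M a b with hN
    have hv : Van N i0 (j + 1) (q + 1) := by
      have := (h i0).2 le_rfl
      rw [h1] at this
      refine this.comb_col (fun b b' => (if b' = b then 1 else 0) -
        (if b = j then ∑ l, if b' = e l then lam l else 0 else 0)) fun a b ha hb => ?_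
      by_cases hb' : b = j
      · subst hb'
        simp only [hN, if_true, sub_mul, Finset.sum_sub_distrib, Finset.sum_mul]
        rw [Finset.sum_comm]
        congr 1
        · simp
        · refine Finset.sum_congr rfl fun l _ => ?_
          have := he l
          simp [ite_mul, show e l < b + 1 by omega]
      · simp [hN, hb', hb]
    have h3 := hv (Fin.cons a e) (Fin.cons j e)
      (fun i => by refine Fin.cases ?_ (fun i => ?_) i <;> simp [ha, he])
      (fun i => by refine Fin.cases ?_ (fun i => ?_) i <;> simp; have := he i; omega)
    rw [minr_cons, bd_zero, add_zero] at h3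
    · have h4 : minr N e e = minr M e e := minr_congr fun i l => by
        have := he l
        simp [hN, show e l ≠ j by omega]
      rw [h4] at h3
      have h5 := (mul_eq_zero.1 h3).resolve_right hne
      simp only [hN, if_true] at h5
      exact sub_eq_zero.1 h5
    · intro i
      simp [hN, hl]
  refine ⟨∑ l, lam l * M i0 (e l), ?_⟩
  set x := ∑ l, lam l * M i0 (e l) with hx
  have hV : Van (upd i0 j x M) (i0 + 1) (j + 1) (q + 1) := by
    have h0 : Van M (i0 + 1) j (q + 1) := by
      by_cases h3 : i0 < j
      · have := (h (i0 + 1)).1 h3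
        rwa [h2] at this
      · obtain rfl : i0 = j := by omega
        have := (h i0).2 le_rfl
        rw [h1] at this
        exact this.symm hM
    refine h0.comb_col (fun b b' => if b = j then ∑ l, if b' = e l then lam l else 0 else
      if b' = b then 1 else 0) fun a b ha hb => ?_
    by_cases hb' : b = j
    · subst hb'
      simp only [if_true, Finset.sum_mul]
      rw [Finset.sum_comm]
      have : ∀ l, (∑ b' ∈ Finset.range b, (if b' = e l then lam l else 0) * M a b') =
          lam l * M a (e l) := fun l => by
        have := he l
        simp [ite_mul, show e l < b by omega]
      simp only [this]
      by_cases hai : a = i0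
      · simp [upd, hai, hx]
      · rw [upd_of_lt hij _ _ (by omega), hc a (by omega)]
    · have : upd i0 j x M a b = M a b := by
        unfold upd; rw [if_neg (by omega)]
      have hb2 : b < j := by omega
      simp [this, hb', hb2]
  constructor
  · intro k
    constructor
    · intro hk
      exact ((h k).1 hk).congr fun a b ha hb => upd_of_lt hij _ _ (by omega)
    · intro hk
      by_cases hk' : k ≤ i0
      · exact ((h k).2 hk').congr fun a b ha hb => upd_of_lt hij _ _ (by omega)
      · obtain rfl : k = i0 + 1 := by omega
        rw [h2]; exact hV
  · have h3 := hV (Fin.cons i0 e) (Fin.cons j e)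
      (fun i => by refine Fin.cases ?_ (fun i => ?_) i <;> simp; have := he i; omega)
      (fun i => by refine Fin.cases ?_ (fun i => ?_) i <;> simp; have := he i; omega)
    rw [minr_cons] at h3
    rw [← h3]
    congr 1
    · congr 1
      · simp [upd]
      · exact minr_congr fun i l => (upd_of_lt hij _ _ (by have := he i; omega)).symm
    · exact bd_congr (fun i l => (upd_of_lt hij _ _ (by have := he i; omega)).symm)
        (fun i => (upd_of_lt hij _ _ (by have := he i; omega)).symm)
        (fun i => (upd_of_lt hij _ _ (by have := he i; omega)).symm)

lemma exists_jump {g : ℕ → ℕ} (g0 : g 0 = 0) (step : ∀ l, g (l + 1) ≤ g l + 1) :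
    ∀ i l, l < g i → ∃ a, a < i ∧ g a = l ∧ g (a + 1) = l + 1 := by
  intro i
  induction i with
  | zero => intro l hl; omega
  | succ i ih =>
    intro l hl
    by_cases h : l < g i
    · obtain ⟨a, ha, h1⟩ := ih l h
      exact ⟨a, by omega, h1⟩
    · have := step i
      exact ⟨i, by omega, by omega, by omega⟩

lemma point {j i0 q : ℕ} {g : ℕ → ℕ} (hij : i0 ≤ j) (g0 : g 0 = 0)
    (mono : ∀ l, g l ≤ g (l + 1)) (step : ∀ l, g (l + 1) ≤ g l + 1)
    (h1 : g i0 = q + 1) (h2 : g (i0 + 1) = q + 1) :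
    ∃ e : Fin (q + 1) → ℕ, (∀ i, e i < i0) ∧ ∃ P : ℕ → ℕ → T, (∀ a b, P a b = P b a) ∧
      Sat j (i0 + 1) g P ∧ P i0 j = 1 ∧ minr P e e = 1 := by
  have hmono : Monotone g := monotone_nat_of_le_succ mono
  choose e he1 he2 he3 using fun l : Fin (q + 1) => exists_jump g0 step i0 l (by omega)
  set Y : ℕ → ℕ → T := fun a m => if (a < i0 ∧ g (a + 1) = g a + 1 ∧ g a = m) ∨
    (a = i0 ∧ m = q) ∨ (a = j ∧ m = q) then 1 else 0 with hY
  refine ⟨e, he1, fun a b => ∑ m ∈ Finset.range (q + 1), Y a m * Y b m, ?_, ?_, ?_, ?_⟩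
  · intro a b
    exact Finset.sum_congr rfl fun m _ => mul_comm _ _
  · have key : ∀ k w, (k ≤ j ∨ k ≤ i0 + 1) →
        Van (fun a b => ∑ m ∈ Finset.range (q + 1), Y a m * Y b m) k w (g k) := by
      intro k w hk
      refine (Van.triv (fun m b => Y b m) (g k) w).comb_row Y fun a b ha hb => ?_
      have e1 : ∀ m, q + 1 ≤ m → Y a m = 0 := by
        intro m hm
        simp only [hY]
        rw [if_neg]
        rintro (⟨h3, h4, h5⟩ | ⟨h3, h4⟩ | ⟨h3, h4⟩)
        · have := hmono (show a + 1 ≤ i0 by omega)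
          omega
        · omega
        · omega
      have e2 : ∀ m, g k ≤ m → Y a m = 0 := by
        intro m hm
        simp only [hY]
        rw [if_neg]
        rintro (⟨h3, h4, h5⟩ | ⟨h3, h4⟩ | ⟨h3, h4⟩)
        · have := hmono (show a + 1 ≤ k by omega)
          omega
        · have := hmono (show i0 + 1 ≤ k by omega)
          omega
        · have := hmono (show i0 + 1 ≤ k by omega)
          omega
      rcases le_total (g k) (q + 1) with h3 | h3
      · refine (Finset.sum_subset (Finset.range_mono h3) fun m _ hm => ?_).symm
        rw [e2 m (by simpa using hm), zero_mul]
      · refine Finset.sum_subset (Finset.range_mono h3) fun m _ hm => ?_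
        rw [e1 m (by simpa using hm), zero_mul]
    exact fun k => ⟨fun hk => key k j (Or.inl hk), fun hk => key k (j + 1) (Or.inr hk)⟩
  · have a1 : ∀ m, Y i0 m = if m = q then 1 else 0 := fun m => by
      simp only [hY]
      congr 1
      apply propext
      constructor
      · omega
      · intro h; simp [h]
    have a2 : ∀ m, Y j m = if m = q then 1 else 0 := fun m => by
      simp only [hY]
      congr 1
      apply propext
      constructor
      · omega
      · intro h; simp [h]
    simp [a1, a2]
  · have a1 : ∀ l m, Y (e l) m = if (l : ℕ) = m then 1 else 0 := fun l m => by
      simp only [hY]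
      have := he1 l
      have := he2 l
      have := he3 l
      congr 1
      apply propext
      constructor
      · omega
      · omega
    unfold minr
    have : (Matrix.of fun k l => ∑ m ∈ Finset.range (q + 1), Y (e k) m * Y (e l) m) = 
        (1 : Matrix (Fin (q + 1)) (Fin (q + 1)) T) := by
      ext k l
      simp only [Matrix.of_apply, a1, ite_mul, one_mul, zero_mul]
      rw [Finset.sum_ite_eq, if_pos (by simpa using k.2), Matrix.one_apply]
      congr 1
      apply propext
      rw [Fin.ext_iff]
      exact eq_comm
    rw [this, Matrix.det_one]

end
end SymDet

namespace SymDet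
open Polynomial

section normal
variable {F : Type*} [Field F]

lemma integral_mem_val {B : Subring F} {V : ValuationSubring F} (h : B ≤ V.toSubring) {y : F}
    (hy : IsIntegral B y) : y ∈ V := by
  obtain ⟨p, hp, h0⟩ := hy
  have h1 : IsIntegral V y := by
    refine ⟨p.map (Subring.inclusion h), hp.map _, ?_⟩
    rw [eval₂_map]
    exact h0
  obtain ⟨z, hz⟩ := (isIntegrallyClosed_iff F).1 (inferInstance : IsIntegrallyClosed V) h1
  rw [← hz]
  exact z.2

lemma clear_denoms {Es B : Subring F} {s : F} (hs : s ∈ Es)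
    (hB : ∀ b ∈ B, ∃ m : ℕ, s ^ m * b ∈ Es) {y : F} (hy : IsIntegral B y) :
    ∃ m : ℕ, IsIntegral Es (s ^ m * y) := by
  obtain ⟨p, hp, h0⟩ := hy
  have hB' : ∀ b ∈ B, ∃ m : ℕ, ∀ m' ≥ m, s ^ m' * b ∈ Es := fun b hb => by
    obtain ⟨m, hm⟩ := hB b hb
    refine ⟨m, fun m' hm' => ?_⟩
    obtain ⟨c, rfl⟩ := Nat.exists_eq_add_of_le' hm'
    rw [pow_add, mul_assoc]
    exact Es.mul_mem (Es.pow_mem hs _) hm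
  choose! m hm using hB'
  set n := ∑ i ∈ p.support, m (p.coeff i : F) with hn
  have hcoef : ∀ i, ∀ n' ≥ n, s ^ n' * (p.coeff i : F) ∈ Es := by
    intro i n' hn'
    by_cases hi : i ∈ p.support
    · refine hm _ (p.coeff i).2 _ (le_trans ?_ hn')
      exact Finset.single_le_sum (f := fun i => m (p.coeff i : F)) (fun _ _ => Nat.zero_le _) hi
    · rw [notMem_support_iff.1 hi]
      simp
  set P : F[X] := p.map B.subtype with hP
  have hPm : P.Monic := hp.map _
  have hP0 : P.eval y = 0 := by
    rw [hP, eval_map]; exact h0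
  refine ⟨n, ?_⟩
  set Q := scaleRoots P (s ^ n) with hQ
  have hQm : Q.Monic := (monic_scaleRoots_iff _).2 hPm
  have hQ0 : Q.eval (s ^ n * y) = 0 := by
    rw [hQ, scaleRoots_eval_mul, hP0, mul_zero]
  have hl : Q ∈ lifts Es.subtype := by
    rw [lifts_iff_coeff_lifts]
    intro i
    simp only [Subring.coe_subtype, Subtype.range_coe_subtype, Set.mem_setOf_eq]
    rw [hQ, coeff_scaleRoots]
    rcases lt_trichotomy i P.natDegree with h | h | h
    · rw [← pow_mul, mul_comm, hP, coeff_map]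
      refine hcoef i _ ?_
      exact Nat.le_mul_of_pos_right _ (by rw [← hP]; omega)
    · subst h
      rw [hPm.coeff_natDegree]
      simp
    · rw [coeff_eq_zero_of_natDegree_lt h, zero_mul]
      exact Es.zero_mem
  obtain ⟨q, hq1, -, hq2⟩ := lifts_and_natDegree_eq_and_monic hl hQm
  refine ⟨q, hq2, ?_⟩
  rw [← hQ0, ← hq1, eval_map]
  rfl

lemma normal_aux {A Es B : Subring F} {s : F} (hs0 : s ≠ 0)
    (hA : ∀ y : F, IsIntegral A y → y ∈ A) (hEs : ∀ y : F, IsIntegral Es y → y ∈ Es)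
    (hs : s ∈ Es) (hAB : A ≤ B) (hxB : s⁻¹ ∈ B)
    (h2 : ∀ e ∈ Es, ∃ a ∈ A, ∃ e' ∈ Es, e = a + s * e')
    (h3 : ∀ V : Subring F, A ≤ V → s ∈ V → Es ≤ V)
    (h4 : ∀ V : Subring F, A ≤ V → s⁻¹ ∈ V → B ≤ V)
    (hB : ∀ b ∈ B, ∃ m : ℕ, s ^ m * b ∈ Es) :
    ∀ y : F, IsIntegral B y → y ∈ B := by
  have key : ∀ m : ℕ, ∀ y : F, IsIntegral B y → s ^ m * y ∈ Es → y ∈ B := by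
    intro m
    induction m with
    | zero =>
      intro y hy he
      rw [pow_zero, one_mul] at he
      apply hAB
      by_contra hyA
      haveI : IsIntegrallyClosedIn A F := by
        rw [isIntegrallyClosedIn_iff]
        exact ⟨Subtype.val_injective, fun {x} hx => ⟨⟨x, hA x hx⟩, rfl⟩⟩
      obtain ⟨V, hV1, hV2⟩ := Subring.exists_le_valuationSubring_of_isIntegrallyClosedIn hyA
      rcases V.mem_or_inv_mem s with h | h
      · exact hV2 (h3 V.toSubring hV1 h he)
      · exact hV2 (integral_mem_val (h4 V.toSubring hV1 h) hy)
    | succ m ih =>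
      intro y hy he
      obtain ⟨a, ha, e', he', heq⟩ := h2 _ he
      have hmem : a * (s⁻¹) ^ (m + 1) ∈ B := B.mul_mem (hAB ha) (B.pow_mem hxB _)
      have h5 : y - a * (s⁻¹) ^ (m + 1) ∈ B := by
        refine ih _ (hy.sub ?_) ?_
        · exact (isIntegral_algebraMap (R := B) (A := F) (x := ⟨_, hmem⟩))
        · have : s ^ m * (y - a * (s⁻¹) ^ (m + 1)) = e' := by
            have h6 : s * (s ^ m * (y - a * (s⁻¹) ^ (m + 1))) = s * e' := by
              have : s ^ (m + 1) * (s⁻¹) ^ (m + 1) = 1 := by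
                rw [← mul_pow, mul_inv_cancel₀ hs0, one_pow]
              rw [pow_succ] at heq this
              linear_combination heq - a * this
            exact mul_left_cancel₀ hs0 h6
          rwa [this]
      have := B.add_mem h5 hmem
      rwa [sub_add_cancel] at this
  intro y hy
  obtain ⟨m, hm⟩ := clear_denoms hs hB hy
  exact key m y hy (hEs _ hm)

end normal
end SymDet

namespace SymDet
open Polynomial

section abstractmain

variable {S0 : Type*} [CommRing S0]

lemma ker_aux {C0 : Ideal S0} {I : Ideal S0[X]} {F : Type*} [Field F]
    (φ : S0 →+* (S0 ⧸ C0)[X]) (ι : (S0 ⧸ C0)[X] →+* F) (hι : Function.Injective ι)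
    (x : F) (hx : x * ι X = 1)
    (hmod : ∀ f, (φ f).coeff 0 = Ideal.Quotient.mk C0 f)
    (hI : ∀ f ∈ I, eval₂ (ι.comp φ) x f = 0)
    (hC : ∀ c ∈ C0, ∃ r, X * C c + C r ∈ I)
    (hker : ∀ f, φ f = 0 → C f ∈ I) :
    ∀ (d : ℕ) (f : S0[X]), f.natDegree ≤ d → eval₂ (ι.comp φ) x f = 0 → f ∈ I := by
  intro d
  induction d with
  | zero =>
    intro f hf h0
    obtain ⟨c, rfl⟩ : ∃ c, f = C c := ⟨_, eq_C_of_natDegree_le_zero hf⟩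
    rw [eval₂_C] at h0
    exact hker c (hι (by rw [map_zero]; exact h0))
  | succ d ih =>
    intro f hf h0
    have h1 : ∑ i ∈ Finset.range (d + 2), φ (f.coeff i) * X ^ (d + 1 - i) = 0 := by
      apply hι
      rw [map_zero, map_sum]
      rw [eval₂_eq_sum_range' _ (lt_of_le_of_lt hf (Nat.lt_succ_self _))] at h0
      have h2 := congrArg (fun z => z * ι X ^ (d + 1)) h0
      simp only [zero_mul, Finset.sum_mul] at h2
      rw [← h2]
      refine Finset.sum_congr rfl fun i hi => ?_
      have hi' : i ≤ d + 1 := by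
        have := Finset.mem_range.1 hi; omega
      rw [map_mul, map_pow]
      have : ι X ^ (d + 1) = ι X ^ i * ι X ^ (d + 1 - i) := by
        rw [← pow_add]; congr 1; omega
      have h3 : x ^ i * ι X ^ i = 1 := by rw [← mul_pow, hx, one_pow]
      rw [this, RingHom.comp_apply]
      linear_combination (- ι (φ (f.coeff i)) * ι X ^ (d + 1 - i)) * h3
    have h2 : f.coeff (d + 1) ∈ C0 := by
      have h3 := congrArg (fun p => coeff p 0) h1
      simp only [finsetSum_coeff, coeff_zero] at h3
      rw [Finset.sum_range_succ, Finset.sum_eq_zero, zero_add] at h3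
      · simp only [Nat.sub_self, pow_zero, mul_one, hmod] at h3
        exact Ideal.Quotient.eq_zero_iff_mem.1 h3
      · intro i hi
        have := Finset.mem_range.1 hi
        rw [mul_coeff_zero, coeff_X_pow, if_neg (by omega), mul_zero]
    obtain ⟨r, hr⟩ := hC _ h2
    have h4 : X ^ d * (X * C (f.coeff (d + 1)) + C r) ∈ I := I.mul_mem_left _ hr
    have h5 : f - X ^ d * (X * C (f.coeff (d + 1)) + C r) ∈ I := by
      apply ih
      · rw [natDegree_le_iff_coeff_eq_zero]
        intro N hN
        have e : X ^ d * (X * C (f.coeff (d + 1)) + C r) =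
          C (f.coeff (d + 1)) * X ^ (d + 1) + C r * X ^ d := by ring
        rw [e, coeff_sub, coeff_add, coeff_C_mul_X_pow, coeff_C_mul_X_pow,
          if_neg (show ¬ N = d by omega), add_zero]
        by_cases hN' : N = d + 1
        · rw [if_pos hN', hN', sub_self]
        · rw [if_neg hN', sub_zero]
          exact coeff_eq_zero_of_natDegree_lt (by omega)
      · rw [eval₂_sub, h0, hI _ h4, sub_zero]
    have := I.add_mem h5 h4
    rwa [sub_add_cancel] at this

theorem abstract_main (N0 C0 : Ideal S0) (I : Ideal S0[X])
    (F : Type*) [Field F] [Algebra (S0 ⧸ C0)[X] F] [IsFractionRing (S0 ⧸ C0)[X] F]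
    (hE1 : IsDomain (S0 ⧸ C0)) (hE2 : IsIntegrallyClosed (S0 ⧸ C0))
    (hA1 : IsDomain (S0 ⧸ N0)) (hA2 : IsIntegrallyClosed (S0 ⧸ N0))
    (φ : S0 →+* (S0 ⧸ C0)[X])
    (hmod : ∀ f, (φ f).coeff 0 = Ideal.Quotient.mk C0 f)
    (hI : ∀ f ∈ I, eval₂ ((algebraMap (S0 ⧸ C0)[X] F).comp φ)
      (algebraMap (S0 ⧸ C0)[X] F X)⁻¹ f = 0)
    (hN : ∀ f ∈ N0, C f ∈ I)
    (hC : ∀ c ∈ C0, ∃ r, X * C c + C r ∈ I)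
    (hker : ∀ f, φ f = 0 → f ∈ N0)
    (hne : ∃ c ∈ C0, c ∉ N0)
    (h3 : ∀ e : S0 ⧸ C0, ∃ u : S0[X], C e = eval₂ φ X u) :
    IsDomain (S0[X] ⧸ I) ∧ IsIntegrallyClosed (S0[X] ⧸ I) := by
  set ι : (S0 ⧸ C0)[X] →+* F := algebraMap _ F with hι
  have hιi : Function.Injective ι := IsFractionRing.injective _ _
  set s : F := ι X with hs
  have hs0 : s ≠ 0 := by
    rw [hs, Ne, map_eq_zero_iff ι hιi]; exact X_ne_zero
  set α : S0 →+* F := ι.comp φ with hα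
  set ψ : S0[X] →+* F := eval₂RingHom α s⁻¹ with hψ
  have hψX : ψ X = s⁻¹ := by simp [hψ]
  have hψC : ∀ f, ψ (C f) = α f := fun f => by simp [hψ]
  have hkerψ : RingHom.ker ψ = I := by
    ext f
    rw [RingHom.mem_ker]
    constructor
    · intro h
      exact ker_aux φ ι hιi s⁻¹ (inv_mul_cancel₀ hs0) hmod hI hC (fun f hf => hN f (hker f hf))
        f.natDegree f le_rfl h
    · exact hI f
  have hkerα : RingHom.ker α = N0 := by
    ext f
    rw [RingHom.mem_ker]
    constructor
    · intro h
      exact hker f (hιi (by rw [map_zero]; exact h))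
    · intro h
      rw [← hψC]
      exact hI _ (hN f h)
  let eB : (S0[X] ⧸ I) ≃+* ψ.range :=
    (Ideal.quotEquivOfEq hkerψ.symm).trans ψ.quotientKerEquivRange
  let eA : (S0 ⧸ N0) ≃+* α.range :=
    (Ideal.quotEquivOfEq hkerα.symm).trans α.quotientKerEquivRange
  let eE : (S0 ⧸ C0)[X] ≃+* ι.range :=
    RingEquiv.ofBijective ι.rangeRestrict ⟨fun a b h => hιi (congrArg Subtype.val h), ι.rangeRestrict_surjective⟩
  refine ⟨eB.toMulEquiv.isDomain _, ?_⟩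
  have hsE : s ∈ ι.range := ⟨X, rfl⟩
  have hEsV : ∀ V : Subring F, α.range ≤ V → s ∈ V → ι.range ≤ V := by
    rintro V hV hsV _ ⟨p, rfl⟩
    induction p using Polynomial.induction_on' with
    | add p q hp hq => rw [map_add]; exact V.add_mem hp hq
    | monomial n e =>
      rw [← C_mul_X_pow_eq_monomial, map_mul, map_pow]
      refine V.mul_mem ?_ (V.pow_mem hsV _)
      obtain ⟨u, hu⟩ := h3 e
      rw [hu, hom_eval₂, eval₂_eq_sum_range]
      exact V.sum_mem fun i _ => V.mul_mem (hV ⟨_, rfl⟩) (V.pow_mem hsV _)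
  have hψV : ∀ V : Subring F, α.range ≤ V → s⁻¹ ∈ V → ψ.range ≤ V := by
    rintro V hV hsV _ ⟨p, rfl⟩
    show eval₂ α s⁻¹ p ∈ V
    rw [eval₂_eq_sum_range]
    exact V.sum_mem fun i _ => V.mul_mem (hV ⟨_, rfl⟩) (V.pow_mem hsV _)
  have hAψ : α.range ≤ ψ.range := by
    rintro _ ⟨f, rfl⟩
    exact ⟨C f, hψC f⟩
  have hxψ : s⁻¹ ∈ ψ.range := ⟨X, hψX⟩
  have hAE : α.range ≤ ι.range := by
    rintro _ ⟨f, rfl⟩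
    exact ⟨φ f, rfl⟩
  -- `Frac A = F`
  let Afrac : Subfield F := Subfield.closure (α.range : Set F)
  have hfracA : ∀ z : F, z ∈ Afrac := by
    have hAl : α.range ≤ Afrac.toSubring := fun z hz => Subfield.subset_closure hz
    obtain ⟨c, hc, hcN⟩ := hne
    obtain ⟨r, hr⟩ := hC c hc
    have h1 := hI _ hr
    have h2 : s⁻¹ * α c + α r = 0 := by
      have : ψ (X * C c + C r) = 0 := h1
      rwa [map_add, map_mul, hψX, hψC, hψC] at this
    have hc0 : α c ≠ 0 := fun h => hcN (by rw [← hkerα]; exact h)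
    have hsx : s⁻¹ ∈ Afrac := by
      have : s⁻¹ = - α r / α c :=
        eq_div_of_mul_eq hc0 (by linear_combination h2)
      rw [this]
      exact Afrac.div_mem (Afrac.neg_mem (hAl ⟨r, rfl⟩)) (hAl ⟨c, rfl⟩)
    have hsA : s ∈ Afrac := by
      have := Afrac.inv_mem hsx
      rwa [inv_inv] at this
    have hE : ι.range ≤ Afrac.toSubring := hEsV _ hAl hsA
    intro z
    obtain ⟨a, b, hb, rfl⟩ := IsFractionRing.div_surjective (A := (S0 ⧸ C0)[X]) z
    exact Afrac.div_mem (hE ⟨a, rfl⟩) (hE ⟨b, rfl⟩)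
  have fracOf : ∀ R : Subring F, α.range ≤ R → IsFractionRing R F := by
    intro R hR
    have : FaithfulSMul R F :=
      (faithfulSMul_iff_algebraMap_injective R F).2 Subtype.val_injective
    apply IsFractionRing.of_field
    intro z
    obtain ⟨a, ha, b, hb, rfl⟩ := Subfield.mem_closure_iff.1 (hfracA z)
    have hle : Subring.closure (α.range : Set F) ≤ R := by
      rw [Subring.closure_le]; exact hR
    exact ⟨⟨a, hle ha⟩, ⟨b, hle hb⟩, rfl⟩
  have icl : ∀ R : Subring F, α.range ≤ R → IsIntegrallyClosed R → 
      ∀ y : F, IsIntegral R y → y ∈ R := by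
    intro R hR h y hy
    have := fracOf R hR
    obtain ⟨z, hz⟩ := (isIntegrallyClosed_iff F).1 h hy
    rw [← hz]; exact z.2
  have hB := normal_aux (A := α.range) (Es := ι.range) (B := ψ.range) hs0
    (icl _ le_rfl (IsIntegrallyClosed.of_equiv eA)) (icl _ hAE (IsIntegrallyClosed.of_equiv eE))
    hsE hAψ hxψ (by
      rintro _ ⟨p, rfl⟩
      obtain ⟨f, hf⟩ := Ideal.Quotient.mk_surjective (p.coeff 0)
      have h1 : X ∣ p - φ f := by
        rw [X_dvd_iff, coeff_sub, hmod, hf, sub_self]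
      obtain ⟨w, hw⟩ := h1
      refine ⟨α f, ⟨f, rfl⟩, ι w, ⟨w, rfl⟩, ?_⟩
      rw [hs, ← map_mul, ← hw, map_sub, hα, RingHom.comp_apply]
      ring) hEsV hψV (by
      rintro _ ⟨p, rfl⟩
      refine ⟨p.natDegree, ?_⟩
      show s ^ p.natDegree * eval₂ α s⁻¹ p ∈ ι.range
      rw [eval₂_eq_sum_range, Finset.mul_sum]
      refine Subring.sum_mem _ fun i hi => ?_
      have : i ≤ p.natDegree := by
        have := Finset.mem_range.1 hi; omega
      have e : s ^ p.natDegree * (α (p.coeff i) * s⁻¹ ^ i) = α (p.coeff i) * s ^ (p.natDegree - i) := by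
        have e1 : s ^ p.natDegree = s ^ (p.natDegree - i) * s ^ i := by
          rw [← pow_add]; congr 1; omega
        have e2 : s ^ i * s⁻¹ ^ i = 1 := by rw [← mul_pow, mul_inv_cancel₀ hs0, one_pow]
        rw [e1]
        linear_combination (α (p.coeff i) * s ^ (p.natDegree - i)) * e2
      rw [e]
      exact Subring.mul_mem _ (hAE ⟨_, rfl⟩) (Subring.pow_mem _ hsE _))
  have := fracOf ψ.range hAψ
  have hBn : IsIntegrallyClosed ψ.range := 
    (isIntegrallyClosed_iff F).2 fun {y} hy => ⟨⟨y, hB y hy⟩, rfl⟩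
  exact IsIntegrallyClosed.of_equiv eB.symm

end abstractmain
end SymDet

namespace SymDet
open scoped Polynomial

section ideals
variable {T : Type*} [CommRing T]

/-- the ideal of the state. -/
def stI (j p : ℕ) (g : ℕ → ℕ) (M : ℕ → ℕ → T) : Ideal T :=
  Ideal.span {f | ∃ k w, ((k ≤ j ∧ w = j) ∨ (k ≤ p ∧ w = j + 1)) ∧
    ∃ a b : Fin (g k + 1) → ℕ, (∀ i, a i < k) ∧ (∀ i, b i < w) ∧ f = minr M a b}

lemma stI_le_ker {T' : Type*} [CommRing T'] (h : T →+* T') {j p : ℕ} {g : ℕ → ℕ}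
    {M : ℕ → ℕ → T} : stI j p g M ≤ RingHom.ker h ↔ Sat j p g (fun a b => h (M a b)) := by
  unfold stI
  rw [Ideal.span_le]
  constructor
  · intro H k
    constructor
    · intro hk a b ha hb
      rw [← minr_map]
      exact H ⟨k, j, Or.inl ⟨hk, rfl⟩, a, b, ha, hb, rfl⟩
    · intro hk a b ha hb
      rw [← minr_map]
      exact H ⟨k, j + 1, Or.inr ⟨hk, rfl⟩, a, b, ha, hb, rfl⟩
  · rintro H f ⟨k, w, hkw, a, b, ha, hb, rfl⟩
    show h _ = 0
    rw [minr_map]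
    rcases hkw with ⟨hk, rfl⟩ | ⟨hk, rfl⟩
    · exact (H k).1 hk a b ha hb
    · exact (H k).2 hk a b ha hb

lemma stI_le {J : Ideal T} {j p : ℕ} {g : ℕ → ℕ} {M : ℕ → ℕ → T} :
    stI j p g M ≤ J ↔ Sat j p g (fun a b => Ideal.Quotient.mk J (M a b)) := by
  rw [← stI_le_ker, Ideal.mk_ker]

lemma Sat.map {T' : Type*} [CommRing T'] (h : T →+* T') {j p : ℕ} {g : ℕ → ℕ}
    {M : ℕ → ℕ → T} (H : Sat j p g M) : Sat j p g (fun a b => h (M a b)) := by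
  intro k
  refine ⟨fun hk a b ha hb => ?_, fun hk a b ha hb => ?_⟩
  · rw [← minr_map, (H k).1 hk a b ha hb, map_zero]
  · rw [← minr_map, (H k).2 hk a b ha hb, map_zero]

lemma Sat.anti {j p p' : ℕ} {g : ℕ → ℕ} {M : ℕ → ℕ → T} (H : Sat j p g M) (hp : p' ≤ p) :
    Sat j p' g M := fun k => ⟨(H k).1, fun hk => (H k).2 (hk.trans hp)⟩

lemma Sat.congr {j p : ℕ} {g : ℕ → ℕ} {M M' : ℕ → ℕ → T} (hp : p ≤ j + 1) (H : Sat j p g M)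
    (h : ∀ a b, act j p a b → M' a b = M a b) : Sat j p g M' := by
  intro k
  refine ⟨fun hk => ((H k).1 hk).congr fun a b ha hb => h a b ?_,
    fun hk => ((H k).2 hk).congr fun a b ha hb => ?_⟩
  · unfold act; omega
  · by_cases hb' : b < j
    · apply h; unfold act; omega
    · apply h; unfold act; omega

end ideals

section gen
variable {K : Type*} [Field K]

/-- `M` is generic on the active boxes. -/
structure Gen {σ : Type} (j p : ℕ) (M : ℕ → ℕ → MvPolynomial σ K) : Prop where
  symm : ∀ a b, M a b = M b a
  var : ∀ a b, act j p a b → ∃ i, M a b = MvPolynomial.X i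
  inj : ∀ a b c d, act j p a b → act j p c d → M a b = M c d → s(a, b) = s(c, d)

lemma Gen.hom {σ : Type} {j p : ℕ} {M : ℕ → ℕ → MvPolynomial σ K} (G : Gen j p M)
    {T : Type*} [CommRing T] (c : K →+* T) (Q : ℕ → ℕ → T) (hQ : ∀ a b, Q a b = Q b a)
    (d : σ → T) : ∃ h : MvPolynomial σ K →+* T, (∀ x, h (MvPolynomial.C x) = c x) ∧
      (∀ a b, act j p a b → h (M a b) = Q a b) ∧
      ∀ i, (∀ a b, act j p a b → M a b ≠ MvPolynomial.X i) → h (MvPolynomial.X i) = d i := by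
  classical
  let v : σ → T := fun i =>
    if h : ∃ ab : ℕ × ℕ, act j p ab.1 ab.2 ∧ M ab.1 ab.2 = MvPolynomial.X i
    then Q h.choose.1 h.choose.2 else d i
  refine ⟨MvPolynomial.eval₂Hom c v, fun x => by simp, fun a b hab => ?_, fun i hi => ?_⟩
  · obtain ⟨i, hi⟩ := G.var a b hab
    rw [hi, MvPolynomial.eval₂Hom_X']
    have hex : ∃ ab : ℕ × ℕ, act j p ab.1 ab.2 ∧ M ab.1 ab.2 = MvPolynomial.X i :=
      ⟨(a, b), hab, hi⟩
    simp only [v]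
    rw [dif_pos hex]
    have h1 := hex.choose_spec
    have h2 := G.inj _ _ _ _ h1.1 hab (h1.2.trans hi.symm)
    rw [Sym2.eq_iff] at h2
    rcases h2 with ⟨e1, e2⟩ | ⟨e1, e2⟩
    · rw [e1, e2]
    · rw [e1, e2, hQ]
  · rw [MvPolynomial.eval₂Hom_X']
    simp only [v]
    rw [dif_neg]
    rintro ⟨ab, h1, h2⟩
    exact hi _ _ h1 h2

lemma act_mono {j p p' a b : ℕ} (hp : p ≤ p') (h : act j p a b) : act j p' a b := by
  unfold act at *; omega

theorem main_step {τ : Type} {j i0 k q : ℕ} {g : ℕ → ℕ} (D : Data j i0 k q g)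
    {M0 : ℕ → ℕ → MvPolynomial τ K} (G : Gen j i0 M0)
    (hA1 : IsDomain (MvPolynomial τ K ⧸ stI j i0 g M0))
    (hA2 : IsIntegrallyClosed (MvPolynomial τ K ⧸ stI j i0 g M0))
    (hE1 : IsDomain (MvPolynomial τ K ⧸ stI j k (gp i0 k q g) M0))
    (hE2 : IsIntegrallyClosed (MvPolynomial τ K ⧸ stI j k (gp i0 k q g) M0)) :
    IsDomain ((MvPolynomial τ K)[X] ⧸
      stI j (i0 + 1) g (upd i0 j Polynomial.X fun a b => Polynomial.C (M0 a b))) ∧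
    IsIntegrallyClosed ((MvPolynomial τ K)[X] ⧸
      stI j (i0 + 1) g (upd i0 j Polynomial.X fun a b => Polynomial.C (M0 a b))) := by
  have hij := D.hi
  have hk0 := D.hk
  have hgi : g i0 = q + 1 := D.gr i0 hk0 (by omega)
  have hgi1 : g (i0 + 1) = q + 1 := D.gr (i0 + 1) (by omega) le_rfl
  set N0 : Ideal (MvPolynomial τ K) := stI j i0 g M0 with hN0
  set C0 : Ideal (MvPolynomial τ K) := stI j k (gp i0 k q g) M0 with hC0
  set M' : ℕ → ℕ → (MvPolynomial τ K)[X] := upd i0 j Polynomial.X fun a b => Polynomial.C (M0 a b) with hM'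
  set I : Ideal (MvPolynomial τ K)[X] := stI j (i0 + 1) g M' with hI
  have hact : ∀ a b, act j i0 a b → ¬ ((a = i0 ∧ b = j) ∨ (a = j ∧ b = i0)) := by
    intro a b h; unfold act at h; omega
  have hact' : ∀ a b, act j (i0 + 1) a b → ¬ ((a = i0 ∧ b = j) ∨ (a = j ∧ b = i0)) →
      act j i0 a b := by
    intro a b h; unfold act at *; omega
  have hM'act : ∀ a b, act j i0 a b → M' a b = Polynomial.C (M0 a b) := fun a b h => by
    rw [hM', upd, if_neg (hact a b h)]
  -- the quotient arrays
  have satI : Sat j (i0 + 1) g (fun a b => Ideal.Quotient.mk I (M' a b)) := stI_le.1 le_rfl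
  have satC : Sat j k (gp i0 k q g) (fun a b => Ideal.Quotient.mk C0 (M0 a b)) := stI_le.1 le_rfl
  have satN : Sat j i0 g (fun a b => Ideal.Quotient.mk N0 (M0 a b)) := stI_le.1 le_rfl
  have hNI : ∀ f ∈ N0, (Polynomial.C f : (MvPolynomial τ K)[X]) ∈ I := by
    have h1 : N0 ≤ RingHom.ker ((Ideal.Quotient.mk I).comp (Polynomial.C : (MvPolynomial τ K) →+* (MvPolynomial τ K)[X])) := by
      rw [hN0, stI_le_ker]
      refine (satI.anti (Nat.le_succ i0)).congr (by omega) fun a b h => ?_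
      rw [hM'act a b h]; rfl
    intro f hf
    exact Ideal.Quotient.eq_zero_iff_mem.1 (h1 hf)
  -- the point
  obtain ⟨e, he, P, hPs, hPsat, hP1, hPe⟩ := point (T := K) hij D.g0 D.mono D.step hgi hgi1
  obtain ⟨ev, -, hev, -⟩ := G.hom (RingHom.id K) P hPs (fun _ => 0)
  have hevN : N0 ≤ RingHom.ker ev := by
    rw [hN0, stI_le_ker]
    exact (hPsat.anti (Nat.le_succ i0)).congr (by omega) hev
  have hacte : ∀ i l, act j i0 (e i) (e l) := fun i l => Or.inl
    ⟨(he i).trans_le hij, (he l).trans_le hij⟩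
  have hactj : ∀ i, act j i0 (e i) j := fun i => Or.inr (Or.inl ⟨rfl, he i⟩)
  have hc : minr M0 e e ∉ N0 := by
    intro h
    have h1 : ev (minr M0 e e) = 0 := hevN h
    rw [minr_map, minr_congr (M' := P) fun i l => hev _ _ (hacte i l), hPe] at h1
    exact one_ne_zero h1
  have hacti : ∀ i, act j i0 i0 (e i) := fun i => by
    have := he i
    unfold act; omega
  have hbd : bd M0 i0 j e e ∉ N0 := by
    intro h
    have h1 : ev (bd M0 i0 j e e) = 0 := hevN h
    rw [bd_map, bd_congr (M' := P) (fun i l => hev _ _ (hacte i l)) (fun i => hev _ _ (hactj i))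
      (fun i => hev _ _ (hacti i))] at h1
    have h2 := (hPsat (i0 + 1)).2 le_rfl
    rw [hgi1] at h2
    have h3 := h2 (Fin.cons i0 e) (Fin.cons j e)
      (fun i => by refine Fin.cases ?_ (fun i => ?_) i <;> simp; have := he i; omega)
      (fun i => by refine Fin.cases ?_ (fun i => ?_) i <;> simp; have := he i; omega)
    rw [minr_cons, h1, hP1, hPe] at h3
    simp at h3
  -- the substitution
  set mkC : (MvPolynomial τ K) →+* ((MvPolynomial τ K) ⧸ C0) := Ideal.Quotient.mk C0 with hmkC
  set Cm : (MvPolynomial τ K) →+* ((MvPolynomial τ K) ⧸ C0)[X] := Polynomial.C.comp mkC with hCm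
  have hQs : ∀ a b, phi i0 j Polynomial.X (fun a b => Cm (M0 a b)) a b =
      phi i0 j Polynomial.X (fun a b => Cm (M0 a b)) b a :=
    phi_symm fun a b => by rw [G.symm a b]
  obtain ⟨φ, hφC, hφM, hφX⟩ := G.hom (Cm.comp MvPolynomial.C)
    (phi i0 j Polynomial.X (fun a b => Cm (M0 a b))) hQs (fun i => Cm (MvPolynomial.X i))
  have hcase : ∀ i : τ, (∃ a b, act j i0 a b ∧ M0 a b = MvPolynomial.X i) ∨
      (∀ a b, act j i0 a b → M0 a b ≠ MvPolynomial.X i) := by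
    intro i
    by_cases h : ∃ a b, act j i0 a b ∧ M0 a b = MvPolynomial.X i
    · exact Or.inl h
    · push Not at h
      exact Or.inr h
  have hmod : ∀ f, (φ f).coeff 0 = mkC f := by
    have h1 : (Polynomial.constantCoeff.comp φ) = mkC := by
      refine MvPolynomial.ringHom_ext (fun x => ?_) fun i => ?_
      · rw [RingHom.comp_apply, hφC]
        simp [hCm]
      · rw [RingHom.comp_apply]
        rcases hcase i with ⟨a, b, hab, hi⟩ | hi
        · rw [← hi, hφM a b hab, phi_map]
          simp [hCm, phi_zero]
        · rw [hφX i hi]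
          simp [hCm]
    intro f
    exact congrArg (fun h => h f) h1
  refine abstract_main N0 C0 I (FractionRing ((MvPolynomial τ K) ⧸ C0)[X]) hE1 hE2 hA1 hA2 φ hmod ?_ hNI ?_ ?_
    ⟨minr M0 e e, ?_, hc⟩ ?_
  · -- `I` is killed
    generalize hι : algebraMap ((MvPolynomial τ K) ⧸ C0)[X] (FractionRing ((MvPolynomial τ K) ⧸ C0)[X]) = ι
    have hX0 : ι Polynomial.X ≠ 0 := by
      rw [← hι]
      rw [Ne, map_eq_zero_iff _ (IsFractionRing.injective _ _)]
      exact Polynomial.X_ne_zero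
    have h1 : I ≤ RingHom.ker (Polynomial.eval₂RingHom (ι.comp φ) (ι Polynomial.X)⁻¹) := by
      rw [hI, stI_le_ker]
      have h2 := F1 (s := ι Polynomial.X) (x := (ι Polynomial.X)⁻¹) D
        (M := fun a b => ι (Polynomial.C (mkC (M0 a b))))
        (fun a b => by rw [G.symm a b]) (mul_inv_cancel₀ hX0)
        (satC.map (ι.comp Polynomial.C))
      refine h2.congr (by omega) fun a b hab => ?_
      by_cases hab' : (a = i0 ∧ b = j) ∨ (a = j ∧ b = i0)
      · rw [upd, if_pos hab', hM', upd, if_pos hab']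
        simp
      · have h3 := hact' a b hab hab'
        rw [upd, if_neg hab', hM'act a b h3]
        rw [Polynomial.coe_eval₂RingHom, Polynomial.eval₂_C, RingHom.comp_apply, hφM a b h3,
          phi_map]
        rfl
    intro f hf
    exact h1 hf
  · -- the colon ideal
    let J : Ideal (MvPolynomial τ K) :=
      { carrier := {c | ∃ r, Polynomial.X * Polynomial.C c + Polynomial.C r ∈ I}
        add_mem' := by
          rintro c c' ⟨r, hr⟩ ⟨r', hr'⟩
          refine ⟨r + r', ?_⟩
          have := I.add_mem hr hr'
          rw [Polynomial.C_add, Polynomial.C_add]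
          convert this using 1
          ring
        zero_mem' := ⟨0, by simp⟩
        smul_mem' := by
          rintro x c ⟨r, hr⟩
          refine ⟨x * r, ?_⟩
          have := I.mul_mem_left (Polynomial.C x) hr
          rw [smul_eq_mul, Polynomial.C_mul, Polynomial.C_mul]
          convert this using 1
          ring }
    have hNJ : N0 ≤ J := fun f hf => ⟨0, by
      rw [Polynomial.C_0, add_zero]
      exact I.mul_mem_left _ (hNI f hf)⟩
    have satJ : Sat j i0 g (fun a b => Ideal.Quotient.mk J (M0 a b)) := stI_le.1 hNJ
    have hCJ : C0 ≤ J := by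
      rw [hC0, stI_le]
      have B : Van (fun a b => Ideal.Quotient.mk J (M0 a b)) i0 j q := by
        intro a b ha hb
        have h1 := (satI (i0 + 1)).2 le_rfl
        rw [hgi1] at h1
        have h3 := h1 (Fin.cons i0 a) (Fin.cons j b)
          (fun i => by refine Fin.cases ?_ (fun i => ?_) i <;> simp; have := ha i; omega)
          (fun i => by refine Fin.cases ?_ (fun i => ?_) i <;> simp; have := hb i; omega)
        rw [← minr_map, Ideal.Quotient.eq_zero_iff_mem, minr_cons] at h3
        rw [← minr_map, Ideal.Quotient.eq_zero_iff_mem]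
        refine ⟨bd M0 i0 j a b, ?_⟩
        have e1 : M' i0 j = Polynomial.X := by simp [hM', upd]
        have e2 : minr M' a b = Polynomial.C (minr M0 a b) := by
          rw [minr_map]
          refine minr_congr fun i l => hM'act _ _ (Or.inl ⟨(ha i).trans_le hij, hb l⟩)
        have e3 : bd M' i0 j a b = Polynomial.C (bd M0 i0 j a b) := by
          rw [bd_map]
          refine bd_congr (fun i l => hM'act _ _ (Or.inl ⟨(ha i).trans_le hij, hb l⟩))
            (fun i => hM'act _ _ (Or.inr (Or.inl ⟨rfl, ha i⟩))) (fun l => hM'act _ _ ?_)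
          have := hb l
          unfold act; omega
        rwa [e1, e2, e3] at h3
      intro k'
      constructor
      · intro hk'
        by_cases h1 : k' ≤ k
        · rw [gp, if_pos h1]; exact (satJ k').1 hk'
        · rw [gp, if_neg h1]
          split_ifs with h2
          · exact B.mono h2 le_rfl
          · exact (satJ k').1 hk'
      · intro hk'
        rw [gp, if_pos hk']
        exact (satJ k').2 (by omega)
    exact fun c hc => hCJ hc
  · -- the kernel of the substitution
    obtain ⟨L, _, β, hβ⟩ : ∃ (L : Type _) (_ : Field L) (β : (MvPolynomial τ K) →+* L), ∀ f, β f = 0 ↔ f ∈ N0 := by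
      refine ⟨FractionRing ((MvPolynomial τ K) ⧸ N0), inferInstance,
        (algebraMap ((MvPolynomial τ K) ⧸ N0) (FractionRing ((MvPolynomial τ K) ⧸ N0))).comp (Ideal.Quotient.mk N0), fun f => ?_⟩
      rw [RingHom.comp_apply, map_eq_zero_iff _ (IsFractionRing.injective _ _),
        Ideal.Quotient.eq_zero_iff_mem]
    have satL : Sat j i0 g (fun a b => β (M0 a b)) := by
      rw [← stI_le_ker]
      intro f hf
      exact (hβ f).2 hf
    obtain ⟨x, hx1, hx2⟩ := F3 hij hgi hgi1 (M := fun a b => β (M0 a b))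
      (fun a b => by rw [G.symm a b]) satL e he (by rw [← minr_map, Ne, hβ]; exact hc)
    have hx0 : x ≠ 0 := by
      rintro rfl
      rw [zero_mul, zero_add, ← bd_map, hβ] at hx2
      exact hbd hx2
    set U := upd i0 j x (fun a b => β (M0 a b)) with hU
    have hUs : ∀ a b, U a b = U b a := upd_symm fun a b => by rw [G.symm a b]
    have hUa : ∀ a b, act j i0 a b → U a b = β (M0 a b) := fun a b h => by
      rw [hU, upd, if_neg (hact a b h)]
    have h2 := F2 (s := x⁻¹) D hUs (by rw [hU]; simp [upd, hx0]) hx1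
    obtain ⟨θ, hθC, hθM, hθX⟩ := G.hom (β.comp MvPolynomial.C) (phi i0 j (-x⁻¹) U)
      (phi_symm hUs) (fun i => β (MvPolynomial.X i))
    have hθ : C0 ≤ RingHom.ker θ := by
      rw [hC0, stI_le_ker]
      exact h2.congr (by omega) fun a b hab => hθM a b (act_mono hk0.le hab)
    let θ' : ((MvPolynomial τ K) ⧸ C0) →+* L := Ideal.Quotient.lift C0 θ fun f hf => hθ hf
    have hθ' : ∀ f, θ' (mkC f) = θ f := fun f => Ideal.Quotient.lift_mk _ _ _
    let Θ : ((MvPolynomial τ K) ⧸ C0)[X] →+* L := Polynomial.eval₂RingHom θ' x⁻¹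
    have hΘX : Θ Polynomial.X = x⁻¹ := by simp [Θ]
    have hΘC : ∀ f, Θ (Cm f) = θ f := fun f => by simp [Θ, hCm, hθ']
    have hΘφ : Θ.comp φ = β := by
      refine MvPolynomial.ringHom_ext (fun y => ?_) fun i => ?_
      · rw [RingHom.comp_apply, hφC, RingHom.comp_apply, hΘC, hθC]
        rfl
      · rw [RingHom.comp_apply]
        rcases hcase i with ⟨a, b, hab, hi⟩ | hi
        · rw [← hi, hφM a b hab, phi_map, hΘX]
          simp only [hΘC]
          rw [phi_congr _ (fun a b h => hθM a b h) hab, ← hUa a b hab]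
          have := phi_phi (i0 := i0) (j := j) (-x⁻¹) U
          rw [neg_neg] at this
          rw [this]
        · rw [hφX i hi, hΘC, hθX i hi]
    intro f hf
    rw [← hβ, ← hΘφ, RingHom.comp_apply, hf, map_zero]
  · -- the minor lies in the colon ideal
    have h1 := (satC i0).1 hij
    rw [gp, if_neg (by omega), if_pos le_rfl] at h1
    have h2 := h1 e e he fun i => (he i).trans_le hij
    rwa [← minr_map, Ideal.Quotient.eq_zero_iff_mem] at h2
  · -- generation
    intro y
    obtain ⟨f, rfl⟩ := Ideal.Quotient.mk_surjective y
    have key : ∀ f : (MvPolynomial τ K), Cm f ∈ (Polynomial.eval₂RingHom φ Polynomial.X).range := by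
      intro f
      induction f using MvPolynomial.induction_on with
      | C x =>
        exact ⟨Polynomial.C (MvPolynomial.C x), by simp [hφC]⟩
      | add p q hp hq => rw [map_add]; exact Subring.add_mem _ hp hq
      | mul_X p i hp =>
        rw [map_mul]
        refine Subring.mul_mem _ hp ?_
        rcases hcase i with ⟨a, b, hab, hi⟩ | hi
        · refine ⟨phi i0 j (-Polynomial.X) (fun a b => Polynomial.C (M0 a b)) a b, ?_⟩
          rw [phi_map]
          rw [phi_congr (M' := phi i0 j Polynomial.X (fun a b => Cm (M0 a b))) _ ?_ hab]
          · rw [map_neg, Polynomial.coe_eval₂RingHom, Polynomial.eval₂_X, phi_phi, hi]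
          · intro a b h
            rw [Polynomial.coe_eval₂RingHom, Polynomial.eval₂_C, hφM a b h]
        · exact ⟨Polynomial.C (MvPolynomial.X i), by simp [hφX i hi]⟩
    obtain ⟨u, hu⟩ := key f
    exact ⟨u, hu.symm⟩

end gen
end SymDet

namespace SymDet
open scoped Polynomial

section claim

/-- normal domains -/
def ND (R : Type*) [CommRing R] : Prop := IsDomain R ∧ IsIntegrallyClosed R

lemma ND.of_equiv {R R' : Type*} [CommRing R] [CommRing R'] (h : ND R) (e : R ≃+* R') : ND R' := by
  obtain ⟨h1, h2⟩ := h
  have : IsDomain R' := e.symm.toMulEquiv.isDomain _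
  exact ⟨this, IsIntegrallyClosed.of_equiv e⟩

lemma stI_map {T T' : Type*} [CommRing T] [CommRing T'] (h : T →+* T') {j p : ℕ} {g : ℕ → ℕ}
    {M : ℕ → ℕ → T} : (stI j p g M).map h = stI j p g (fun a b => h (M a b)) := by
  apply le_antisymm
  · rw [Ideal.map_le_iff_le_comap]
    have h1 : stI j p g M ≤ RingHom.ker
        ((Ideal.Quotient.mk (stI j p g (fun a b => h (M a b)))).comp h) := by
      rw [stI_le_ker]
      exact stI_le.1 le_rfl
    intro f hf
    exact Ideal.mem_comap.2 (Ideal.Quotient.eq_zero_iff_mem.1 (h1 hf))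
  · rw [stI_le]
    refine (stI_le_ker ((Ideal.Quotient.mk ((stI j p g M).map h)).comp h)).1 fun f hf => ?_
    exact Ideal.Quotient.eq_zero_iff_mem.2 (Ideal.mem_map_of_mem h hf)

lemma stI_eq {T : Type*} [CommRing T] {j p j' p' : ℕ} {g g' : ℕ → ℕ}
    {M M' : ℕ → ℕ → T}
    (h : ∀ J : Ideal T, Sat j p g (fun a b => Ideal.Quotient.mk J (M a b)) ↔
      Sat j' p' g' (fun a b => Ideal.Quotient.mk J (M' a b))) : stI j p g M = stI j' p' g' M' := by
  apply le_antisymm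
  · rw [stI_le, h]; exact stI_le.1 le_rfl
  · rw [stI_le, ← h]; exact stI_le.1 le_rfl

lemma stI_congr {T : Type*} [CommRing T] {j p : ℕ} {g : ℕ → ℕ} (hp : p ≤ j + 1)
    {M M' : ℕ → ℕ → T} (h : ∀ a b, act j p a b → M a b = M' a b) :
    stI j p g M = stI j p g M' :=
  stI_eq fun J => ⟨fun H => H.congr hp fun a b hab => by rw [h a b hab],
    fun H => H.congr hp fun a b hab => by rw [h a b hab]⟩

variable {K : Type*} [Field K]

lemma exists_split {σ : Type} (v : σ) :
    ∃ E : MvPolynomial σ K ≃+* (MvPolynomial {b : σ // b ≠ v} K)[X],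
      E (MvPolynomial.X v) = Polynomial.X ∧
      ∀ i (hi : i ≠ v), E (MvPolynomial.X i) = Polynomial.C (MvPolynomial.X ⟨i, hi⟩) := by
  classical
  refine ⟨((MvPolynomial.renameEquiv K (Equiv.optionSubtypeNe v).symm).trans
    (MvPolynomial.optionEquivLeft K {b : σ // b ≠ v})).toRingEquiv, ?_, fun i hi => ?_⟩
  · show MvPolynomial.optionEquivLeft K {b : σ // b ≠ v}
      (MvPolynomial.renameEquiv K (Equiv.optionSubtypeNe v).symm (MvPolynomial.X v)) = _
    rw [MvPolynomial.renameEquiv_apply, MvPolynomial.rename_X]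
    have : (Equiv.optionSubtypeNe v).symm v = none := by simp
    rw [this, MvPolynomial.optionEquivLeft_X_none]
  · show MvPolynomial.optionEquivLeft K {b : σ // b ≠ v}
      (MvPolynomial.renameEquiv K (Equiv.optionSubtypeNe v).symm (MvPolynomial.X i)) = _
    rw [MvPolynomial.renameEquiv_apply, MvPolynomial.rename_X]
    have : (Equiv.optionSubtypeNe v).symm i = some ⟨i, hi⟩ := by
      rw [Equiv.symm_apply_eq]; simp
    rw [this, MvPolynomial.optionEquivLeft_X_some]

lemma Van_zero {T : Type*} [CommRing T] {M : ℕ → ℕ → T} {k w : ℕ} :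
    Van M k w 0 ↔ ∀ a b, a < k → b < w → M a b = 0 := by
  constructor
  · intro h a b ha hb
    have := h (fun _ => a) (fun _ => b) (fun _ => ha) (fun _ => hb)
    simpa [minr] using this
  · intro h a b ha hb
    simpa [minr] using h _ _ (ha 0) (hb 0)

lemma Gen.anti {σ : Type} {j p j' p' : ℕ} {M : ℕ → ℕ → MvPolynomial σ K} (G : Gen j p M)
    (h : ∀ a b, act j' p' a b → act j p a b) : Gen j' p' M :=
  ⟨G.symm, fun a b hab => G.var a b (h a b hab),
    fun a b c d h1 h2 => G.inj a b c d (h a b h1) (h c d h2)⟩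

lemma zero_step {S0 : Type*} [CommRing S0] {j i0 : ℕ} {g : ℕ → ℕ} (hij : i0 ≤ j)
    (hg : g i0 = 0) (hg1 : g (i0 + 1) = 0) {M0 : ℕ → ℕ → S0} (hM : ∀ a b, M0 a b = M0 b a)
    (h : ND (S0 ⧸ stI j i0 g M0)) :
    ND (S0[X] ⧸ stI j (i0 + 1) g (upd i0 j Polynomial.X fun a b => Polynomial.C (M0 a b))) := by
  set N0 := stI j i0 g M0 with hN0
  set M' : ℕ → ℕ → S0[X] := upd i0 j Polynomial.X fun a b => Polynomial.C (M0 a b) with hM'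
  set I := stI j (i0 + 1) g M' with hI
  have satI : Sat j (i0 + 1) g (fun a b => Ideal.Quotient.mk I (M' a b)) := stI_le.1 le_rfl
  have satN : Sat j i0 g (fun a b => Ideal.Quotient.mk N0 (M0 a b)) := stI_le.1 le_rfl
  have hact : ∀ a b, act j i0 a b → ¬ ((a = i0 ∧ b = j) ∨ (a = j ∧ b = i0)) := by
    intro a b h; unfold act at h; omega
  have hNI : ∀ f ∈ N0, (Polynomial.C f : S0[X]) ∈ I := by
    have h1 : N0 ≤ RingHom.ker ((Ideal.Quotient.mk I).comp (Polynomial.C : S0 →+* S0[X])) := by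
      rw [hN0, stI_le_ker]
      refine (satI.anti (Nat.le_succ i0)).congr (by omega) fun a b h => ?_
      rw [hM', upd, if_neg (hact a b h)]; rfl
    intro f hf
    exact Ideal.Quotient.eq_zero_iff_mem.1 (h1 hf)
  let h0 : S0[X] →+* (S0 ⧸ N0) := (Ideal.Quotient.mk N0).comp Polynomial.constantCoeff
  have hsurj : Function.Surjective h0 := by
    intro y
    obtain ⟨f, rfl⟩ := Ideal.Quotient.mk_surjective y
    exact ⟨Polynomial.C f, by simp [h0]⟩
  have hker : RingHom.ker h0 = I := by
    apply le_antisymm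
    · intro f hf
      have h1 : f.coeff 0 ∈ N0 := by
        rw [RingHom.mem_ker] at hf
        exact Ideal.Quotient.eq_zero_iff_mem.1 hf
      have hX : Polynomial.X ∈ I := by
        have h2 := (satI (i0 + 1)).2 le_rfl
        rw [hg1, Van_zero] at h2
        have h3 := h2 i0 j (by omega) (by omega)
        rw [Ideal.Quotient.eq_zero_iff_mem] at h3
        simpa [hM', upd] using h3
      rw [← Polynomial.X_mul_divX_add f]
      exact I.add_mem (I.mul_mem_right _ hX) (hNI _ h1)
    · rw [hI, stI_le_ker]
      have e : (fun a b => h0 (M' a b)) = upd i0 j 0 (fun a b => Ideal.Quotient.mk N0 (M0 a b)) := by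
        ext a b
        simp only [hM', upd, h0]
        split_ifs <;> simp
      rw [e]
      intro k
      constructor
      · intro hk
        exact ((satN k).1 hk).congr fun a b ha hb => upd_of_lt hij _ _ (by omega)
      · intro hk
        by_cases hk' : k ≤ i0
        · exact ((satN k).2 hk').congr fun a b ha hb => upd_of_lt hij _ _ (by omega)
        · obtain rfl : k = i0 + 1 := by omega
          rw [hg1, Van_zero]
          intro a b ha hb
          unfold upd
          split_ifs with h1
          · rfl
          · have h2 := (satN i0).2 le_rfl
            rw [hg, Van_zero] at h2
            by_cases hai : a < i0
            · exact h2 a b hai hb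
            · obtain rfl : a = i0 := by omega
              by_cases hj : a < j
              · have h3 := (satN (a + 1)).1 hj
                rw [hg1, Van_zero] at h3
                exact h3 a b ha (by omega)
              · show Ideal.Quotient.mk N0 (M0 a b) = 0
                rw [hM]
                exact h2 b a (by omega) (by omega)
  exact h.of_equiv ((Ideal.quotEquivOfEq hker.symm).trans
    (RingHom.quotientKerEquivOfSurjective hsurj)).symm

lemma claim_step {j i0 : ℕ} (hij : i0 ≤ j)
    (ih : ∀ p, p < i0 + 1 → ∀ g : ℕ → ℕ, g 0 = 0 → (∀ l, g l ≤ g (l + 1)) →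
      (∀ l, g (l + 1) ≤ g l + 1) → ∀ (σ : Type) (M : ℕ → ℕ → MvPolynomial σ K), Gen j p M →
      ND (MvPolynomial σ K ⧸ stI j p g M))
    (g : ℕ → ℕ) (g0 : g 0 = 0) (mono : ∀ l, g l ≤ g (l + 1)) (step : ∀ l, g (l + 1) ≤ g l + 1)
    (σ : Type) (M : ℕ → ℕ → MvPolynomial σ K) (G : Gen j (i0 + 1) M) :
    ND (MvPolynomial σ K ⧸ stI j (i0 + 1) g M) := by
  by_cases hg : g (i0 + 1) = g i0 + 1
  · have h1 : stI j (i0 + 1) g M = stI j i0 g M := by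
      refine stI_eq fun J => ⟨fun H => H.anti (Nat.le_succ _), fun H k => ⟨(H k).1, fun hk => ?_⟩⟩
      by_cases hk' : k ≤ i0
      · exact (H k).2 hk'
      · obtain rfl : k = i0 + 1 := by omega
        rw [hg]
        exact ((H i0).2 le_rfl).add_row
    rw [h1]
    exact ih i0 (by omega) g g0 mono step σ M (G.anti fun a b h => act_mono (Nat.le_succ _) h)
  have hg' : g (i0 + 1) = g i0 := by have := mono i0; have := step i0; omega
  have hactij : act j (i0 + 1) i0 j := by unfold act; omega
  have hact : ∀ a b, act j i0 a b → ¬ ((a = i0 ∧ b = j) ∨ (a = j ∧ b = i0)) := by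
    intro a b h; unfold act at h; omega
  have hact' : ∀ a b, act j (i0 + 1) a b → ¬ ((a = i0 ∧ b = j) ∨ (a = j ∧ b = i0)) →
      act j i0 a b := by
    intro a b h; unfold act at *; omega
  obtain ⟨v, hv⟩ := G.var i0 j hactij
  obtain ⟨E, hEv, hE⟩ := exists_split (K := K) v
  let M0 : ℕ → ℕ → MvPolynomial {b : σ // b ≠ v} K := fun a b => (E (M a b)).coeff 0
  have hM0 : ∀ a b, act j i0 a b → ∃ i, M0 a b = MvPolynomial.X i ∧
      E (M a b) = Polynomial.C (M0 a b) := by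
    intro a b hab
    have hab' := act_mono (Nat.le_succ i0) hab
    obtain ⟨i, hi⟩ := G.var a b hab'
    have hne : i ≠ v := by
      rintro rfl
      have h1 := G.inj _ _ _ _ hab' hactij (hi.trans hv.symm)
      rw [Sym2.eq_iff] at h1
      exact hact a b hab h1
    have h2 : E (M a b) = Polynomial.C (MvPolynomial.X ⟨i, hne⟩) := by rw [hi, hE i hne]
    have h3 : M0 a b = MvPolynomial.X ⟨i, hne⟩ := by
      show (E (M a b)).coeff 0 = _
      rw [h2, Polynomial.coeff_C_zero]
    exact ⟨_, h3, by rw [h2, h3]⟩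
  have hsymm : ∀ a b, M0 a b = M0 b a := fun a b => by
    show (E (M a b)).coeff 0 = (E (M b a)).coeff 0
    rw [G.symm]
  have G0 : Gen j i0 M0 := by
    refine ⟨hsymm, fun a b hab => ?_, fun a b c d hab hcd h => ?_⟩
    · obtain ⟨i, hi, -⟩ := hM0 a b hab
      exact ⟨i, hi⟩
    · obtain ⟨-, -, h1⟩ := hM0 a b hab
      obtain ⟨-, -, h2⟩ := hM0 c d hcd
      refine G.inj a b c d (act_mono (Nat.le_succ i0) hab) (act_mono (Nat.le_succ i0) hcd) ?_
      apply E.injective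
      rw [h1, h2, h]
  have hmap : (stI j (i0 + 1) g M).map (E : MvPolynomial σ K →+* _) =
      stI j (i0 + 1) g (upd i0 j Polynomial.X fun a b => Polynomial.C (M0 a b)) := by
    rw [stI_map]
    refine stI_congr (by omega) fun a b hab => ?_
    unfold upd
    split_ifs with h1
    · have h2 : M a b = MvPolynomial.X v := by
        rcases h1 with ⟨rfl, rfl⟩ | ⟨rfl, rfl⟩
        · exact hv
        · rw [G.symm]; exact hv
      rw [h2]; exact hEv
    · obtain ⟨-, -, h2⟩ := hM0 a b (hact' a b hab h1)
      exact h2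
  suffices H : ND ((MvPolynomial {b : σ // b ≠ v} K)[X] ⧸
      stI j (i0 + 1) g (upd i0 j Polynomial.X fun a b => Polynomial.C (M0 a b))) from
    H.of_equiv (Ideal.quotientEquiv _ _ E hmap.symm).symm
  have hA := ih i0 (by omega) g g0 mono step _ M0 G0
  rcases Nat.eq_zero_or_pos (g i0) with h0 | hpos
  · exact zero_step hij h0 (by omega) hsymm hA
  obtain ⟨q, hq⟩ : ∃ q, g i0 = q + 1 := ⟨g i0 - 1, by omega⟩
  obtain ⟨k, hk, hgk, hgk1⟩ := exists_jump g0 step i0 q (by omega)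
  have hmono := monotone_nat_of_le_succ mono
  have D : Data j i0 k q g := ⟨hij, hk, g0, mono, step, hgk, fun l h1 h2 => by
    have h3 := hmono (show k + 1 ≤ l by omega)
    have h4 := hmono h2
    omega⟩
  have hgp0 : gp i0 k q g 0 = 0 := by
    unfold gp
    split_ifs <;> omega
  have hgpm : ∀ l, gp i0 k q g l ≤ gp i0 k q g (l + 1) := by
    intro l
    have h1 := mono l
    have h2 := D.gr (i0 + 1) (by omega) le_rfl
    have h3 : l = k → g l = q := fun h => by rw [h, hgk]
    have h4 : l = i0 → g (l + 1) = q + 1 := fun h => by rw [h, h2]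
    unfold gp
    split_ifs <;> omega
  have hgps : ∀ l, gp i0 k q g (l + 1) ≤ gp i0 k q g l + 1 := by
    intro l
    have h1 := step l
    have h2 := D.gr (i0 + 1) (by omega) le_rfl
    have h3 : l = k → g l = q := fun h => by rw [h, hgk]
    have h4 : l = i0 → g (l + 1) = q + 1 := fun h => by rw [h, h2]
    unfold gp
    split_ifs <;> omega
  have hC := ih k (by omega) (gp i0 k q g) hgp0 hgpm hgps _ M0
    (G0.anti fun a b h => act_mono hk.le h)
  exact main_step D G0 hA.1 hA.2 hC.1 hC.2

theorem claim (j : ℕ) : ∀ p, p ≤ j + 1 → ∀ g : ℕ → ℕ, g 0 = 0 → (∀ l, g l ≤ g (l + 1)) →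
    (∀ l, g (l + 1) ≤ g l + 1) → ∀ (σ : Type) (M : ℕ → ℕ → MvPolynomial σ K), Gen j p M →
    ND (MvPolynomial σ K ⧸ stI j p g M) := by
  induction j with
  | zero =>
    intro p
    induction p using Nat.strong_induction_on with
    | _ p ih =>
      intro hp
      cases p with
      | zero =>
        intro g g0 mono step σ M G
        have h1 : stI 0 0 g M = ⊥ := by
          rw [eq_bot_iff]
          refine stI_le.2 fun k => ⟨fun hk => ?_, fun hk => ?_⟩
          · obtain rfl : k = 0 := by omega
            rw [g0]; exact Van.triv _ _ _
          · obtain rfl : k = 0 := by omega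
            rw [g0]; exact Van.triv _ _ _
        rw [h1]
        exact ND.of_equiv (R := MvPolynomial σ K) ⟨inferInstance, inferInstance⟩
          (RingEquiv.quotientBot _).symm
      | succ i0 => exact claim_step (by omega) fun p hp' => ih p hp' (by omega)
  | succ j ihj =>
    intro p
    induction p using Nat.strong_induction_on with
    | _ p ih =>
      intro hp
      cases p with
      | zero =>
        intro g g0 mono step σ M G
        have h1 : stI (j + 1) 0 g M = stI j (j + 1) g M := by
          refine stI_eq fun J => ⟨fun H k => ⟨fun hk => ?_, fun hk => ?_⟩,
            fun H k => ⟨fun hk => ?_, fun hk => ?_⟩⟩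
          · exact ((H k).1 (by omega)).mono le_rfl (by omega)
          · exact (H k).1 hk
          · exact (H k).2 hk
          · obtain rfl : k = 0 := by omega
            rw [g0]; exact Van.triv _ _ _
        rw [h1]
        exact ihj _ le_rfl g g0 mono step σ M (G.anti fun a b h => by unfold act at *; omega)
      | succ i0 => exact claim_step (by omega) fun p hp' => ih p hp' (by omega)

end claim
end SymDet

namespace SymDet

section final
variable {K : Type*} [Field K]

/-- the generic symmetric matrix, extended by zero. -/
noncomputable def gM (K : Type*) [Field K] (n : ℕ) (a b : ℕ) : MvPolynomial (Sym2 (Fin n)) K :=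
  if h : a < n ∧ b < n then MvPolynomial.X s(⟨a, h.1⟩, ⟨b, h.2⟩) else 0

lemma gM_gen (n : ℕ) : Gen n 0 (gM K n) := by
  refine ⟨fun a b => ?_, fun a b h => ?_, fun a b c d h1 h2 h => ?_⟩
  · unfold gM
    by_cases h : a < n ∧ b < n
    · rw [dif_pos h, dif_pos h.symm, Sym2.eq_swap]
    · rw [dif_neg h, dif_neg fun h' => h h'.symm]
  · have h' : a < n ∧ b < n := by unfold act at h; omega
    exact ⟨_, by unfold gM; rw [dif_pos h']⟩
  · have h1' : a < n ∧ b < n := by unfold act at h1; omega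
    have h2' : c < n ∧ d < n := by unfold act at h2; omega
    unfold gM at h
    rw [dif_pos h1', dif_pos h2'] at h
    have h3 := MvPolynomial.X_injective h
    rw [Sym2.eq_iff] at h3 ⊢
    simpa [Fin.ext_iff] using h3

lemma gM_minr {n s : ℕ} (a b : Fin s → Fin n) :
    minr (gM K n) (fun i => (a i : ℕ)) (fun i => (b i : ℕ)) = symMinor K a b := by
  unfold minr symMinor
  congr 1
  ext1 i l
  show gM K n (a i) (b l) = MvPolynomial.X s(a i, b l)
  unfold gM
  rw [dif_pos ⟨(a i).2, (b l).2⟩]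

lemma symMinor_perm {n s : ℕ} (a b : Fin s → Fin n) (e f : Equiv.Perm (Fin s)) :
    symMinor K (a ∘ e) (b ∘ f) = Equiv.Perm.sign e * (Equiv.Perm.sign f * symMinor K a b) := by
  unfold symMinor
  rw [← Matrix.det_permute' f, ← Matrix.det_permute e]
  rfl

lemma sort_strict {n s : ℕ} {a : Fin s → Fin n} (h : Function.Injective a) :
    StrictMono (a ∘ Tuple.sort a) :=
  (Tuple.monotone_sort a).strictMono_of_injective (h.comp (Tuple.sort a).injective)

lemma symMinor_mem {n s : ℕ} (a b : Fin s → Fin n) : symMinor K a b ∈ minorsIdeal K n s := by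
  by_cases ha : Function.Injective a
  · by_cases hb : Function.Injective b
    · have h1 : symMinor K (a ∘ Tuple.sort a) (b ∘ Tuple.sort b) ∈ minorsIdeal K n s :=
        Ideal.subset_span ⟨_, _, sort_strict ha, sort_strict hb, rfl⟩
      have h2 := symMinor_perm (K := K) (a ∘ Tuple.sort a) (b ∘ Tuple.sort b)
        (Tuple.sort a)⁻¹ (Tuple.sort b)⁻¹
      have h3 : ∀ c : Fin s → Fin n, (c ∘ Tuple.sort c) ∘ ((Tuple.sort c)⁻¹ : Equiv.Perm (Fin s)) = c := by
        intro c; ext i; simp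
      rw [h3, h3] at h2
      rw [h2]
      exact Ideal.mul_mem_left _ _ (Ideal.mul_mem_left _ _ h1)
    · obtain ⟨i, l, hil, hne⟩ : ∃ i l, b i = b l ∧ i ≠ l := by
        simpa [Function.Injective] using hb
      have : symMinor K a b = 0 := Matrix.det_zero_of_column_eq hne fun m => by
        simp [hil]
      rw [this]; exact Ideal.zero_mem _
  · obtain ⟨i, l, hil, hne⟩ : ∃ i l, a i = a l ∧ i ≠ l := by
      simpa [Function.Injective] using ha
    have : symMinor K a b = 0 := Matrix.det_zero_of_row_eq hne (by
      ext m; simp [hil])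
    rw [this]; exact Ideal.zero_mem _

lemma stI_minors {n t : ℕ} (ht : t ≤ n) :
    stI n 0 (fun k => min k t) (gM K n) = minorsIdeal K n (t + 1) := by
  apply le_antisymm
  · rw [stI_le]
    have key : Van (fun a b => Ideal.Quotient.mk (minorsIdeal K n (t + 1)) (gM K n a b)) n n t := by
      intro a b ha hb
      rw [← minr_map, Ideal.Quotient.eq_zero_iff_mem]
      have := gM_minr (K := K) (fun i => (⟨a i, ha i⟩ : Fin n)) (fun i => (⟨b i, hb i⟩ : Fin n))
      simp only at this
      rw [this]
      exact symMinor_mem _ _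
    intro k
    constructor
    · intro hk
      by_cases hkt : k ≤ t
      · simp only [min_eq_left hkt]; exact Van.triv _ _ _
      · simp only [min_eq_right (not_le.1 hkt).le]
        exact key.mono hk le_rfl
    · intro hk
      obtain rfl : k = 0 := by omega
      simp only [Nat.zero_min]; exact Van.triv _ _ _
  · unfold minorsIdeal
    rw [Ideal.span_le]
    rintro f ⟨a, b, -, -, rfl⟩
    have h := (stI_le.1 (le_refl (stI n 0 (fun k => min k t) (gM K n))) n).1 le_rfl
    simp only [min_eq_right ht] at h
    have h1 := h (fun i => (a i : ℕ)) (fun i => (b i : ℕ)) (fun i => (a i).2) (fun i => (b i).2)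
    rw [← minr_map, Ideal.Quotient.eq_zero_iff_mem, gM_minr] at h1
    exact h1

end final
end SymDet

/-- **Theorem 2.1 (part).** For every `2 ≤ t ≤ n`, the determinantal ring `S/I_t` of the
generic symmetric matrix is a normal domain: it is an integral domain which is integrally
closed in its field of fractions. -/
theorem stmt15 {K : Type*} [Field K] (n t : ℕ) (ht2 : 2 ≤ t) (htn : t ≤ n) :
    IsDomain (MvPolynomial (Sym2 (Fin n)) K ⧸ minorsIdeal K n t) ∧
    IsIntegrallyClosed (MvPolynomial (Sym2 (Fin n)) K ⧸ minorsIdeal K n t) := by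
  obtain ⟨t, rfl⟩ : ∃ t', t = t' + 1 := ⟨t - 1, by omega⟩
  have h := SymDet.claim (K := K) n 0 (by omega) (fun k => min k t) (Nat.zero_min _)
    (fun l => by show min l t ≤ min (l + 1) t; omega)
    (fun l => by show min (l + 1) t ≤ min l t + 1; omega) _ _ (SymDet.gM_gen n)
  rw [SymDet.stI_minors (by omega)] at h
  exact h
end
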